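/- arXiv:math/0503747 — 2 statements merged into one kernel-verified Lean document; each statement's English description precedes it below -/
import Mathlib

section
/- For projections p, q in a von Neumann algebra M, the Kadison–Pedersen equivalence p ≈ q holds if and only if p and q are Murray–von Neumann equivalent. -/
open ContinuousLinearMap Filter Topology

universe u

noncomputable section

variable {H : Type u} [NormedAddCommGroup H] [InnerProductSpace ℂ H] [CompleteSpace H]

/-- `p` is an (orthogonal) projection belonging to the von Neumann algebra `M`. -/
def IsProjIn (M : VonNeumannAlgebra H) (p : H →L[ℂ] H) : Prop :=
  p ∈ M ∧ IsSelfAdjoint p ∧ p * p = p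

/-- Murray–von Neumann equivalence of `p` and `q` relative to `M`:
there is a partial isometry `v ∈ M` with `v* v = p` and `v v* = q`. -/
def MvNEquiv (M : VonNeumannAlgebra H) (p q : H →L[ℂ] H) : Prop :=
  ∃ v ∈ M, adjoint v * v = p ∧ v * adjoint v = q

/-- The order on projections: `p ≤ q` iff `p q = p = q p`. -/
def ProjLE (p q : H →L[ℂ] H) : Prop := p * q = p ∧ q * p = p

/-- Murray–von Neumann subequivalence `p ≼ q`: `p` is equivalent to a subprojection of `q`. -/
def SubEquiv (M : VonNeumannAlgebra H) (p q : H →L[ℂ] H) : Prop :=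
  ∃ r, IsProjIn M r ∧ MvNEquiv M p r ∧ ProjLE r q

/-- `z` is a central projection of `M`. -/
def IsCentralProj (M : VonNeumannAlgebra H) (z : H →L[ℂ] H) : Prop :=
  IsProjIn M z ∧ ∀ x ∈ M, z * x = x * z

/-- A projection `p` is finite: `p ∼ q ≤ p` implies `q = p`. -/
def FiniteProj (M : VonNeumannAlgebra H) (p : H →L[ℂ] H) : Prop :=
  ∀ q, IsProjIn M q → ProjLE q p → MvNEquiv M p q → q = p

/-- A projection `p` is properly infinite: it is a countably infinite sum of pairwise
orthogonal projections, each equivalent to `p`. -/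
def ProperlyInfiniteProj (M : VonNeumannAlgebra H) (p : H →L[ℂ] H) : Prop :=
  p ≠ 0 ∧ ∃ e : ℕ → H →L[ℂ] H, (∀ n, IsProjIn M (e n)) ∧
    (Pairwise fun m n => e m * e n = 0) ∧ (∀ n, MvNEquiv M (e n) p) ∧
    ∀ ξ : H, HasSum (fun n => e n ξ) (p ξ)

/-- `z` is the central support of `h`: the smallest central projection with `z h = h`. -/
def IsCentralSupport (M : VonNeumannAlgebra H) (h z : H →L[ℂ] H) : Prop :=
  IsCentralProj M z ∧ z * h = h ∧ ∀ w, IsCentralProj M w → w * h = h → z * w = z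

/-- The projection `e` is σ-finite relative to `M`: every family of pairwise orthogonal
nonzero subprojections of `e` in `M` is countable. -/
def SigmaFiniteProj (M : VonNeumannAlgebra H) (e : H →L[ℂ] H) : Prop :=
  ∀ S : Set (H →L[ℂ] H), (∀ q ∈ S, IsProjIn M q ∧ q ≠ 0 ∧ ProjLE q e) →
    (S.Pairwise fun a b => a * b = 0) → S.Countable

/-- Kadison–Pedersen equivalence on the positive cone: `h ≈ k` iff there is a family
`{x_α} ⊆ M` with `h = Σ x_α* x_α` and `k = Σ x_α x_α*` (sums in the strong topology). -/
def KPEquiv (M : VonNeumannAlgebra H) (h k : H →L[ℂ] H) : Prop :=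
  ∃ (ι : Type u) (x : ι → H →L[ℂ] H), (∀ i, x i ∈ M) ∧
    (∀ ξ : H, HasSum (fun i => (adjoint (x i) * x i) ξ) (h ξ)) ∧
    (∀ ξ : H, HasSum (fun i => (x i * adjoint (x i)) ξ) (k ξ))

/-- Operator order: `a ≤ b` iff `b - a` is positive. -/
def OpLE (a b : H →L[ℂ] H) : Prop := (b - a).IsPositive

/-- `h ∈ M₊` is finite in the Kadison–Pedersen sense: `h ≈ k ≤ h` implies `k = h`. -/
def KPFinite (M : VonNeumannAlgebra H) (h : H →L[ℂ] H) : Prop :=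
  ∀ k, k ∈ M → k.IsPositive → OpLE k h → KPEquiv M h k → k = h

/-- `h ∈ M₊` is properly infinite: `z h` is finite and nonzero for no central projection `z`. -/
def KPProperlyInfinite (M : VonNeumannAlgebra H) (h : H →L[ℂ] H) : Prop :=
  h ≠ 0 ∧ ∀ z, IsCentralProj M z → KPFinite M (z * h) → z * h = 0

/-- The set of projections of `M`. -/
def ProjSet (M : VonNeumannAlgebra H) := {p : H →L[ℂ] H // IsProjIn M p}

/-- The strong operator topology on the projections of `M` (topology of pointwise convergence). -/
instance (M : VonNeumannAlgebra H) : TopologicalSpace (ProjSet M) :=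
  TopologicalSpace.induced (fun p : ProjSet M => (fun ξ => p.1 ξ : H → H)) inferInstance

/-- The quotient `P(M)/∼` of the projections of `M` by Murray–von Neumann equivalence,
carrying the quotient (strong operator) topology. -/
abbrev PQuot (M : VonNeumannAlgebra H) :=
  Quot (fun p q : ProjSet M => MvNEquiv M p.1 q.1)

/-- The quotient map `P(M) → P(M)/∼`. -/
def pquotMk (M : VonNeumannAlgebra H) : ProjSet M → PQuot M := Quot.mk _

/-- The strong operator topology on `B(H)`. -/
def SOT : TopologicalSpace (H →L[ℂ] H) :=
  TopologicalSpace.induced (fun a : H →L[ℂ] H => (fun ξ => a ξ : H → H)) inferInstance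

/-- The order induced on `P(M)/∼` by Murray–von Neumann subequivalence. -/
def QLE (M : VonNeumannAlgebra H) (a b : PQuot M) : Prop :=
  ∃ p q : ProjSet M, a = pquotMk M p ∧ b = pquotMk M q ∧ SubEquiv M p.1 q.1

/-!
One direction is immediate: a partial isometry `v` is itself a one-element family. Conversely, let
`p = ∑ xᵢ* xᵢ` and `q = ∑ xᵢ xᵢ*`. A maximal orthogonal family of partial isometries `v` with
`v v* xᵢ = xᵢ v* v` for all `i` can be summed and cut off, so it suffices to find one such `v ≠ 0`.

* Reduction to countable families. Close a vector under all `xᵢ` and `xᵢ*`; this gives a countable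
  set of vectors, because each vector is killed by all but countably many `xᵢ` and `xᵢ*`. The
  projection `e` onto the span of its orbit under `M'` commutes with every `xᵢ`, and `xᵢ e ≠ 0` for
  only countably many `i`. For countable families it is enough that `z p ∼ z q` for some central
  projection `z` with `z p ≠ 0`, and by comparison of projections one may assume `q ≤ p`.
* If no nonzero projection has infinitely many orthogonal copies below `q`, then `p = q`. Put
  `Φ f = ∑ xᵢ f xᵢ*`. As `Φ p = q`, the operators `Φⁿ (p - q)` sum to at most `p`, while each
  is again equivalent to `p - q`. If `p ≠ q`, finiteness of `q` provides finitely many vectors `η`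
  whose quadratic forms behave like a trace up to a factor `2`, so `∑ ⟪η, Φⁿ (p - q) η⟫` is bounded
  below by one and the same positive number for every `n ≥ 1`, contradicting summability over `n`.
* Otherwise some `e ≠ 0` has infinitely many copies below `q`. A maximal such family `S` exhausts
  `q` over a central projection `z` up to one copy of `e`, and `z p` embeds into a sum of
  `|S| · ℵ₀ = |S|` copies of `e`. Hence `z p ≼ z q`, and Schröder–Bernstein gives `z p ∼ z q`.
-/

/-! ### Projections, partial isometries and closed spans -/

section ProjectionsAndPartialIsometries

section StarMul

variable {R : Type*} [Mul R] [StarMul R] {e x : R}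

theorem star_mul_eq_star_of_mul_eq (he : IsSelfAdjoint e) (h : e * x = x) :
    star x * e = star x := by
  simpa [he.star_eq] using congrArg star h

theorem mul_star_eq_star_of_mul_eq (he : IsSelfAdjoint e) (h : x * e = x) :
    e * star x = star x := by
  simpa [he.star_eq] using congrArg star h

end StarMul

/-- Partial isometries of a ring with involution, in the algebraic form `u u* u = u`. -/
def IsPartialIsometry {R : Type*} [Mul R] [Star R] (u : R) : Prop := u * star u * u = u

namespace IsPartialIsometry

section Semigroup

variable {R : Type*} [Semigroup R] [StarMul R] {u e : R}

protected theorem star (hu : IsPartialIsometry u) : IsPartialIsometry (star u) := by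
  simpa [IsPartialIsometry, mul_assoc] using congrArg star hu

theorem mul_star_mul_self (hu : IsPartialIsometry u) : u * (star u * u) = u := by
  rw [← mul_assoc, hu]

theorem isStarProjection_star_mul_self (hu : IsPartialIsometry u) :
    IsStarProjection (star u * u) where
  isIdempotentElem := by rw [IsIdempotentElem, mul_assoc, hu.mul_star_mul_self]
  isSelfAdjoint := IsSelfAdjoint.star_mul_self u

theorem isStarProjection_mul_star_self (hu : IsPartialIsometry u) :
    IsStarProjection (u * star u) := by
  simpa using hu.star.isStarProjection_star_mul_self

theorem of_isStarProjection (he : IsStarProjection e) : IsPartialIsometry e := by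
  rw [IsPartialIsometry, he.isSelfAdjoint.star_eq, he.isIdempotentElem.eq, he.isIdempotentElem.eq]

end Semigroup

theorem of_star_mul_self {R : Type*} [NonUnitalNormedRing R] [StarRing R] [CStarRing R] {u : R}
    (h : IsStarProjection (star u * u)) : IsPartialIsometry u := by
  have hidem : star u * u * (star u * u) = star u * u := h.isIdempotentElem
  have hzero : star (u - u * (star u * u)) * (u - u * (star u * u)) = 0 := by
    simp only [star_sub, star_mul, star_star, sub_mul, mul_sub]
    grind
  rw [IsPartialIsometry, mul_assoc]
  exact (sub_eq_zero.1 (CStarRing.star_mul_self_eq_zero_iff _ |>.1 hzero)).symm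

end IsPartialIsometry

section Operators

variable {a b : H →L[ℂ] H}

theorem inner_star_mul_self_apply (a : H →L[ℂ] H) (ξ : H) :
    inner ℂ ξ ((star a * a) ξ) = ((‖a ξ‖ ^ 2 : ℝ) : ℂ) := by
  rw [star_eq_adjoint, mul_apply_eq_comp, adjoint_inner_right, inner_self_eq_norm_sq_to_K]
  norm_cast

theorem star_mul_self_eq_star_mul_self_iff_norm :
    star a * a = star b * b ↔ ∀ ξ, ‖a ξ‖ = ‖b ξ‖ := by
  have hquad : star a * a = star b * b ↔
      ∀ ξ, inner ℂ ((star a * a) ξ) ξ = inner ℂ ((star b * b) ξ) ξ :=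
    ⟨fun h ξ => by rw [h], fun h => coe_injective ((ext_inner_map _ _).1 h)⟩
  rw [hquad]
  refine forall_congr' fun ξ => ?_
  rw [← inner_conj_symm _ ξ, ← inner_conj_symm _ ξ, inner_star_mul_self_apply,
    inner_star_mul_self_apply, Complex.conj_ofReal, Complex.conj_ofReal, Complex.ofReal_inj,
    sq_eq_sq₀ (norm_nonneg _) (norm_nonneg _)]

theorem IsPartialIsometry.norm_apply (ha : IsPartialIsometry a) (ξ : H) :
    ‖a ξ‖ = ‖(star a * a) ξ‖ := by
  refine star_mul_self_eq_star_mul_self_iff_norm.1 ?_ ξ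
  have h := ha.isStarProjection_star_mul_self
  rw [h.isSelfAdjoint.star_eq, h.isIdempotentElem.eq]

end Operators

variable {M : VonNeumannAlgebra H} {a e f p q : H →L[ℂ] H}

theorem mem_iff_forall_commutant : a ∈ M ↔ ∀ y ∈ M.commutant, y * a = a * y := by
  rw [← VonNeumannAlgebra.mem_commutant_iff, VonNeumannAlgebra.commutant_commutant]

namespace IsProjIn

theorem isStarProjection (he : IsProjIn M e) : IsStarProjection e := ⟨he.2.2, he.2.1⟩

theorem of_isStarProjection (heM : e ∈ M) (he : IsStarProjection e) : IsProjIn M e :=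
  ⟨heM, he.isSelfAdjoint, he.isIdempotentElem⟩

theorem mem (he : IsProjIn M e) : e ∈ M := he.1

theorem star_eq (he : IsProjIn M e) : star e = e := he.2.1

theorem mul_self (he : IsProjIn M e) : e * e = e := he.2.2

protected theorem one : IsProjIn M 1 := of_isStarProjection (one_mem _) (.one _)

protected theorem sub (he : IsProjIn M e) (hf : IsProjIn M f) (h : e * f = f) :
    IsProjIn M (e - f) :=
  of_isStarProjection (sub_mem he.mem hf.mem)
    (hf.isStarProjection.sub_of_mul_eq_right he.isStarProjection h)

protected theorem mul (he : IsProjIn M e) (hf : IsProjIn M f) (h : Commute e f) :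
    IsProjIn M (e * f) :=
  of_isStarProjection (mul_mem he.mem hf.mem) (he.isStarProjection.mul hf.isStarProjection h)

theorem norm_apply_le (he : IsProjIn M e) (ξ : H) : ‖e ξ‖ ≤ ‖ξ‖ := by
  simpa using le_of_opNorm_le e (IsStarProjection.norm_le e he.isStarProjection) ξ

end IsProjIn

/-- The partial isometries of `M` that map a subprojection of `p` onto a subprojection of `q`. -/
structure IsPartialIsometryIn (M : VonNeumannAlgebra H) (p q u : H →L[ℂ] H) : Prop where
  mem : u ∈ M
  isPartialIsometry : IsPartialIsometry u
  mul_right : u * p = u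
  mul_left : q * u = u

namespace IsPartialIsometryIn

variable {u : H →L[ℂ] H}

protected theorem star (hp : IsSelfAdjoint p) (hq : IsSelfAdjoint q)
    (hu : IsPartialIsometryIn M p q u) : IsPartialIsometryIn M q p (star u) where
  mem := star_mem hu.mem
  isPartialIsometry := hu.isPartialIsometry.star
  mul_right := star_mul_eq_star_of_mul_eq hq hu.mul_left
  mul_left := mul_star_eq_star_of_mul_eq hp hu.mul_right

theorem isProjIn_star_mul_self (hu : IsPartialIsometryIn M p q u) : IsProjIn M (star u * u) :=
  .of_isStarProjection (mul_mem (star_mem hu.mem) hu.mem)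
    hu.isPartialIsometry.isStarProjection_star_mul_self

theorem isProjIn_mul_star_self (hu : IsPartialIsometryIn M p q u) : IsProjIn M (u * star u) :=
  .of_isStarProjection (mul_mem hu.mem (star_mem hu.mem))
    hu.isPartialIsometry.isStarProjection_mul_star_self

theorem isProjIn_sub_star_mul_self (hp : IsProjIn M p) (hu : IsPartialIsometryIn M p q u) :
    IsProjIn M (p - star u * u) :=
  hp.sub hu.isProjIn_star_mul_self (by
    rw [← mul_assoc, mul_star_eq_star_of_mul_eq hp.2.1 hu.mul_right])

theorem isProjIn_sub_mul_star_self (hq : IsProjIn M q) (hu : IsPartialIsometryIn M p q u) :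
    IsProjIn M (q - u * star u) :=
  hq.sub hu.isProjIn_mul_star_self (by rw [← mul_assoc, hu.mul_left])

theorem mono {p' q' : H →L[ℂ] H} (hu : IsPartialIsometryIn M p q u) (hp : p * p' = p)
    (hq : q' * q = q) : IsPartialIsometryIn M p' q' u where
  mem := hu.mem
  isPartialIsometry := hu.isPartialIsometry
  mul_right := by rw [← hu.mul_right, mul_assoc, hp]
  mul_left := by rw [← hu.mul_left, ← mul_assoc, hq]

end IsPartialIsometryIn

section ClosedSpan

variable {A : Set H} {c y : H →L[ℂ] H}

/-- The orthogonal projection onto the closed linear span of `A`. -/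
def closedSpanProj (A : Set H) : H →L[ℂ] H :=
  (Submodule.span ℂ A).topologicalClosure.starProjection

theorem isStarProjection_closedSpanProj (A : Set H) : IsStarProjection (closedSpanProj A) :=
  isStarProjection_starProjection

theorem closedSpanProj_apply_of_mem {ξ : H} (hξ : ξ ∈ A) : closedSpanProj A ξ = ξ :=
  Submodule.starProjection_eq_self_iff.2
    (Submodule.le_topologicalClosure _ (Submodule.subset_span hξ))

theorem mul_closedSpanProj_eq_zero (h : ∀ ξ ∈ A, c ξ = 0) : c * closedSpanProj A = 0 := by
  have hle : (Submodule.span ℂ A).topologicalClosure ≤ LinearMap.ker (c : H →ₗ[ℂ] H) :=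
    Submodule.topologicalClosure_minimal _ (Submodule.span_le.2 h) c.isClosed_ker
  ext ξ
  exact hle (Submodule.starProjection_apply_mem _ ξ)

theorem mul_closedSpanProj_comm (h : ∀ ξ ∈ A, y ξ ∈ A) (h' : ∀ ξ ∈ A, star y ξ ∈ A) :
    y * closedSpanProj A = closedSpanProj A * y := by
  have hinv : ∀ w : H →L[ℂ] H, (∀ ξ ∈ A, w ξ ∈ A) →
      closedSpanProj A * w * closedSpanProj A = w * closedSpanProj A := fun w hw => by
    have := mul_closedSpanProj_eq_zero (A := A) (c := (1 - closedSpanProj A) * w) fun ξ hξ => by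
      simp [closedSpanProj_apply_of_mem (hw ξ hξ)]
    rw [sub_mul, sub_mul, sub_eq_zero, one_mul] at this
    exact this.symm
  have hstar := congrArg star (hinv _ h')
  simp only [star_mul, star_star,
    (isStarProjection_closedSpanProj A).isSelfAdjoint.star_eq] at hstar
  rw [← hinv y h, mul_assoc, hstar]

theorem isProjIn_closedSpanProj (h : ∀ y ∈ M.commutant, ∀ ξ ∈ A, y ξ ∈ A) :
    IsProjIn M (closedSpanProj A) :=
  .of_isStarProjection
    (mem_iff_forall_commutant.2 fun y hy => mul_closedSpanProj_comm (h y hy) (h _ (star_mem hy)))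
    (isStarProjection_closedSpanProj A)

end ClosedSpan

/-- The range projection of `a`: the orthogonal projection onto the closure of the range of `a`. -/
def rangeProj (a : H →L[ℂ] H) : H →L[ℂ] H := closedSpanProj (Set.range a)

theorem isProjIn_rangeProj (ha : a ∈ M) : IsProjIn M (rangeProj a) := by
  refine isProjIn_closedSpanProj ?_
  rintro y hy _ ⟨ξ, rfl⟩
  exact ⟨y ξ, (DFunLike.congr_fun (mem_iff_forall_commutant.1 ha y hy) ξ).symm⟩

theorem rangeProj_mul (a : H →L[ℂ] H) : rangeProj a * a = a := by
  ext ξ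
  exact closedSpanProj_apply_of_mem ⟨ξ, rfl⟩

theorem mul_rangeProj_eq_zero {c : H →L[ℂ] H} (h : c * a = 0) : c * rangeProj a = 0 := by
  refine mul_closedSpanProj_eq_zero ?_
  rintro _ ⟨ξ, rfl⟩
  exact DFunLike.congr_fun h ξ

theorem exists_centralProj_separating {r s : H →L[ℂ] H} (hr : r ∈ M)
    (h : ∀ x ∈ M, s * x * r = 0) : ∃ z, IsCentralProj M z ∧ z * r = r ∧ s * z = 0 := by
  set A : Set H := {v | ∃ x ∈ M, ∃ η, v = x (r η)}
  have hinv : ∀ x ∈ M, ∀ ξ ∈ A, x ξ ∈ A := by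
    rintro x hx _ ⟨y, hy, η, rfl⟩
    exact ⟨x * y, mul_mem hx hy, η, rfl⟩
  refine ⟨closedSpanProj A, ⟨isProjIn_closedSpanProj ?_, fun x hx => ?_⟩, ?_, ?_⟩
  · rintro y hy _ ⟨x, hx, η, rfl⟩
    exact ⟨x, hx, y η,
      DFunLike.congr_fun (mem_iff_forall_commutant.1 (mul_mem hx hr) y hy) η⟩
  · exact (mul_closedSpanProj_comm (hinv x hx) (hinv _ (star_mem hx))).symm
  · ext η
    exact closedSpanProj_apply_of_mem ⟨1, one_mem _, η, rfl⟩
  · refine mul_closedSpanProj_eq_zero ?_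
    rintro _ ⟨x, hx, η, rfl⟩
    exact DFunLike.congr_fun (h x hx) η

theorem IsProjIn.exists_subproj_separating_vector (he : IsProjIn M e) (hne : e ≠ 0) :
    ∃ f, IsProjIn M f ∧ e * f = f ∧
      ∃ ξ, ξ ≠ 0 ∧ f ξ = ξ ∧ ∀ c ∈ M, c ξ = 0 → c * f = 0 := by
  obtain ⟨η, hη⟩ : ∃ η, e η ≠ 0 := by
    by_contra! h
    exact hne (ContinuousLinearMap.ext h)
  have hcomm : ∀ c ∈ M, ∀ y ∈ M.commutant, ∀ ζ, c (y ζ) = y (c ζ) := fun c hc y hy ζ =>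
    (DFunLike.congr_fun (mem_iff_forall_commutant.1 hc y hy) ζ).symm
  have heη : e (e η) = e η := DFunLike.congr_fun he.mul_self η
  set A : Set H := {v | ∃ y ∈ M.commutant, v = y (e η)}
  refine ⟨closedSpanProj A, isProjIn_closedSpanProj ?_, ?_, e η, hη, ?_, fun c hc h => ?_⟩
  · rintro y hy _ ⟨y', hy', rfl⟩
    exact ⟨y * y', mul_mem hy hy', rfl⟩
  · have := mul_closedSpanProj_eq_zero (A := A) (c := 1 - e) ?_
    · rwa [sub_mul, one_mul, sub_eq_zero, eq_comm] at this
    · rintro _ ⟨y, hy, rfl⟩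
      simp [hcomm e he.mem y hy, heη]
  · exact closedSpanProj_apply_of_mem ⟨1, one_mem _, rfl⟩
  · refine mul_closedSpanProj_eq_zero ?_
    rintro _ ⟨y, hy, rfl⟩
    rw [hcomm c hc y hy, h, map_zero]

end ProjectionsAndPartialIsometries

/-! ### Strongly convergent sums and square sums -/

section StrongSums

variable {M : VonNeumannAlgebra H} {a b c d p q w : H →L[ℂ] H} {ι : Type*}
  {u v x : ι → H →L[ℂ] H}

/-- `a` is the sum of the family `u` in the strong operator topology. -/
def HasStrongSum (u : ι → H →L[ℂ] H) (a : H →L[ℂ] H) : Prop :=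
  ∀ ξ, HasSum (fun i => u i ξ) (a ξ)

/-- `∑ xᵢ* xᵢ = a* a`, expressed through quadratic forms with values in `[0, ∞]`, where the sums may
be manipulated without any summability condition. -/
def HasSqSum (x : ι → H →L[ℂ] H) (a : H →L[ℂ] H) : Prop :=
  ∀ ξ, ∑' i, ‖x i ξ‖ₑ ^ 2 = ‖a ξ‖ₑ ^ 2

namespace HasStrongSum

section

omit [CompleteSpace H]

theorem intertwine (ha : HasStrongSum u a) (hb : HasStrongSum v b)
    (h : ∀ i, c * u i = v i * d) : c * a = b * d := by
  ext ξ
  have hc := (ha ξ).mapL c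
  have hfun : (fun i => c (u i ξ)) = fun i => v i (d ξ) :=
    funext fun i => DFunLike.congr_fun (h i) ξ
  rw [hfun] at hc
  exact hc.unique (hb (d ξ))

theorem unique (ha : HasStrongSum u a) (hb : HasStrongSum u b) : a = b := by
  simpa using ha.intertwine hb (c := 1) (d := 1) fun i => by simp

theorem mul_left_eq_self (ha : HasStrongSum u a) (h : ∀ i, c * u i = u i) : c * a = a := by
  simpa using ha.intertwine ha (d := 1) fun i => by simp [h i]

theorem mul_right_eq_self (ha : HasStrongSum u a) (h : ∀ i, u i * c = u i) : a * c = a := by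
  simpa using (ha.intertwine ha (c := 1) fun i => by simp [h i]).symm

theorem mul_left (c : H →L[ℂ] H) (ha : HasStrongSum u a) :
    HasStrongSum (fun i => c * u i) (c * a) := fun ξ => (ha ξ).mapL c

theorem mul_right (c : H →L[ℂ] H) (ha : HasStrongSum u a) :
    HasStrongSum (fun i => u i * c) (a * c) := fun ξ => ha (c ξ)

theorem single (j : ι) (h : ∀ i, i ≠ j → u i = 0) : HasStrongSum u (u j) := fun ξ =>
  hasSum_single j fun i hi => by rw [h i hi, zero_apply]

end

theorem mem (ha : HasStrongSum u a) (hM : ∀ i, u i ∈ M) : a ∈ M :=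
  mem_iff_forall_commutant.2 fun y hy =>
    ha.intertwine ha fun i => mem_iff_forall_commutant.1 (hM i) y hy

theorem eq_star (ha : HasStrongSum u a) (hb : HasStrongSum (fun i => star (u i)) b) :
    b = star a := by
  ext η
  refine ext_inner_left ℂ fun ζ => ?_
  have h₁ := (hb η).mapL (innerSL ℂ ζ)
  have h₂ := ((ha ζ).mapL (innerSL ℂ η)).star
  simp only [innerSL_apply_apply, star_eq_adjoint, adjoint_inner_right, RCLike.star_def,
    inner_conj_symm] at h₁ h₂ ⊢
  exact h₁.unique h₂

theorem hasSum_norm_sq (h : HasStrongSum (fun i => star (x i) * x i) (star a * a)) (ξ : H) :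
    HasSum (fun i => ‖x i ξ‖ ^ 2) (‖a ξ‖ ^ 2) := by
  have := Complex.hasSum_re ((h ξ).mapL (innerSL ℂ ξ))
  simpa only [innerSL_apply_apply, inner_star_mul_self_apply, Complex.ofReal_re] using this

theorem hasSqSum (h : HasStrongSum (fun i => star (x i) * x i) (star a * a)) : HasSqSum x a := by
  intro ξ
  have hreal := h.hasSum_norm_sq ξ
  have := ENNReal.ofReal_tsum_of_nonneg (fun i => sq_nonneg ‖x i ξ‖) hreal.summable
  simpa only [hreal.tsum_eq, ENNReal.ofReal_pow (norm_nonneg _), ofReal_norm] using this.symm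

end HasStrongSum

theorem star_mul_self_eq_of_forall_enorm_sq (h : ∀ ξ, ‖a ξ‖ₑ ^ 2 = ‖b ξ‖ₑ ^ 2) :
    star a * a = star b * b :=
  star_mul_self_eq_star_mul_self_iff_norm.2 fun ξ =>
    enorm_eq_iff_norm_eq.1 (ENNReal.pow_right_strictMono two_ne_zero |>.injective (h ξ))

theorem HasSqSum.star_mul_self_eq (ha : HasSqSum x a) (hb : HasSqSum x b) :
    star a * a = star b * b :=
  star_mul_self_eq_of_forall_enorm_sq fun ξ => (ha ξ).symm.trans (hb ξ)

theorem exists_hasStrongSum_of_tsum_le (hM : ∀ i, v i ∈ M)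
    (ho : Pairwise fun i j => star (v i) * v j = 0)
    (ha : ∀ η, ∑' i, ‖v i η‖ₑ ^ 2 ≤ ‖a η‖ₑ ^ 2) :
    ∃ w ∈ M, HasStrongSum v w ∧ HasSqSum v w := by
  have hV : OrthogonalFamily ℂ (fun i => LinearMap.range (v i : H →ₗ[ℂ] H))
      (fun i => (LinearMap.range (v i : H →ₗ[ℂ] H)).subtypeₗᵢ) := by
    rintro i j hij ⟨_, ξ, rfl⟩ ⟨_, ζ, rfl⟩
    have := congrArg (inner ℂ ξ) (DFunLike.congr_fun (ho hij) ζ)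
    simpa [star_eq_adjoint, adjoint_inner_right] using this
  have hle : ∀ η (s : Finset ι), ∑ i ∈ s, ‖v i η‖ ^ 2 ≤ ‖a η‖ ^ 2 := fun η s => by
    have := (ENNReal.sum_le_tsum s).trans (ha η)
    simpa only [← ofReal_norm, ← ENNReal.ofReal_pow (norm_nonneg _),
      ← ENNReal.ofReal_sum_of_nonneg (fun i _ => sq_nonneg ‖v i η‖),
      ENNReal.ofReal_le_ofReal_iff (sq_nonneg _)] using this
  have hsum : ∀ η, Summable fun i => v i η := fun η =>
    (hV.summable_iff_norm_sq_summable (fun i => ⟨v i η, η, rfl⟩)).2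
      (summable_of_sum_le (fun i => sq_nonneg _) (hle η))
  have hsq : ∀ η, HasSum (fun i => ‖v i η‖ ^ 2) (‖∑' i, v i η‖ ^ 2) := fun η => by
    have hlim := ((hsum η).hasSum.norm).pow 2
    have hfin : ∀ s : Finset ι, ‖∑ i ∈ s, v i η‖ ^ 2 = ∑ i ∈ s, ‖v i η‖ ^ 2 :=
      hV.norm_sum fun i => ⟨v i η, η, rfl⟩
    simp only [hfin] at hlim
    exact hlim
  let L : H →ₗ[ℂ] H :=
    { toFun := fun η => ∑' i, v i η
      map_add' := fun ξ ζ => by simpa only [map_add] using (hsum ξ).tsum_add (hsum ζ)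
      map_smul' := fun t ξ => by
        simpa only [map_smul, RingHom.id_apply] using (hsum ξ).tsum_const_smul t }
  have hL : ∀ η, ‖L η‖ ≤ ‖a‖ * ‖η‖ := fun η =>
    ((sq_le_sq₀ (norm_nonneg _) (norm_nonneg _)).1 (hasSum_le_of_sum_le (hsq η) (hle η))).trans
      (a.le_opNorm η)
  have hw : HasStrongSum v (L.mkContinuous ‖a‖ hL) := fun η => (hsum η).hasSum
  refine ⟨_, hw.mem hM, hw, fun η => ?_⟩
  have := ENNReal.ofReal_tsum_of_nonneg (fun i => sq_nonneg ‖v i η‖) (hsq η).summable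
  simp only [(hsq η).tsum_eq, ENNReal.ofReal_pow (norm_nonneg _), ofReal_norm] at this
  exact this.symm

theorem tsum_enorm_sq_le_of_pairwise_orthogonal (hv : ∀ i, IsPartialIsometry (v i))
    (ho : Pairwise fun i j => v i * star (v j) = 0) (η : H) :
    ∑' i, ‖v i η‖ₑ ^ 2 ≤ ‖(1 : H →L[ℂ] H) η‖ₑ ^ 2 := by
  refine ENNReal.summable.tsum_le_of_sum_le fun s => ?_
  classical
  set w : H →L[ℂ] H := ∑ i ∈ s, star (v i) * v i with hw
  have hproj : IsStarProjection w := by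
    refine ⟨?_, isSelfAdjoint_sum _ fun i _ => IsSelfAdjoint.star_mul_self _⟩
    rw [IsIdempotentElem, hw, Finset.sum_mul_sum]
    refine Finset.sum_congr rfl fun i hi => ?_
    rw [Finset.sum_eq_single i (fun j _ hj => by
      rw [mul_assoc, ← mul_assoc (v i), ho hj.symm, zero_mul, mul_zero]) (fun h => (h hi).elim)]
    exact (hv i).isStarProjection_star_mul_self.isIdempotentElem
  have hsq : ((∑ i ∈ s, ‖v i η‖ ^ 2 : ℝ) : ℂ) = ((‖w η‖ ^ 2 : ℝ) : ℂ) := by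
    rw [← inner_star_mul_self_apply w, hproj.isSelfAdjoint.star_eq, hproj.isIdempotentElem.eq, hw,
      Complex.ofReal_sum]
    simp only [← inner_star_mul_self_apply, sum_apply, inner_sum]
  have hle : ∑ i ∈ s, ‖v i η‖ ^ 2 ≤ ‖η‖ ^ 2 := by
    rw [Complex.ofReal_inj.1 hsq]
    gcongr
    simpa using le_of_opNorm_le w (IsStarProjection.norm_le w hproj) η
  simpa only [← ofReal_norm, ← ENNReal.ofReal_pow (norm_nonneg _), one_apply_eq_self,
      ← ENNReal.ofReal_sum_of_nonneg (fun i _ => sq_nonneg ‖v i η‖),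
      ENNReal.ofReal_le_ofReal_iff (sq_nonneg _)] using hle

theorem exists_isPartialIsometryIn_hasStrongSum
    (hv : ∀ i, IsPartialIsometryIn M p q (v i))
    (hl : Pairwise fun i j => star (v i) * v j = 0)
    (hr : Pairwise fun i j => v i * star (v j) = 0) :
    ∃ w, IsPartialIsometryIn M p q w ∧ HasStrongSum v w ∧
      HasStrongSum (fun i => star (v i) * v i) (star w * w) ∧
      HasStrongSum (fun i => v i * star (v i)) (w * star w) := by
  obtain ⟨w, hwM, hw, -⟩ := exists_hasStrongSum_of_tsum_le (fun i => (hv i).mem) hl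
    (tsum_enorm_sq_le_of_pairwise_orthogonal (fun i => (hv i).isPartialIsometry) hr)
  obtain ⟨w', -, hw', -⟩ := exists_hasStrongSum_of_tsum_le (v := fun i => star (v i))
    (fun i => star_mem (hv i).mem) (by simpa using hr)
    (tsum_enorm_sq_le_of_pairwise_orthogonal (fun i => (hv i).isPartialIsometry.star)
      (by simpa using hl))
  obtain rfl := hw.eq_star hw'
  have hright : ∀ i, w * star (v i) = v i * star (v i) := fun i =>
    (hw.mul_right (star (v i))).unique (.single i fun j hj => hr hj)
  have hleft : ∀ i, star w * v i = star (v i) * v i := fun i =>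
    (hw'.mul_right (v i)).unique (.single (u := fun j => star (v j) * v i) i fun j hj => hl hj)
  have hwv : HasStrongSum (fun i => star (v i) * v i) (star w * w) := by
    simpa only [hleft] using hw.mul_left (star w)
  have hvw : HasStrongSum (fun i => v i * star (v i)) (w * star w) := by
    simpa only [hright] using hw'.mul_left w
  refine ⟨w, ⟨hwM, ?_, hw.mul_right_eq_self fun i => (hv i).mul_right,
    hw.mul_left_eq_self fun i => (hv i).mul_left⟩, hw, hwv, hvw⟩
  exact hw.mul_left_eq_self fun i => by
    rw [mul_assoc, hleft, ← mul_assoc, hright]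
    exact (hv i).isPartialIsometry

end StrongSums

/-! ### Exhaustion and polar decomposition -/

section Exhaustion

theorem exists_maximal_pairwise_orthogonal {R : Type*} [NonUnitalNormedRing R] [StarRing R]
    [CStarRing R] (P : R → Prop) :
    ∃ S : Set R, (∀ u ∈ S, P u) ∧ S.Pairwise (fun u v => star u * v = 0 ∧ u * star v = 0) ∧
      ∀ u, P u → (∀ v ∈ S, star v * u = 0 ∧ v * star u = 0) → u = 0 := by
  obtain ⟨S, ⟨hP, ho⟩, hmax⟩ := zorn_subset {S : Set R | (∀ u ∈ S, P u) ∧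
      S.Pairwise fun u v => star u * v = 0 ∧ u * star v = 0} fun c hc hchain =>
    ⟨⋃₀ c, ⟨fun u ⟨s, hs, hu⟩ => (hc hs).1 u hu,
      (Set.pairwise_sUnion hchain.directedOn).2 fun s hs => (hc hs).2⟩,
      fun _ => Set.subset_sUnion_of_mem⟩
  refine ⟨S, hP, ho, fun u hu horth => ?_⟩
  have hins : insert u S ∈ {S : Set R | (∀ u ∈ S, P u) ∧
      S.Pairwise fun u v => star u * v = 0 ∧ u * star v = 0} := by
    refine ⟨Set.forall_mem_insert.2 ⟨hu, hP⟩, ho.insert fun v hv _ => ⟨⟨?_, ?_⟩, horth v hv⟩⟩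
    · simpa using congrArg star (horth v hv).1
    · simpa using congrArg star (horth v hv).2
  have huS : u ∈ S := hmax hins (Set.subset_insert _ _) (Set.mem_insert _ _)
  exact CStarRing.star_mul_self_eq_zero_iff u |>.1 (horth u huS).1

variable {M : VonNeumannAlgebra H} {p q : H →L[ℂ] H}

theorem exists_maximal_isPartialIsometryIn (hp : IsProjIn M p) (hq : IsProjIn M q)
    (P : (H →L[ℂ] H) → Prop) :
    ∃ (S : Set (H →L[ℂ] H)) (w : H →L[ℂ] H), (∀ u ∈ S, IsPartialIsometryIn M p q u ∧ P u) ∧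
      IsPartialIsometryIn M p q w ∧ HasStrongSum (fun u : S => u.1) w ∧
      HasStrongSum (fun u : S => star u.1 * u.1) (star w * w) ∧
      HasStrongSum (fun u : S => u.1 * star u.1) (w * star w) ∧
      ∀ u, IsPartialIsometryIn M (p - star w * w) (q - w * star w) u → P u → u = 0 := by
  obtain ⟨S, hS, ho, hmax⟩ := exists_maximal_pairwise_orthogonal
    fun u => IsPartialIsometryIn M p q u ∧ P u
  have hoS : ∀ u v : S, u ≠ v → star u.1 * v.1 = 0 ∧ u.1 * star v.1 = 0 := fun u v huv =>
    ho u.2 v.2 fun h => huv (Subtype.ext h)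
  obtain ⟨w, hw, hsum, hinit, hfin⟩ := exists_isPartialIsometryIn_hasStrongSum
    (v := fun u : S => u.1) (fun u => (hS u.1 u.2).1) (fun u v huv => (hoS u v huv).1)
    (fun u v huv => (hoS u v huv).2)
  refine ⟨S, w, hS, hw, hsum, hinit, hfin, fun u hu hPu => ?_⟩
  have hupq : IsPartialIsometryIn M p q u := hu.mono
    (by rw [sub_mul, hp.mul_self, mul_assoc, hw.mul_right])
    (by rw [mul_sub, hq.mul_self, ← mul_assoc, hw.mul_left])
  refine hmax u ⟨hupq, hPu⟩ fun v hv => ?_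
  have hvPI := (hS v hv).1
  have hleft : w * star w * v = v := by
    simpa only [show v * star v * v = v from hvPI.isPartialIsometry] using (hfin.mul_right v).unique
      (.single (u := fun u : S => u.1 * star u.1 * v) ⟨v, hv⟩ fun u huv => by
        rw [mul_assoc, (hoS u ⟨v, hv⟩ huv).1, mul_zero])
  have hright : v * (star w * w) = v := by
    simpa only [hvPI.isPartialIsometry.mul_star_mul_self] using (hinit.mul_left v).unique
      (.single (u := fun u : S => v * (star u.1 * u.1)) ⟨v, hv⟩ fun u huv => by
        rw [← mul_assoc, (hoS ⟨v, hv⟩ u huv.symm).2, zero_mul])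
  constructor
  · rw [← hu.mul_left, ← mul_assoc, mul_sub, star_mul_eq_star_of_mul_eq hq.2.1 hvPI.mul_left,
      star_mul_eq_star_of_mul_eq hw.isProjIn_mul_star_self.2.1 hleft, sub_self, zero_mul]
  · rw [← mul_star_eq_star_of_mul_eq (hw.isProjIn_sub_star_mul_self hp).2.1 hu.mul_right,
      ← mul_assoc, mul_sub, hvPI.mul_right, hright, sub_self, zero_mul]

end Exhaustion

section Polar

variable {M : VonNeumannAlgebra H} {x h r s : H →L[ℂ] H}

theorem exists_mul_eq_of_norm_le (hx : x ∈ M) (hh : h ∈ M) (hle : ∀ ξ, ‖x ξ‖ ≤ ‖h ξ‖) :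
    ∃ t ∈ M, t * h = x ∧ t * rangeProj h = t := by
  let K := (Submodule.span ℂ (Set.range h)).topologicalClosure
  have hmem : ∀ ξ, h ξ ∈ K := fun ξ =>
    Submodule.le_topologicalClosure _ (Submodule.subset_span ⟨ξ, rfl⟩)
  let j : H →ₗ[ℂ] K := (h : H →ₗ[ℂ] H).codRestrict K hmem
  have hj : DenseRange j := by
    refine Subtype.dense_iff.2 (Set.Subset.trans ?_ (closure_mono (s := Set.range h) ?_))
    · have hspan : Submodule.span ℂ (Set.range h) = LinearMap.range (h : H →ₗ[ℂ] H) :=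
        Submodule.span_eq (LinearMap.range (h : H →ₗ[ℂ] H))
      exact (congrArg (fun U : Submodule ℂ H => (U.topologicalClosure : Set H)) hspan).subset
    · rintro _ ⟨ξ, rfl⟩
      exact ⟨j ξ, ⟨ξ, rfl⟩, rfl⟩
  let t := ((x : H →ₗ[ℂ] H).extendOfNorm j) ∘L K.orthogonalProjectionOnto
  have hth : t * h = x := by
    ext ξ
    have : K.orthogonalProjectionOnto (h ξ) = j ξ :=
      Submodule.orthogonalProjectionOnto_mem_subspace_eq_self (j ξ)
    rw [mul_apply_eq_comp, comp_apply, this]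
    exact LinearMap.extendOfNorm_eq hj ⟨1, fun ξ => by rw [one_mul]; exact hle ξ⟩ ξ
  have ht : t * rangeProj h = t := by
    ext ξ
    exact congrArg ((x : H →ₗ[ℂ] H).extendOfNorm j)
      (Submodule.orthogonalProjectionOnto_mem_subspace_eq_self (K.orthogonalProjectionOnto ξ))
  refine ⟨t, mem_iff_forall_commutant.2 fun y hy => ?_, hth, ht⟩
  have hy₁ := mem_iff_forall_commutant.1 hx y hy
  have hy₂ := mem_iff_forall_commutant.1 hh y hy
  have hyE := mem_iff_forall_commutant.1 (isProjIn_rangeProj hh).mem y hy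
  have := mul_rangeProj_eq_zero (a := h) (c := y * t - t * y) (by
    rw [sub_mul, mul_assoc, mul_assoc, hth, hy₂, ← mul_assoc, hth, hy₁, sub_self])
  rw [sub_mul, sub_eq_zero, mul_assoc, ht, mul_assoc, hyE, ← mul_assoc, ht] at this
  exact this

theorem abs_mem (hx : x ∈ M) : CFC.abs x ∈ M :=
  mem_iff_forall_commutant.2 fun y hy =>
    Commute.cfcAbs_right (mem_iff_forall_commutant.1 hx y hy).symm
      (mem_iff_forall_commutant.1 hx _ (star_mem hy)).symm

theorem exists_polarDecomposition (hx : x ∈ M) (hr : IsSelfAdjoint r) (hxr : x * r = x)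
    (hsx : s * x = x) :
    ∃ t, IsPartialIsometryIn M r s t ∧ t * CFC.abs x = x ∧
      star t * t = rangeProj (CFC.abs x) := by
  set h := CFC.abs x
  have hsa : star h = h := (CFC.abs_nonneg x).isSelfAdjoint
  have hsq : star x * x = star h * h := by rw [hsa, CFC.abs_mul_abs]
  have hhM : h ∈ M := abs_mem hx
  set E := rangeProj h
  have hEproj : IsProjIn M E := isProjIn_rangeProj hhM
  obtain ⟨t, htM, hth, htE⟩ := exists_mul_eq_of_norm_le hx hhM fun ξ =>
    (star_mul_self_eq_star_mul_self_iff_norm.1 hsq ξ).le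
  have htt : star t * t = E := by
    have h₁ : (h * star t * t - h) * E = 0 := mul_rangeProj_eq_zero <| by
      rw [sub_mul, mul_assoc, hth, ← hsa, ← star_mul, hth, hsq, hsa, sub_self]
    have h₂ : (E * star t * t - E) * E = 0 := mul_rangeProj_eq_zero <| by
      simpa [sub_mul, mul_sub, mul_assoc, hsa, hEproj.star_eq] using congrArg star h₁
    rwa [sub_mul, sub_eq_zero, mul_assoc, htE, hEproj.mul_self,
      mul_star_eq_star_of_mul_eq hEproj.2.1 htE] at h₂
  have hEr : E * r = E := by
    have hrh : h * (1 - r) = 0 := by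
      ext ξ
      refine norm_eq_zero.1 (.trans
        (star_mul_self_eq_star_mul_self_iff_norm.1 hsq ((1 - r) ξ)).symm ?_)
      rw [← mul_apply_eq_comp, mul_sub, mul_one, hxr, sub_self, zero_apply, norm_zero]
    have := mul_rangeProj_eq_zero (a := h) (c := 1 - r) (by
      simpa [hr.star_eq, hsa] using congrArg star hrh)
    rw [sub_mul, one_mul, sub_eq_zero, eq_comm] at this
    have hstar := star_mul_eq_star_of_mul_eq hr this
    rwa [hEproj.star_eq] at hstar
  refine ⟨t, ⟨htM, .of_star_mul_self (htt ▸ hEproj.isStarProjection), ?_, ?_⟩, hth, htt⟩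
  · rw [← htE, mul_assoc, hEr]
  · have := mul_rangeProj_eq_zero (a := h) (c := s * t - t) (by
      rw [sub_mul, mul_assoc, hth, hsx, sub_self])
    rwa [sub_mul, mul_assoc, htE, sub_eq_zero] at this

end Polar

/-! ### A spectral layer of a positive operator -/

section Spectral

variable {M : VonNeumannAlgebra H} {a b r s x : H →L[ℂ] H}

theorem mul_eq_zero_of_nonneg_of_le {A : Type*} [CStarAlgebra A] [PartialOrder A]
    [StarOrderedRing A] {a b k : A} (hb : 0 ≤ b) (hba : b ≤ a) (h : a * k = 0) : b * k = 0 := by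
  obtain ⟨c, rfl⟩ := CStarAlgebra.nonneg_iff_eq_star_mul_self.1 hb
  have hle : star (c * k) * (c * k) ≤ 0 := by
    have := star_left_conjugate_le_conjugate hba k
    rwa [mul_assoc _ a, h, mul_zero, ← mul_assoc, mul_assoc, ← star_mul] at this
  have hck := CStarRing.star_mul_self_eq_zero_iff _ |>.1 (hle.antisymm (star_mul_self_nonneg _))
  rw [mul_assoc, hck, mul_zero]

theorem norm_sub_algebraMap_le {A : Type*} [CStarAlgebra A] [PartialOrder A]
    [StarOrderedRing A] {a : A} {c : ℝ} (ha : 0 ≤ a) (hc : ‖a‖ ≤ 2 * c) :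
    ‖a - algebraMap ℝ A c‖ ≤ c := by
  have hc0 : 0 ≤ c := by linarith [norm_nonneg a]
  obtain _ | _ := subsingleton_or_nontrivial A
  · simpa [Subsingleton.elim (a - algebraMap ℝ A c) 0] using hc0
  have hcfc : cfc (fun t : ℝ => t - c) a = a - algebraMap ℝ A c := by
    rw [cfc_sub (fun t : ℝ => t) (fun _ => c) a, cfc_id' ℝ a, cfc_const c a]
  rw [← hcfc]
  refine norm_cfc_le hc0 fun t ht => abs_le.2 ⟨?_, ?_⟩
  · linarith [spectrum_nonneg_of_nonneg ha ht]
  · linarith [Real.le_norm_self t, spectrum.norm_le_norm_of_mem ht]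

theorem posPart_mem (ha : a ∈ M) : a⁺ ∈ M :=
  mem_iff_forall_commutant.2 fun y hy =>
    ((Commute.cfcₙ_real (mem_iff_forall_commutant.1 ha y hy).symm _).symm)

theorem le_smul_of_norm_le_of_mul_eq {e : H →L[ℂ] H} {c : ℝ} (he : IsStarProjection e) (hb : 0 ≤ b)
    (hc : ‖b‖ ≤ c) (hbe : b * e = b) : b ≤ c • e := by
  have hle := (CStarAlgebra.norm_le_iff_le_algebraMap b ((norm_nonneg b).trans hc) hb).1 hc
  have heb : e * b = b := by
    have := mul_star_eq_star_of_mul_eq he.isSelfAdjoint hbe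
    rwa [hb.isSelfAdjoint.star_eq] at this
  have := star_left_conjugate_le_conjugate hle e
  rwa [he.isSelfAdjoint.star_eq, heb, hbe, Algebra.algebraMap_eq_smul_one, mul_smul_comm, mul_one,
    smul_mul_assoc, he.isIdempotentElem.eq] at this

theorem real_smul_mem (ha : a ∈ M) (c : ℝ) : c • a ∈ M := by
  rw [← Complex.coe_smul]
  exact M.toStarSubalgebra.smul_mem ha _

theorem exists_proj_halving {c : ℝ} (haM : a ∈ M) (ha : 0 ≤ a) (hc : ‖a‖ ≤ 2 * c) :
    ∃ e, IsProjIn M e ∧ c • e ≤ a ∧ ‖a - c • e‖ ≤ c := by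
  set b := a - algebraMap ℝ _ c with hb
  have hbM : b ∈ M := sub_mem haM (by
    rw [Algebra.algebraMap_eq_smul_one]
    exact real_smul_mem (one_mem M) c)
  have hb_norm : ‖b‖ ≤ c := norm_sub_algebraMap_le ha hc
  have hb_sa : IsSelfAdjoint b := ha.isSelfAdjoint.sub (.algebraMap _ (.all c))
  -- `e` is the spectral projection of `a` for the interval `(c, ∞)`.
  set e := rangeProj b⁺
  have hep : IsProjIn M e := isProjIn_rangeProj (posPart_mem hbM)
  have hpos : b⁺ ≤ c • e := le_smul_of_norm_le_of_mul_eq hep.isStarProjection (CFC.posPart_nonneg b)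
    ((CStarAlgebra.norm_posPart_le b).trans hb_norm) (by
      have := star_mul_eq_star_of_mul_eq hep.2.1 (rangeProj_mul b⁺)
      rwa [(CFC.posPart_nonneg b).isSelfAdjoint.star_eq] at this)
  have hneg : b⁻ ≤ c • (1 - e) := le_smul_of_norm_le_of_mul_eq hep.isStarProjection.one_sub
    (CFC.negPart_nonneg b) ((CStarAlgebra.norm_negPart_le b).trans hb_norm) (by
      rw [mul_sub, mul_one, mul_rangeProj_eq_zero (CFC.negPart_mul_posPart b), sub_zero])
  have hdecomp : a - c • e = b⁺ - b⁻ + c • (1 - e) := by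
    rw [CFC.posPart_sub_negPart b, hb, Algebra.algebraMap_eq_smul_one, smul_sub]; abel
  have hnn : 0 ≤ a - c • e := by
    rw [hdecomp, sub_add_eq_add_sub, add_sub_assoc]
    exact add_nonneg (CFC.posPart_nonneg b) (sub_nonneg.2 hneg)
  refine ⟨e, hep, sub_nonneg.1 hnn, ?_⟩
  rw [CStarAlgebra.norm_le_iff_le_algebraMap _ ((norm_nonneg b).trans hb_norm) hnn, hdecomp,
    Algebra.algebraMap_eq_smul_one]
  calc b⁺ - b⁻ + c • (1 - e) ≤ c • e - 0 + c • (1 - e) := by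
        gcongr
        exact CFC.negPart_nonneg b
    _ = c • 1 := by rw [smul_sub]; abel

theorem neg_le_apply_of_forall_isProjIn (ω : (H →L[ℂ] H) →L[ℝ] ℝ)
    (hω : ∀ e, IsProjIn M e → e * r = e → 0 ≤ ω e) (n : ℕ) {c : ℝ} (hc : 0 < c) :
    ∀ a ∈ M, 0 ≤ a → a * r = a → ‖a‖ ≤ 2 ^ n * c → -(‖ω‖ * c) ≤ ω a := by
  induction n with
  | zero =>
    intro a _ _ _ hac
    have hle : ‖ω a‖ ≤ ‖ω‖ * c := (ω.le_opNorm a).trans (by gcongr; simpa using hac)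
    exact (abs_le.1 hle).1
  | succ n ih =>
    intro a haM ha har hac
    have hc' : 0 < 2 ^ n * c := by positivity
    obtain ⟨e, he, hea, hnorm⟩ := exists_proj_halving haM ha (c := 2 ^ n * c)
      (hac.trans_eq (by ring))
    have her : e * r = e := by
      have := mul_eq_zero_of_nonneg_of_le (k := 1 - r)
        (smul_nonneg hc'.le he.isStarProjection.nonneg) hea (by
          rw [mul_sub, har, mul_one, sub_self])
      rw [smul_mul_assoc, smul_eq_zero_iff_right hc'.ne', mul_sub, mul_one, sub_eq_zero] at this
      exact this.symm
    have hrest := ih (a - (2 ^ n * c) • e) (sub_mem haM (real_smul_mem he.mem _))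
      (sub_nonneg.2 hea) (by rw [sub_mul, har, smul_mul_assoc, her]) hnorm
    rw [map_sub, map_smul, smul_eq_mul] at hrest
    linarith [mul_nonneg hc'.le (hω e he her)]

theorem apply_nonneg_of_forall_isProjIn (ω : (H →L[ℂ] H) →L[ℝ] ℝ)
    (hω : ∀ e, IsProjIn M e → e * r = e → 0 ≤ ω e) (haM : a ∈ M) (ha : 0 ≤ a)
    (har : a * r = a) : 0 ≤ ω a := by
  have hlim : Tendsto (fun n : ℕ => -(‖ω‖ * ((‖a‖ + 1) / 2 ^ n))) atTop (𝓝 0) := by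
    have := (tendsto_pow_atTop_nhds_zero_of_lt_one (r := (1 / 2 : ℝ)) (by norm_num)
      (by norm_num)).const_mul (-(‖ω‖ * (‖a‖ + 1)))
    rw [mul_zero] at this
    refine this.congr fun n => ?_
    rw [one_div, inv_pow]
    ring
  refine le_of_tendsto' hlim fun n =>
    neg_le_apply_of_forall_isProjIn ω hω n (by positivity) a haM ha har ?_
  rw [mul_div_cancel₀ _ (by positivity)]
  linarith

/-- The functional `a ↦ re ⟪ξ, a ξ⟫` on the bounded operators, as a real linear map. -/
def vectorFunctional (ξ : H) : (H →L[ℂ] H) →L[ℝ] ℝ :=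
  Complex.reCLM ∘L ((innerSL ℂ ξ ∘L ContinuousLinearMap.apply ℂ H ξ).restrictScalars ℝ)

theorem vectorFunctional_star_mul_self (a : H →L[ℂ] H) (ξ : H) :
    vectorFunctional ξ (star a * a) = ‖a ξ‖ ^ 2 := by
  change (inner ℂ ξ ((star a * a) ξ)).re = _
  rw [inner_star_mul_self_apply, Complex.ofReal_re]

theorem mul_norm_sq_le_of_forall_isPartialIsometryIn {ξ : H} {δ : ℝ} (hr : IsSelfAdjoint r)
    (hδ : ∀ t, IsPartialIsometryIn M r s t → δ * ‖t ξ‖ ^ 2 ≤ ‖star t ξ‖ ^ 2)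
    (hx : x ∈ M) (hxr : x * r = x) (hsx : s * x = x) : δ * ‖x ξ‖ ^ 2 ≤ ‖star x ξ‖ ^ 2 := by
  obtain ⟨t, ht, htx, hE⟩ := exists_polarDecomposition hx hr hxr hsx
  set h := CFC.abs x
  have hsa : star h = h := (CFC.abs_nonneg x).isSelfAdjoint
  have hhx : star h * h = star x * x := by rw [hsa]; exact CFC.abs_mul_abs x
  have hhE : h * (star t * t) = h := by
    have := star_mul_eq_star_of_mul_eq (isProjIn_rangeProj (abs_mem hx)).2.1 (rangeProj_mul h)
    rwa [← hE, hsa] at this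
  have hω := apply_nonneg_of_forall_isProjIn (M := M) (r := star t * t) (a := star h * h)
    (vectorFunctional (star t ξ) - δ • vectorFunctional ξ) (fun e he hee => ?_)
    (mul_mem (star_mem (abs_mem hx)) (abs_mem hx)) (star_mul_self_nonneg h)
    (by rw [mul_assoc, hhE])
  · have hstar : star x = h * star t := by rw [← htx, star_mul, hsa]
    simp only [sub_apply, smul_apply, smul_eq_mul] at hω
    rw [vectorFunctional_star_mul_self, hhx, vectorFunctional_star_mul_self, ← mul_apply_eq_comp,
      ← hstar] at hω
    linarith
  · have heE : star t * t * e = e := by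
      have := mul_star_eq_star_of_mul_eq ht.isProjIn_star_mul_self.2.1 hee
      rwa [he.star_eq] at this
    have hte : star (t * e) * (t * e) = e := by
      rw [star_mul, he.star_eq, mul_assoc, ← mul_assoc (star t), heE, he.mul_self]
    have hle := hδ (t * e) ⟨mul_mem ht.mem he.mem,
      .of_star_mul_self (by rw [hte]; exact he.isStarProjection), ?_, ?_⟩
    · rw [← vectorFunctional_star_mul_self, hte, star_mul, mul_apply_eq_comp,
        ← vectorFunctional_star_mul_self (star e), star_star, he.star_eq, he.mul_self] at hle
      simpa [sub_nonneg] using hle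
    · rw [mul_assoc, ← hee, mul_assoc, mul_assoc, ht.mul_right]
    · rw [← mul_assoc, ht.mul_left]

end Spectral

/-! ### Comparison of projections and orthogonal copies -/

section ComparisonAndCopies

variable {M : VonNeumannAlgebra H} {d e p q v z : H →L[ℂ] H} {J : Type*} {u : J → H →L[ℂ] H}

section Comparison

namespace IsCentralProj

theorem mul_isProjIn (hz : IsCentralProj M z) (he : IsProjIn M e) : IsProjIn M (z * e) :=
  hz.1.mul he (hz.2 e he.mem)

theorem one_sub (hz : IsCentralProj M z) : IsCentralProj M (1 - z) :=
  ⟨IsProjIn.one.sub hz.1 (one_mul z), fun x hx => by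
    rw [sub_mul, mul_sub, hz.2 x hx, one_mul, mul_one]⟩

theorem star_mul_mul_self (hz : IsCentralProj M z) {x : H →L[ℂ] H} (hx : x ∈ M) :
    star (z * x) * (z * x) = z * (star x * x) := by
  have := hz.2 _ (star_mem hx)
  rw [star_mul, hz.1.star_eq, ← this, mul_assoc, ← mul_assoc _ z, ← this, mul_assoc,
    ← mul_assoc z z, hz.1.mul_self]

theorem mul_star_mul_self (hz : IsCentralProj M z) {x : H →L[ℂ] H} (hx : x ∈ M) :
    z * x * star (z * x) = z * (x * star x) := by
  rw [star_mul, hz.1.star_eq, ← hz.2 _ (star_mem hx), mul_assoc, ← mul_assoc x, ← hz.2 x hx,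
    mul_assoc, ← mul_assoc z z, hz.1.mul_self]

end IsCentralProj

theorem IsPartialIsometryIn.mul_central {u : H →L[ℂ] H} (hu : IsPartialIsometryIn M p q u)
    (hz : IsCentralProj M z) (hq : q ∈ M) : IsPartialIsometryIn M p q (z * u) where
  mem := mul_mem hz.1.mem hu.mem
  isPartialIsometry := .of_star_mul_self (by
    rw [hz.star_mul_mul_self hu.mem]
    exact (hz.mul_isProjIn hu.isProjIn_star_mul_self).isStarProjection)
  mul_right := by rw [mul_assoc, hu.mul_right]
  mul_left := by rw [← mul_assoc, ← hz.2 q hq, mul_assoc, hu.mul_left]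

theorem exists_isPartialIsometryIn_ne_zero {x : H →L[ℂ] H} (hp : IsProjIn M p) (hq : IsProjIn M q)
    (hx : x ∈ M) (h : q * x * p ≠ 0) : ∃ t, IsPartialIsometryIn M p q t ∧ t ≠ 0 := by
  obtain ⟨t, ht, htx, -⟩ := exists_polarDecomposition (r := p) (s := q)
    (mul_mem (mul_mem hq.mem hx) hp.mem) hp.2.1 (by rw [mul_assoc, hp.mul_self])
    (by rw [← mul_assoc, ← mul_assoc, hq.mul_self])
  refine ⟨t, ht, ?_⟩
  rintro rfl
  exact h (by rw [← htx, zero_mul])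

theorem exists_centralProj_comparison (hp : IsProjIn M p) (hq : IsProjIn M q) :
    ∃ z, IsCentralProj M z ∧ (∃ w, IsPartialIsometryIn M p q w ∧ star w * w = z * p) ∧
      ∃ w, IsPartialIsometryIn M q p w ∧ star w * w = (1 - z) * q := by
  obtain ⟨-, w, -, hw, -, -, -, hmax⟩ :=
    exists_maximal_isPartialIsometryIn hp hq fun _ => True
  have hp' := hw.isProjIn_sub_star_mul_self hp
  have hq' := hw.isProjIn_sub_mul_star_self hq
  have hzero : ∀ x ∈ M, (p - star w * w) * x * (q - w * star w) = 0 := by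
    intro x hx
    by_contra h
    obtain ⟨t, ht, ht0⟩ := exists_isPartialIsometryIn_ne_zero hq' hp' hx h
    exact ht0 (star_eq_zero.1 (hmax _ (ht.star hq'.2.1 hp'.2.1) trivial))
  obtain ⟨z, hz, hzq, hzp⟩ := exists_centralProj_separating hq'.mem hzero
  refine ⟨z, hz, ⟨z * w, hw.mul_central hz hq.mem, ?_⟩, (1 - z) * star w,
    (hw.star hp.2.1 hq.2.1).mul_central hz.one_sub hp.mem, ?_⟩
  · rw [hz.star_mul_mul_self hw.mem, eq_comm, ← sub_eq_zero, ← mul_sub, hz.2 _ hp'.mem, hzp]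
  · rw [hz.one_sub.star_mul_mul_self (star_mem hw.mem), star_star, eq_comm, ← sub_eq_zero,
      ← mul_sub, sub_mul, one_mul, hzq, sub_self]

end Comparison

section Copies

/-- The partial isometries `u j` in `M` embed the projection `e` below `q` as pairwise orthogonal
copies of itself. -/
structure IsCopies (M : VonNeumannAlgebra H) (q e : H →L[ℂ] H) (u : J → H →L[ℂ] H) : Prop where
  mem : ∀ j, u j ∈ M
  star_mul_self : ∀ j, star (u j) * u j = e
  mul_left : ∀ j, q * u j = u j
  orthogonal : Pairwise fun i j => star (u i) * u j = 0

namespace IsCopies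

theorem isPartialIsometry (hu : IsCopies M q e u) (he : IsProjIn M e) (j : J) :
    IsPartialIsometry (u j) :=
  .of_star_mul_self (by rw [hu.star_mul_self]; exact he.isStarProjection)

theorem mul_right (hu : IsCopies M q e u) (he : IsProjIn M e) (j : J) : u j * e = u j := by
  rw [← hu.star_mul_self j, (hu.isPartialIsometry he j).mul_star_mul_self]

theorem exists_hasStrongSum (hu : IsCopies M q e u) (he : IsProjIn M e) (hq : IsProjIn M q) :
    ∃ g, IsProjIn M g ∧ q * g = g ∧ HasStrongSum (fun j => u j * star (u j)) g ∧
      ∀ j, g * u j = u j := by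
  have hproj : ∀ j, IsStarProjection (u j * star (u j)) := fun j =>
    (hu.isPartialIsometry he j).isStarProjection_mul_star_self
  have horth : Pairwise fun i j => u i * star (u i) * (u j * star (u j)) = 0 := fun i j hij => by
    change u i * star (u i) * (u j * star (u j)) = 0
    rw [mul_assoc, ← mul_assoc (star (u i)), hu.orthogonal hij, zero_mul, mul_zero]
  obtain ⟨g, hg, hsum, hinit, -⟩ := exists_isPartialIsometryIn_hasStrongSum
    (M := M) (p := q) (q := q) (v := fun j => u j * star (u j))
    (fun j => ⟨mul_mem (hu.mem j) (star_mem (hu.mem j)),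
      .of_isStarProjection (hproj j), by
        rw [mul_assoc, star_mul_eq_star_of_mul_eq hq.2.1 (hu.mul_left j)], by
        rw [← mul_assoc, hu.mul_left j]⟩)
    (fun i j hij => by simpa using horth hij) (fun i j hij => by simpa using horth hij)
  have hgg : star g * g = g := by
    refine hinit.unique ?_
    simpa only [(hproj _).isSelfAdjoint.star_eq, (hproj _).isIdempotentElem.eq] using hsum
  refine ⟨g, hgg ▸ hg.isProjIn_star_mul_self, hg.mul_left, hsum, fun j => ?_⟩
  have := (hsum.mul_right (u j)).unique (.single j fun i hij => by
    rw [mul_assoc, hu.orthogonal hij, mul_zero])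
  rw [this]
  exact hu.isPartialIsometry he j

end IsCopies

/-- `q` is finite in the sense that no nonzero projection has infinitely many pairwise orthogonal
copies below `q`. Unlike `FiniteProj`, this notion passes to subprojections immediately. -/
def HasNoInfiniteCopies (M : VonNeumannAlgebra H) (q : H →L[ℂ] H) : Prop :=
  ∀ (e : H →L[ℂ] H) (u : ℕ → H →L[ℂ] H), IsProjIn M e → IsCopies M q e u → e = 0

theorem HasNoInfiniteCopies.mono (h : HasNoInfiniteCopies M q) (hpq : q * p = p) :
    HasNoInfiniteCopies M p := fun e u he hu =>
  h e u he ⟨hu.mem, hu.star_mul_self, fun n => by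
    rw [← hu.mul_left n, ← mul_assoc, hpq], hu.orthogonal⟩

theorem isCopies_pow_mul (hvM : v ∈ M) (hv : star v * v = p) (hpv : p * v = v)
    (hd : IsProjIn M d) (hpd : p * d = d) (hdv : d * v = 0) :
    IsCopies M p d fun n : ℕ => v ^ n * d := by
  have hleft : ∀ n, p * (v ^ n * d) = v ^ n * d := fun n => by
    cases n with
    | zero => simpa using hpd
    | succ n => rw [pow_succ', mul_assoc, ← mul_assoc p, hpv]
  have hcancel : ∀ m k, star (v ^ m) * (v ^ (m + k) * d) = v ^ k * d := fun m k => by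
    induction m with
    | zero => simp
    | succ m ih =>
      rw [Nat.succ_add, pow_succ' v m, pow_succ' v (m + k), star_mul, mul_assoc, mul_assoc,
        ← mul_assoc (star v), hv, hleft, ih]
  have horth : ∀ m n, m < n → star (v ^ m * d) * (v ^ n * d) = 0 := fun m n h => by
    obtain ⟨k, rfl⟩ := Nat.exists_eq_add_of_lt h
    rw [star_mul, mul_assoc, add_assoc, hcancel, hd.star_eq, pow_succ', mul_assoc, ← mul_assoc, hdv,
      zero_mul]
  refine ⟨fun n => mul_mem (pow_mem hvM n) hd.mem, fun n => ?_, hleft, fun m n hmn => ?_⟩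
  · have := hcancel n 0
    rw [add_zero, pow_zero, one_mul] at this
    rw [star_mul, mul_assoc, this, hd.star_eq, hd.mul_self]
  · obtain h | h := hmn.lt_or_gt
    · exact horth m n h
    · simpa using congrArg star (horth n m h)

theorem HasNoInfiniteCopies.mul_star_self_eq (h : HasNoInfiniteCopies M p) (hp : IsProjIn M p)
    (hvM : v ∈ M) (hv : star v * v = p) (hpv : p * v = v) : v * star v = p := by
  have hvPI : IsPartialIsometry v := .of_star_mul_self (by rw [hv]; exact hp.isStarProjection)
  have hvIn : IsPartialIsometryIn M p p v :=
    ⟨hvM, hvPI, by rw [← hv]; exact hvPI.mul_star_mul_self, hpv⟩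
  have hd := hvIn.isProjIn_sub_mul_star_self hp
  refine (sub_eq_zero.1 (h _ _ hd (isCopies_pow_mul hvM hv hpv hd ?_ ?_))).symm
  · rw [mul_sub, hp.mul_self, ← mul_assoc, hpv]
  · rw [sub_mul, hpv, show v * star v * v = v from hvPI, sub_self]

end Copies

end ComparisonAndCopies

/-! ### The Schröder–Bernstein theorem -/

section SchroderBernsteinAndSquareSums

variable {M : VonNeumannAlgebra H} {a b c d p q v : H →L[ℂ] H}

section SchroderBernstein

theorem exists_isProjIn_conj_eq_sub (hvM : v ∈ M) (hp : IsProjIn M p) (hv : star v * v = p)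
    (hpv : p * v = v) (hd : IsProjIn M d) (hpd : p * d = d) (hdv : d * v = 0) :
    ∃ f, IsProjIn M f ∧ p * f = f ∧ v * f * star v = f - d := by
  obtain ⟨f, hf, hpf, hsum, -⟩ :=
    (isCopies_pow_mul hvM hv hpv hd hpd hdv).exists_hasStrongSum hd hp
  -- `f = ∑ vⁿ d (vⁿ)*`, and conjugation by `v` shifts the series by one term.
  refine ⟨f, hf, hpf, ?_⟩
  have hconj := (hsum.mul_right (star v)).mul_left v
  have hshift : HasStrongSum (fun n : ℕ => v ^ (n + 1) * d * star (v ^ (n + 1) * d)) (f - d) :=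
    fun η => by
      have hdd : d (d η) = d η := DFunLike.congr_fun hd.mul_self η
      simpa [hd.star_eq, hdd] using (hasSum_nat_add_iff' 1).2 (hsum η)
  refine (mul_assoc v f _).trans (hconj.unique ?_)
  simpa only [pow_succ', star_mul, mul_assoc] using hshift

theorem mvnEquiv_of_mul_eq (hp : IsProjIn M p) (hq : IsProjIn M q) (hpq : p * q = q)
    (hvM : v ∈ M) (hv : star v * v = p) (hqv : q * v = v) : MvNEquiv M p q := by
  have hpv : p * v = v := by rw [← hqv, ← mul_assoc, hpq]
  have hdv : (p - q) * v = 0 := by rw [sub_mul, hpv, hqv, sub_self]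
  obtain ⟨f, hf, hpf, hconj⟩ := exists_isProjIn_conj_eq_sub hvM hp hv hpv (hp.sub hq hpq)
    (by rw [mul_sub, hp.mul_self, hpq]) hdv
  have hfp := star_mul_eq_star_of_mul_eq hp.2.1 hpf
  rw [hf.star_eq] at hfp
  have hcomm : v * f = f * v := by
    calc v * f = v * f * star v * v := by rw [mul_assoc _ (star v), hv, mul_assoc, hfp]
      _ = f * v := by rw [hconj, sub_mul, hdv, sub_zero]
  have hcomm' : f * star v = star v * f := by simpa [hf.star_eq] using congrArg star hcomm
  have hg := hp.sub hf hpf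
  have hfg : f * (p - f) = 0 := by rw [mul_sub, hfp, hf.mul_self, sub_self]
  have hgf : (p - f) * f = 0 := by rw [sub_mul, hpf, hf.mul_self, sub_self]
  have hstar : star (v * f + (p - f)) = f * star v + (p - f) := by
    rw [star_add, star_mul, hf.star_eq, hg.star_eq]
  -- Move only the orbit `f` of `p - q` by `v`, and keep its complement fixed.
  refine ⟨v * f + (p - f), add_mem (mul_mem hvM hf.mem) hg.mem, ?_, ?_⟩ <;>
    rw [← star_eq_adjoint, hstar, add_mul, mul_add, mul_add, hg.mul_self]
  · have h₁ : f * star v * (v * f) = f := by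
      rw [mul_assoc, ← mul_assoc (star v), hv, hpf, hf.mul_self]
    have h₂ : f * star v * (p - f) = 0 := by rw [hcomm', mul_assoc, hfg, mul_zero]
    have h₃ : (p - f) * (v * f) = 0 := by rw [hcomm, ← mul_assoc, hgf, zero_mul]
    rw [h₁, h₂, h₃]
    abel
  · have h₁ : v * f * (f * star v) = f - (p - q) := by
      rw [mul_assoc, ← mul_assoc f, hf.mul_self, ← mul_assoc, hconj]
    have h₂ : v * f * (p - f) = 0 := by rw [mul_assoc, hfg, mul_zero]
    have h₃ : (p - f) * (f * star v) = 0 := by rw [← mul_assoc, hgf, zero_mul]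
    rw [h₁, h₂, h₃]
    abel

end SchroderBernstein

section SquareSums

variable {ι κ : Type*} {x : ι → H →L[ℂ] H} {y : κ → H →L[ℂ] H}

theorem enorm_sq_eq_add (h : star c * c = star a * a + star b * b) (ξ : H) :
    ‖c ξ‖ₑ ^ 2 = ‖a ξ‖ₑ ^ 2 + ‖b ξ‖ₑ ^ 2 := by
  have := congrArg (inner ℂ ξ) (DFunLike.congr_fun h ξ)
  rw [add_apply, inner_add_right] at this
  simp only [inner_star_mul_self_apply] at this
  simp only [← ofReal_norm, ← ENNReal.ofReal_pow (norm_nonneg _)]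
  rw [← ENNReal.ofReal_add (sq_nonneg _) (sq_nonneg _)]
  exact congrArg _ (by exact_mod_cast this)

namespace HasSqSum

theorem sumElim (hx : HasSqSum x a) (hy : HasSqSum y b)
    (h : star c * c = star a * a + star b * b) : HasSqSum (Sum.elim x y) c := fun ξ => by
  rw [Summable.tsum_sum ENNReal.summable ENNReal.summable, enorm_sq_eq_add h]
  exact congrArg₂ _ (hx ξ) (hy ξ)

omit [CompleteSpace H] in
theorem mul_right (hx : HasSqSum x a) (c : H →L[ℂ] H) : HasSqSum (fun i => x i * c) (a * c) :=
  fun ξ => hx (c ξ)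

omit [CompleteSpace H] in
theorem prod_mul (hx : HasSqSum x b) (hy : HasSqSum (fun j => b * y j) c) :
    HasSqSum (fun o : ι × κ => x o.1 * y o.2) c := fun ξ => by
  rw [ENNReal.tsum_prod', ENNReal.tsum_comm, ← hy ξ]
  exact tsum_congr fun j => hx (y j ξ)

end HasSqSum

end SquareSums

end SchroderBernsteinAndSquareSums

/-! ### Approximately tracial vector families -/

section FiniteTrace

variable {M : VonNeumannAlgebra H} {d e q w z : H →L[ℂ] H}

section MaximalCopies

theorem IsCopies.exists_maximal {T : Set (H →L[ℂ] H)}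
    (hT : IsCopies M q e (Subtype.val : T → H →L[ℂ] H)) :
    ∃ S, T ⊆ S ∧ IsCopies M q e (Subtype.val : S → H →L[ℂ] H) ∧
      ∀ u ∈ M, star u * u = e → q * u = u → (∀ s ∈ S, star s * u = 0) → u ∈ S := by
  obtain ⟨S, hTS, hS⟩ := zorn_subset_nonempty
    {S : Set (H →L[ℂ] H) | (∀ u ∈ S, u ∈ M ∧ star u * u = e ∧ q * u = u) ∧
      S.Pairwise fun u v => star u * v = 0}
    (fun c hc hchain _ => ⟨⋃₀ c, ⟨fun u ⟨s, hs, hu⟩ => (hc hs).1 u hu,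
      (Set.pairwise_sUnion hchain.directedOn).2 fun s hs => (hc hs).2⟩,
      fun _ => Set.subset_sUnion_of_mem⟩) T
    ⟨fun u hu => ⟨hT.mem ⟨u, hu⟩, hT.star_mul_self ⟨u, hu⟩, hT.mul_left ⟨u, hu⟩⟩,
      fun u hu v hv huv => hT.orthogonal (i := ⟨u, hu⟩) (j := ⟨v, hv⟩) (by simpa using huv)⟩
  refine ⟨S, hTS, ⟨fun u => (hS.prop.1 u u.2).1, fun u => (hS.prop.1 u u.2).2.1,
    fun u => (hS.prop.1 u u.2).2.2, fun u v huv => hS.prop.2 u.2 v.2 fun h => huv (Subtype.ext h)⟩,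
    fun u hu hue hqu horth => ?_⟩
  refine hS.le_of_ge ⟨Set.forall_mem_insert.2 ⟨⟨hu, hue, hqu⟩, hS.prop.1⟩, hS.prop.2.insert
    fun s hs _ => ⟨?_, horth s hs⟩⟩ (Set.subset_insert u S) (Set.mem_insert u S)
  simpa using congrArg star (horth s hs)

theorem IsCopies.exists_centralProj_hasSqSum (he : IsProjIn M e) (hq : IsProjIn M q) (hne : e ≠ 0)
    {T : Set (H →L[ℂ] H)} (hT : IsCopies M q e (Subtype.val : T → H →L[ℂ] H)) :
    ∃ S, T ⊆ S ∧ IsCopies M q e (Subtype.val : S → H →L[ℂ] H) ∧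
      ∃ z, IsCentralProj M z ∧ z * e ≠ 0 ∧ ∃ a : S ⊕ PUnit.{1} → H →L[ℂ] H,
        (∀ o, a o ∈ M) ∧ (∀ o, e * a o = a o) ∧ HasSqSum a (z * q) := by
  obtain ⟨S, hTS, hS, hmax⟩ := hT.exists_maximal
  obtain ⟨g, hg, hqg, hsum, hgS⟩ := hS.exists_hasStrongSum he hq
  have hqg' := hq.sub hg hqg
  obtain ⟨z, hz, ⟨w, hw, hww⟩, w', hw', hww'⟩ := exists_centralProj_comparison hqg' he
  refine ⟨S, hTS, hS, z, hz, fun hze => ?_, Sum.elim (fun s => star s.1 * z) fun _ => w, ?_, ?_, ?_⟩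
  · have hw'e : star w' * w' = e := by rw [hww', sub_mul, hze, one_mul, sub_zero]
    have horth : ∀ s ∈ S, star s * w' = 0 := fun s hs => by
      rw [← hw'.mul_left, ← mul_assoc, mul_sub,
        star_mul_eq_star_of_mul_eq hq.2.1 (hS.mul_left ⟨s, hs⟩),
        star_mul_eq_star_of_mul_eq hg.2.1 (hgS ⟨s, hs⟩), sub_self, zero_mul]
    have hqw' : q * w' = w' := by
      rw [← hw'.mul_left, ← mul_assoc, mul_sub, hq.mul_self, hqg]
    exact hne (by rw [← hw'e, horth w' (hmax w' hw'.mem hw'e hqw' horth)])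
  · rintro (s | -)
    exacts [mul_mem (star_mem (hS.mem s)) hz.1.mem, hw.mem]
  · rintro (s | -)
    · exact (mul_assoc _ _ _).symm.trans
        (congrArg (· * z) (mul_star_eq_star_of_mul_eq he.2.1 (hS.mul_right he s)))
    · exact hw.mul_left
  · have hstar : HasSqSum (fun s : S => star s.1) g :=
      HasStrongSum.hasSqSum (by simpa only [star_star, hg.star_eq, hg.mul_self] using hsum)
    have hwsum : HasSqSum (fun _ : PUnit.{1} => w) w := fun ξ => by simp
    refine (hstar.mul_right z).sumElim hwsum ?_
    rw [← hz.2 g hg.mem, hz.star_mul_mul_self hq.mem, hz.star_mul_mul_self hg.mem, hww, hq.star_eq,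
      hg.star_eq, hq.mul_self, hg.mul_self, ← mul_add, add_sub_cancel]

end MaximalCopies

section ApproximateTrace

theorem HasNoInfiniteCopies.exists_mul_mul_ne_zero (h : HasNoInfiniteCopies M d)
    (hd : IsProjIn M d) (hw : IsPartialIsometryIn M d d w) (hne : d - star w * w ≠ 0) :
    ∃ x ∈ M, (d - w * star w) * x * (d - star w * w) ≠ 0 := by
  by_contra! hzero
  obtain ⟨z, hz, hzr, hsz⟩ :=
    exists_centralProj_separating (hw.isProjIn_sub_star_mul_self hd).mem hzero
  have hdw := (hw.star hd.2.1 hd.2.1).mul_left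
  have hfinal : z * (w * star w) = z * d := by
    rw [sub_mul, sub_eq_zero, ← hz.2 d hd.mem, ← hz.2 _ hw.isProjIn_mul_star_self.mem] at hsz
    exact hsz.symm
  have hzd : HasNoInfiniteCopies M (z * d) := h.mono (by
    rw [hz.2 d hd.mem, ← mul_assoc, hd.mul_self])
  have hinit := hzd.mul_star_self_eq (hz.mul_isProjIn hd) (mul_mem hz.1.mem (star_mem hw.mem))
    (by rw [hz.star_mul_mul_self (star_mem hw.mem), star_star, hfinal])
    (by rw [mul_assoc, ← mul_assoc d, ← hz.2 d hd.mem, mul_assoc, ← mul_assoc z z, hz.1.mul_self,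
      hdw])
  rw [hz.mul_star_mul_self (star_mem hw.mem), star_star] at hinit
  exact hne (by rw [← hzr, mul_sub, hinit, sub_self])

theorem exists_isPartialIsometryIn_mul_norm_sq_le (h : HasNoInfiniteCopies M d)
    (hd : IsProjIn M d) {ξ : H} (hξ : d ξ = ξ) (hne : ξ ≠ 0) {δ : ℝ} (hδ : δ < 1) :
    ∃ u, IsPartialIsometryIn M d d u ∧ u ≠ 0 ∧
      ∀ t, IsPartialIsometryIn M (star u * u) (u * star u) t → δ * ‖t ξ‖ ^ 2 ≤ ‖star t ξ‖ ^ 2 := by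
  by_contra! hcon
  -- Otherwise partial isometries with `‖t* ξ‖² ≤ δ ‖t ξ‖²` exhaust `d`: their sum `w` inherits the
  -- bound, but finiteness of `d` makes it a unitary of the corner, which gives `‖ξ‖² ≤ δ ‖ξ‖²`.
  obtain ⟨S, w, hS, hw, -, hinit, hfinal, hmax⟩ :=
    exists_maximal_isPartialIsometryIn hd hd fun t => ‖star t ξ‖ ^ 2 ≤ δ * ‖t ξ‖ ^ 2
  have hle : ‖star w ξ‖ ^ 2 ≤ δ * ‖w ξ‖ ^ 2 :=
    hasSum_le (fun u : S => (hS u u.2).2)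
      (HasStrongSum.hasSum_norm_sq (by simpa only [star_star] using hfinal) ξ)
      ((hinit.hasSum_norm_sq ξ).mul_left δ)
  have hcompl : d - star w * w ≠ 0 := fun h0 => by
    have hwd : star w * w = d := (sub_eq_zero.1 h0).symm
    have hwd' : w * star w = d := h.mul_star_self_eq hd hw.mem hwd hw.mul_left
    rw [hw.isPartialIsometry.norm_apply, hw.isPartialIsometry.star.norm_apply, star_star, hwd, hwd',
      hξ] at hle
    exact hle.not_gt (mul_lt_of_lt_one_left (pow_pos (norm_pos_iff.2 hne) 2) hδ)
  obtain ⟨x, hx, hxne⟩ := h.exists_mul_mul_ne_zero hd hw hcompl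
  have hd₁ := hw.isProjIn_sub_star_mul_self hd
  have hd₂ := hw.isProjIn_sub_mul_star_self hd
  obtain ⟨u, hu, hu0⟩ := exists_isPartialIsometryIn_ne_zero hd₁ hd₂ hx hxne
  have hdd₁ : (d - star w * w) * d = d - star w * w := by
    rw [sub_mul, hd.mul_self, mul_assoc, hw.mul_right]
  have hdd₂ : d * (d - w * star w) = d - w * star w := by
    rw [mul_sub, hd.mul_self, ← mul_assoc, hw.mul_left]
  obtain ⟨t, ht, hlt⟩ := hcon u (hu.mono hdd₁ hdd₂) hu0
  have ht' := ht.mono (p' := d - star w * w) (q' := d - w * star w)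
    (by rw [mul_assoc, hu.mul_right]) (by rw [← mul_assoc, hu.mul_left])
  have ht0 : t = 0 := hmax t ht' hlt.le
  simp [ht0] at hlt

theorem enorm_sq_le_two_mul_of_forall_isPartialIsometryIn {u b : H →L[ℂ] H} {ξ : H} (huM : u ∈ M)
    (hu : IsPartialIsometry u)
    (h : ∀ t, IsPartialIsometryIn M (star u * u) (u * star u) t →
      1 / 2 * ‖t ξ‖ ^ 2 ≤ ‖star t ξ‖ ^ 2)
    (hb : b ∈ M) (hub : star u * u * b = b) (hbu : b * (star u * u) = b) :
    ‖b ξ‖ₑ ^ 2 ≤ 2 * ‖star b (star u ξ)‖ₑ ^ 2 := by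
  have hlayer := mul_norm_sq_le_of_forall_isPartialIsometryIn
    hu.isStarProjection_star_mul_self.isSelfAdjoint h (mul_mem huM hb)
    (by rw [mul_assoc, hbu]) (by rw [← mul_assoc, show u * star u * u = u from hu])
  have hleft : ‖(u * b) ξ‖ = ‖b ξ‖ := by
    refine star_mul_self_eq_star_mul_self_iff_norm.1 ?_ ξ
    rw [star_mul, mul_assoc, ← mul_assoc (star u), hub]
  have hright : star (u * b) ξ = star b (star u ξ) := by rw [star_mul, mul_apply_eq_comp]
  rw [hleft, hright] at hlayer
  have hreal : ‖b ξ‖ ^ 2 ≤ 2 * ‖star b (star u ξ)‖ ^ 2 := by linarith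
  simpa only [ENNReal.ofReal_mul zero_le_two, ENNReal.ofReal_pow (norm_nonneg _), ofReal_norm,
    ENNReal.ofReal_ofNat] using ENNReal.ofReal_le_ofReal hreal

theorem HasNoInfiniteCopies.finite (h : HasNoInfiniteCopies M q) (he : IsProjIn M e) (hne : e ≠ 0)
    {J : Type*} {u : J → H →L[ℂ] H} (hu : IsCopies M q e u) : Finite J := by
  by_contra hinf
  rw [not_finite_iff_infinite] at hinf
  exact hne (h e (u ∘ Infinite.natEmbedding J) he ⟨fun n => hu.mem _, fun n => hu.star_mul_self _,
    fun n => hu.mul_left _, hu.orthogonal.comp_of_injective (Infinite.natEmbedding J).injective⟩)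

theorem enorm_sq_le_two_mul_sum_of_hasSqSum {u : H →L[ℂ] H} {ζ : H} {K : Type*} [Fintype K]
    {a : K → H →L[ℂ] H} (hz : IsCentralProj M z) (hu : IsPartialIsometryIn M d d u)
    (h : ∀ t, IsPartialIsometryIn M (star u * u) (u * star u) t →
      1 / 2 * ‖t ζ‖ ^ 2 ≤ ‖star t ζ‖ ^ 2)
    (haM : ∀ k, a k ∈ M) (hua : ∀ k, star u * u * a k = a k) (ha : HasSqSum a (z * q))
    {y : H →L[ℂ] H} (hy : y ∈ M) (hqy : q * y = y) :
    ‖y ((z * (star u * u)) ζ)‖ₑ ^ 2 ≤ 2 * ∑ k, ‖star y (star (a k) (star u ζ))‖ₑ ^ 2 := by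
  set r := star u * u with hr
  have hrp : IsProjIn M r := hu.isProjIn_star_mul_self
  have hzrp := hz.mul_isProjIn hrp
  have hzqy : z * q * (y * (z * r)) = y * (z * r) := by
    rw [mul_assoc, ← mul_assoc q, hqy, ← mul_assoc, hz.2 y hy, mul_assoc, ← mul_assoc z z,
      hz.1.mul_self]
  calc ‖y ((z * r) ζ)‖ₑ ^ 2 = ∑ k, ‖a k (y ((z * r) ζ))‖ₑ ^ 2 := by
        rw [← tsum_fintype (L := .unconditional _), ha]
        exact congrArg (‖· ζ‖ₑ ^ 2) hzqy.symm
    _ ≤ ∑ k, 2 * ‖star y (star (a k) (star u ζ))‖ₑ ^ 2 := Finset.sum_le_sum fun k _ => ?_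
    _ = _ := (Finset.mul_sum ..).symm
  have hlayer := enorm_sq_le_two_mul_of_forall_isPartialIsometryIn hu.mem hu.isPartialIsometry
    h (mul_mem (mul_mem (haM k) hy) hzrp.mem) (by rw [← hr, ← mul_assoc r, ← mul_assoc r, hua])
    (by rw [mul_assoc, mul_assoc z, hrp.mul_self])
  refine hlayer.trans (mul_right_mono (pow_le_pow_left' ?_ 2))
  simpa [hzrp.star_eq, enorm_le_iff_norm_le] using
    hzrp.norm_apply_le (star y (star (a k) (star u ζ)))

theorem HasNoInfiniteCopies.exists_enorm_sq_le_sum (h : HasNoInfiniteCopies M q)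
    (hq : IsProjIn M q) (he : IsProjIn M e) (hqe : q * e = e) (hne : e ≠ 0) :
    ∃ ξ, ξ ≠ 0 ∧ e ξ = ξ ∧ ∃ (K : Type u) (_ : Fintype K) (η : K → H), ∀ y ∈ M, q * y = y →
      ‖y ξ‖ₑ ^ 2 ≤ 2 * ∑ k, ‖star y (η k)‖ₑ ^ 2 := by
  obtain ⟨f, hf, hef, ζ, hζ, hfζ, hsep⟩ := he.exists_subproj_separating_vector hne
  obtain ⟨u, hu, hu0, htrace⟩ := exists_isPartialIsometryIn_mul_norm_sq_le
    (h.mono (p := f) (by rw [← hef, ← mul_assoc, hqe])) hf hfζ hζ one_half_lt_one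
  have hrp := hu.isProjIn_star_mul_self
  have hr0 : star u * u ≠ 0 := fun h0 => hu0 (CStarRing.star_mul_self_eq_zero_iff u |>.1 h0)
  have hrf : star u * u * f = star u * u := by rw [mul_assoc, hu.mul_right]
  have hfr : f * (star u * u) = star u * u := by
    simpa [hrp.star_eq, hf.star_eq] using congrArg star hrf
  obtain ⟨S, -, hS, z, hz, hzr, a, haM, hra, ha⟩ := IsCopies.exists_centralProj_hasSqSum
    (T := ∅) hrp hq hr0 ⟨by simp, by simp, by simp, fun i => i.2.elim⟩
  have := h.finite hrp hr0 hS
  have := Fintype.ofFinite (S ⊕ PUnit.{1})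
  refine ⟨(z * (star u * u)) ζ, fun h0 => hzr ?_, ?_, S ⊕ PUnit.{1}, this,
    fun k => star (a k) (star u ζ), fun y hy hqy =>
      enorm_sq_le_two_mul_sum_of_hasSqSum hz hu htrace haM hra ha hy hqy⟩
  · rw [← hrf, ← mul_assoc]
    exact hsep _ (hz.mul_isProjIn hrp).mem h0
  · refine DFunLike.congr_fun (?_ : e * (z * (star u * u)) = z * (star u * u)) ζ
    rw [← mul_assoc, ← hz.2 e he.mem, mul_assoc, ← hfr, ← mul_assoc e, hef]

end ApproximateTrace

end FiniteTrace

/-! ### Families implementing the equivalence: the finite case -/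

section KPFamily

variable {M : VonNeumannAlgebra H} {d e p q w : H →L[ℂ] H} {ι : Type*} {x : ι → H →L[ℂ] H}

/-- The family `x` in `M` implements the Kadison–Pedersen equivalence of `p` and `q`, in that
`p = ∑ xᵢ* xᵢ` and `q = ∑ xᵢ xᵢ*`. The index type lives in an arbitrary universe. -/
structure IsKPFamily (M : VonNeumannAlgebra H) (p q : H →L[ℂ] H) (x : ι → H →L[ℂ] H) : Prop where
  mem : ∀ i, x i ∈ M
  sum_star_mul : HasStrongSum (fun i => star (x i) * x i) p
  sum_mul_star : HasStrongSum (fun i => x i * star (x i)) q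

namespace IsKPFamily

theorem symm (h : IsKPFamily M p q x) : IsKPFamily M q p fun i => star (x i) where
  mem i := star_mem (h.mem i)
  sum_star_mul := by simpa only [star_star] using h.sum_mul_star
  sum_mul_star := by simpa only [star_star] using h.sum_star_mul

theorem hasSqSum (h : IsKPFamily M p q x) (hp : IsProjIn M p) : HasSqSum x p :=
  HasStrongSum.hasSqSum (by rw [hp.star_eq, hp.mul_self]; exact h.sum_star_mul)

theorem mul_right (h : IsKPFamily M p q x) (hp : IsProjIn M p) (i : ι) : x i * p = x i := by
  have hzero : x i * (1 - p) = 0 := by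
    ext ξ
    have hsum := h.hasSqSum hp ((1 - p) ξ)
    have hpp : p ((1 - p) ξ) = 0 := DFunLike.congr_fun (show p * (1 - p) = 0 by
      rw [mul_sub, mul_one, hp.mul_self, sub_self]) ξ
    rw [hpp, enorm_zero, zero_pow two_ne_zero, ENNReal.tsum_eq_zero] at hsum
    simpa using hsum i
  rw [mul_sub, mul_one, sub_eq_zero] at hzero
  exact hzero.symm

theorem mul_left (h : IsKPFamily M p q x) (hq : IsProjIn M q) (i : ι) : q * x i = x i := by
  simpa [hq.star_eq] using congrArg star (h.symm.mul_right hq i)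

theorem comp_left (h : IsKPFamily M p q x) (hw : w ∈ M) (he : ∀ i, star w * w * x i = x i * e) :
    IsKPFamily M (p * e) (w * q * star w) fun i => w * x i where
  mem i := mul_mem hw (h.mem i)
  sum_star_mul := by
    have heq : (fun i => star (w * x i) * (w * x i)) = fun i => star (x i) * x i * e := by
      funext i
      rw [star_mul, mul_assoc, ← mul_assoc (star w), he, mul_assoc]
    rw [heq]
    exact h.sum_star_mul.mul_right e
  sum_mul_star := by
    simpa only [star_mul, mul_assoc] using (h.sum_mul_star.mul_left w).mul_right (star w)

theorem ne_zero (h : IsKPFamily M p q x) (hp : IsProjIn M p) (hd : p * d ≠ 0) :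
    ∃ i, x i * d ≠ 0 := by
  by_contra! hzero
  refine hd (ContinuousLinearMap.ext fun ξ => ?_)
  have hsum := (h.hasSqSum hp).mul_right d ξ
  simpa [hzero] using hsum.symm

end IsKPFamily

section IteratedCopies

/-- The operation `f ↦ ∑ f ∘ xᵢ*` on `[0, ∞]`-valued functions; on the quadratic form
`‖a ·‖²` it gives the form of `∑ xᵢ a* a xᵢ*`. -/
def conjSum (x : ι → H →L[ℂ] H) : AddMonoid.End (H → ENNReal) where
  toFun f η := ∑' i, f (star (x i) η)
  map_zero' := by ext; simp
  map_add' f g := by ext; exact ENNReal.tsum_add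

theorem sum_range_pow_apply_add {A : Type*} [AddCommMonoid A] {Φ : AddMonoid.End A} {a g : A}
    (h : a + Φ g = g) (N : ℕ) : ∑ n ∈ Finset.range N, (Φ ^ n) a + (Φ ^ N) g = g := by
  induction N with
  | zero => simp
  | succ N ih =>
    rw [Finset.sum_range_succ, pow_succ, AddMonoid.End.coe_mul, Function.comp_apply, add_assoc,
      ← map_add, h, ih]

namespace IsKPFamily

theorem tsum_conjSum_pow_le (h : IsKPFamily M p q x) (hp : IsProjIn M p) (hq : IsProjIn M q)
    (hpq : p * q = q) (η : H) :
    ∑' n, (conjSum x ^ n) (fun ζ => ‖(p - q) ζ‖ₑ ^ 2) η ≤ ‖p η‖ₑ ^ 2 := by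
  have hd := hp.sub hq hpq
  have hfix : (fun ζ => ‖(p - q) ζ‖ₑ ^ 2) + conjSum x (fun ζ => ‖p ζ‖ₑ ^ 2) =
      fun ζ => ‖p ζ‖ₑ ^ 2 := by
    funext ζ
    have hconj : conjSum x (fun ζ => ‖p ζ‖ₑ ^ 2) ζ = ‖q ζ‖ₑ ^ 2 := by
      rw [← h.symm.hasSqSum hq ζ]
      refine tsum_congr fun i => ?_
      change ‖p (star (x i) ζ)‖ₑ ^ 2 = ‖star (x i) ζ‖ₑ ^ 2
      rw [← mul_apply_eq_comp, mul_star_eq_star_of_mul_eq hp.2.1 (h.mul_right hp i)]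
    rw [Pi.add_apply, hconj]
    exact (enorm_sq_eq_add (by
      rw [hp.star_eq, hd.star_eq, hq.star_eq, hp.mul_self, hd.mul_self, hq.mul_self,
        sub_add_cancel]) ζ).symm
  refine ENNReal.tsum_le_of_sum_range_le fun N => ?_
  have := congrFun (sum_range_pow_apply_add hfix N) η
  rw [Pi.add_apply, Finset.sum_apply] at this
  exact le_self_add.trans_eq this

theorem exists_hasSqSum_conjSum_pow.{v} {ι : Type v} {x : ι → H →L[ℂ] H} (h : IsKPFamily M p q x)
    (hp : IsProjIn M p) (hq : IsProjIn M q) (hpq : p * q = q) (hd : IsProjIn M d)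
    (hpd : p * d = d) (n : ℕ) :
    ∃ (J : Type v) (y : J → H →L[ℂ] H), (∀ j, y j ∈ M) ∧ (∀ j, q * y j = y j) ∧ HasSqSum y d ∧
      ∀ η, ∑' j, ‖star (y j) η‖ₑ ^ 2 = (conjSum x ^ (n + 1)) (fun ζ => ‖d ζ‖ₑ ^ 2) η := by
  induction n with
  | zero =>
    refine ⟨ι, fun i => x i * d, fun i => mul_mem (h.mem i) hd.mem,
      fun i => by rw [← mul_assoc, h.mul_left hq], ?_, fun η => ?_⟩
    · simpa only [hpd] using (h.hasSqSum hp).mul_right d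
    · rw [zero_add, pow_one]
      refine tsum_congr fun i => ?_
      simp only [star_mul, hd.star_eq, mul_apply_eq_comp]
  | succ n ih =>
    obtain ⟨J, y, hyM, hqy, hsum, hcol⟩ := ih
    refine ⟨ι × J, fun o => x o.1 * y o.2, fun o => mul_mem (h.mem _) (hyM _),
      fun o => by rw [← mul_assoc, h.mul_left hq], ?_, fun η => ?_⟩
    · refine (h.hasSqSum hp).prod_mul ?_
      have hpy : ∀ j, p * y j = y j := fun j => by rw [← hqy, ← mul_assoc, hpq]
      simpa only [hpy] using hsum
    · rw [pow_succ', AddMonoid.End.coe_mul, Function.comp_apply, ENNReal.tsum_prod']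
      refine tsum_congr fun i => ?_
      simp only [← hcol, star_mul, mul_apply_eq_comp]

theorem enorm_sq_le_two_mul_sum_conjSum_pow {t : H →L[ℂ] H} {ξ : H} {K : Type*} [Fintype K]
    {η : K → H} (h : IsKPFamily M p q x) (hp : IsProjIn M p) (hq : IsProjIn M q) (hpq : p * q = q)
    (hd : IsProjIn M d) (hpd : p * d = d) (ht : IsPartialIsometryIn M d q t)
    (htξ : (t * star t) ξ = ξ)
    (hη : ∀ y ∈ M, q * y = y → ‖y ξ‖ₑ ^ 2 ≤ 2 * ∑ k, ‖star y (η k)‖ₑ ^ 2) (n : ℕ) :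
    ‖ξ‖ₑ ^ 2 ≤ 2 * ∑ k, (conjSum x ^ (n + 1)) (fun ζ => ‖d ζ‖ₑ ^ 2) (η k) := by
  have hnorm : ‖star t ξ‖ₑ = ‖ξ‖ₑ := by
    rw [enorm_eq_iff_norm_eq, ht.isPartialIsometry.star.norm_apply, star_star, htξ]
  have hdt : d * star t = star t := mul_star_eq_star_of_mul_eq hd.2.1 ht.mul_right
  have hcontr (ζ : H) : ‖t ζ‖ₑ ≤ ‖ζ‖ₑ := by
    rw [enorm_le_iff_norm_le, ht.isPartialIsometry.norm_apply]
    exact ht.isProjIn_star_mul_self.norm_apply_le ζ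
  obtain ⟨J, y, hyM, hqy, hsum, hcol⟩ := h.exists_hasSqSum_conjSum_pow hp hq hpq hd hpd n
  calc ‖ξ‖ₑ ^ 2 = ∑' j, ‖(y j * star t) ξ‖ₑ ^ 2 := by
        rw [hsum.mul_right (star t) ξ, hdt, hnorm]
    _ ≤ ∑' j, 2 * ∑ k, ‖star (y j) (η k)‖ₑ ^ 2 := ENNReal.tsum_le_tsum fun j => by
        refine (hη _ (mul_mem (hyM j) (star_mem ht.mem)) (by rw [← mul_assoc, hqy])).trans ?_
        gcongr with k
        simpa using hcontr (star (y j) (η k))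
    _ = 2 * ∑ k, (conjSum x ^ (n + 1)) (fun ζ => ‖d ζ‖ₑ ^ 2) (η k) := by
        rw [ENNReal.tsum_mul_left, Summable.tsum_finsetSum fun _ _ => ENNReal.summable]
        simp only [hcol]

end IsKPFamily

end IteratedCopies

theorem IsKPFamily.eq_of_hasNoInfiniteCopies (h : IsKPFamily M p q x) (hp : IsProjIn M p)
    (hq : IsProjIn M q) (hpq : p * q = q) (hfin : HasNoInfiniteCopies M q) : p = q := by
  by_contra hne
  have hd := hp.sub hq hpq
  have hpd : p * (p - q) = p - q := by rw [mul_sub, hp.mul_self, hpq]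
  obtain ⟨i, hi⟩ := h.ne_zero hp (d := p - q) (by rw [hpd]; exact sub_ne_zero.2 hne)
  obtain ⟨t, ht, ht0⟩ := exists_isPartialIsometryIn_ne_zero hd hq (h.mem i)
    (by rwa [h.mul_left hq])
  obtain ⟨ξ, hξ, htξ, K, _, η, hη⟩ := hfin.exists_enorm_sq_le_sum hq ht.isProjIn_mul_star_self
    (by rw [← mul_assoc, ht.mul_left]) fun h0 =>
      ht0 (CStarRing.mul_star_self_eq_zero_iff t |>.1 h0)
  have hle : ∑' _ : ℕ, ‖ξ‖ₑ ^ 2 ≤ 2 * ∑ k, ‖p (η k)‖ₑ ^ 2 :=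
    calc ∑' _ : ℕ, ‖ξ‖ₑ ^ 2
        ≤ ∑' n, 2 * ∑ k, (conjSum x ^ (n + 1)) (fun ζ => ‖(p - q) ζ‖ₑ ^ 2) (η k) :=
          ENNReal.tsum_le_tsum
            (h.enorm_sq_le_two_mul_sum_conjSum_pow hp hq hpq hd hpd ht htξ hη)
      _ = 2 * ∑ k, ∑' n, (conjSum x ^ (n + 1)) (fun ζ => ‖(p - q) ζ‖ₑ ^ 2) (η k) := by
          rw [ENNReal.tsum_mul_left, Summable.tsum_finsetSum fun _ _ => ENNReal.summable]
      _ ≤ 2 * ∑ k, ‖p (η k)‖ₑ ^ 2 := by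
          gcongr with k
          exact (ENNReal.tsum_comp_le_tsum_of_injective (add_left_injective 1) _).trans
            (h.tsum_conjSum_pow_le hp hq hpq (η k))
  rw [ENNReal.tsum_const_eq_top_of_ne_zero (by simpa using hξ), top_le_iff] at hle
  exact ENNReal.mul_ne_top ENNReal.ofNat_ne_top
    (ENNReal.sum_ne_top.2 fun k _ => ENNReal.pow_ne_top enorm_ne_top) hle

end KPFamily

/-! ### Countable families -/

section CentralEquivalence

variable {M : VonNeumannAlgebra H} {e p q r w z : H →L[ℂ] H}

namespace MvNEquiv

theorem symm (h : MvNEquiv M p q) : MvNEquiv M q p := by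
  obtain ⟨v, hvM, rfl, rfl⟩ := h
  exact ⟨star v, star_mem hvM, by simp only [star_eq_adjoint, adjoint_adjoint],
    by simp only [star_eq_adjoint, adjoint_adjoint]⟩

theorem trans (hpq : MvNEquiv M p q) (hqr : MvNEquiv M q r) (hp : p * p = p) (hr : r * r = r) :
    MvNEquiv M p r := by
  obtain ⟨v, hvM, hvp, hvq⟩ := hpq
  obtain ⟨w, hwM, hwq, hwr⟩ := hqr
  simp only [← star_eq_adjoint] at hvp hvq hwq hwr
  refine ⟨w * v, mul_mem hwM hvM, ?_, ?_⟩ <;> rw [← star_eq_adjoint, star_mul] <;> grind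

theorem eq_zero (h : MvNEquiv M p 0) : p = 0 := by
  obtain ⟨v, -, rfl, hv⟩ := h
  rw [← star_eq_adjoint, CStarRing.mul_star_self_eq_zero_iff] at hv
  rw [hv, mul_zero]

end MvNEquiv

theorem IsCentralProj.mul (hz : IsCentralProj M z) (hw : IsCentralProj M w) :
    IsCentralProj M (z * w) :=
  ⟨hz.mul_isProjIn hw.1, fun x hx => by
    rw [mul_assoc, hw.2 x hx, ← mul_assoc, hz.2 x hx, mul_assoc]⟩

theorem exists_injective_sum_prod {S : Type u} [Infinite S] {ι : Type*} [Countable ι] :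
    ∃ β : (S ⊕ PUnit.{1}) × ι → S, Function.Injective β := by
  obtain ⟨f, hf⟩ := exists_injective_nat ι
  obtain ⟨β⟩ : Nonempty ((S ⊕ PUnit.{1}) × ℕ ↪ S) := by
    rw [← Cardinal.le_def]
    have hS := Cardinal.aleph0_le_mk S
    simp [Cardinal.add_one_eq hS, Cardinal.mul_aleph0_eq hS]
  exact ⟨fun o => β (o.1, f o.2), β.injective.comp (Function.injective_id.prodMap hf)⟩

namespace IsKPFamily

section

variable {ι J O : Type*} {x : ι → H →L[ℂ] H} {u : J → H →L[ℂ] H} {a : O → H →L[ℂ] H}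

theorem exists_star_mul_self_eq (h : IsKPFamily M p q x) (hp : IsProjIn M p) (hq : IsProjIn M q)
    (hz : IsCentralProj M z) (hu : IsCopies M q e u) (haM : ∀ o, a o ∈ M)
    (hea : ∀ o, e * a o = a o) (ha : HasSqSum a (z * q)) {β : O × ι → J}
    (hβ : Function.Injective β) : ∃ v ∈ M, star v * v = z * p ∧ z * q * v = v := by
  have hax : HasSqSum (fun o : O × ι => a o.1 * x o.2) (p * z) := by
    refine ha.prod_mul ?_
    simp only [mul_assoc z, h.mul_left hq, hz.2 _ (h.mem _)]
    exact (h.hasSqSum hp).mul_right z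
  have hnorm : ∀ o ξ, ‖(u (β o) * (a o.1 * x o.2)) ξ‖ₑ = ‖(a o.1 * x o.2) ξ‖ₑ := by
    intro o
    simp only [enorm_eq_iff_norm_eq]
    rw [← star_mul_self_eq_star_mul_self_iff_norm]
    simp only [star_mul, mul_assoc]
    rw [← mul_assoc (star (u _)), hu.star_mul_self, ← mul_assoc e, hea]
  have hsq : HasSqSum (fun o : O × ι => u (β o) * (a o.1 * x o.2)) (p * z) := fun ξ => by
    simp only [hnorm, hax ξ]
  obtain ⟨v, hvM, hv, hvsq⟩ := exists_hasStrongSum_of_tsum_le (M := M)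
    (fun o => mul_mem (hu.mem _) (mul_mem (haM _) (h.mem _)))
    (fun i j hij => by
      simp only [star_mul, mul_assoc]
      rw [← mul_assoc (star (u _)), hu.orthogonal (hβ.ne hij), zero_mul, mul_zero, mul_zero])
    (fun ξ => (hsq ξ).le)
  have hqv : q * v = v := hv.mul_left_eq_self fun o => by rw [← mul_assoc, hu.mul_left]
  have hzp := hz.mul_isProjIn hp
  refine ⟨z * v, mul_mem hz.1.mem hvM, ?_, ?_⟩
  · rw [hz.star_mul_mul_self hvM, hvsq.star_mul_self_eq hsq, ← hz.2 p hp.mem, hzp.star_eq,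
      hzp.mul_self, ← mul_assoc, hz.1.mul_self]
  · rw [mul_assoc, ← mul_assoc q, ← hz.2 q hq.mem, mul_assoc z q, hqv, ← mul_assoc, hz.1.mul_self]

end

variable {ι : Type*} [Countable ι] {x : ι → H →L[ℂ] H}

theorem exists_centralProj_mvnEquiv_of_mul_eq (h : IsKPFamily M p q x) (hp : IsProjIn M p)
    (hq : IsProjIn M q) (hpq : p * q = q) (hp0 : p ≠ 0) :
    ∃ z, IsCentralProj M z ∧ z * p ≠ 0 ∧ MvNEquiv M (z * p) (z * q) := by
  by_cases hfin : HasNoInfiniteCopies M q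
  · obtain rfl := h.eq_of_hasNoInfiniteCopies hp hq hpq hfin
    refine ⟨1, ⟨IsProjIn.one, fun x _ => by rw [one_mul, mul_one]⟩, by rwa [one_mul], 1 * p,
      mul_mem (one_mem M) hp.mem, ?_⟩
    simp only [one_mul, ← star_eq_adjoint, hp.star_eq, hp.mul_self, and_self]
  simp only [HasNoInfiniteCopies, not_forall] at hfin
  obtain ⟨e, u, he, hu, he0⟩ := hfin
  have hinj : Function.Injective u := fun m n hmn => by
    by_contra hne
    exact he0 (by rw [← hu.star_mul_self m, ← hu.orthogonal hne, hmn])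
  obtain ⟨S, hS, hcopies, z, hz, hze, a, haM, hea, ha⟩ :=
    IsCopies.exists_centralProj_hasSqSum he hq he0 (T := Set.range u)
      ⟨fun ⟨_, n, hn⟩ => hn ▸ hu.mem n, fun ⟨_, n, hn⟩ => hn ▸ hu.star_mul_self n,
        fun ⟨_, n, hn⟩ => hn ▸ hu.mul_left n, by
          rintro ⟨_, m, rfl⟩ ⟨_, n, rfl⟩ hmn
          exact hu.orthogonal fun hmn' => hmn (by rw [hmn'])⟩
  have : Infinite S := ((Set.infinite_range_of_injective hinj).mono hS).to_subtype
  obtain ⟨β, hβ⟩ := exists_injective_sum_prod (S := S) (ι := ι)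
  obtain ⟨v, hvM, hv, hqv⟩ := h.exists_star_mul_self_eq hp hq hz hcopies haM hea ha hβ
  refine ⟨z, hz, fun hzp => hze ?_, mvnEquiv_of_mul_eq (hz.mul_isProjIn hp) (hz.mul_isProjIn hq)
    ?_ hvM hv hqv⟩
  · have hzu : z * u 0 = 0 := by
      rw [← hu.mul_left 0, ← hpq, ← mul_assoc, ← mul_assoc, hzp, zero_mul, zero_mul]
    rw [← hu.star_mul_self 0, ← mul_assoc, hz.2 _ (star_mem (hu.mem 0)), mul_assoc, hzu, mul_zero]
  · rw [hz.2 p hp.mem, mul_assoc, ← mul_assoc z, hz.1.mul_self, hz.2 q hq.mem, ← mul_assoc, hpq]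

theorem exists_centralProj_mvnEquiv_of_isPartialIsometryIn (h : IsKPFamily M p q x)
    (hp : IsProjIn M p) (hq : IsProjIn M q) (hz : IsCentralProj M z)
    (hw : IsPartialIsometryIn M q p w) (hwz : star w * w = z * q) (hzp : z * p ≠ 0) :
    ∃ z, IsCentralProj M z ∧ z * p ≠ 0 ∧ MvNEquiv M (z * p) (z * q) := by
  have hzw : z * w = w := by
    have := hw.isPartialIsometry.mul_star_mul_self
    rwa [hwz, hz.2 q hq.mem, ← mul_assoc, hw.mul_right, ← hz.2 w hw.mem] at this
  have hfam : IsKPFamily M (z * p) (w * star w) fun i => w * x i := by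
    have := h.comp_left (e := z) hw.mem fun i => by
      rw [hwz, mul_assoc, h.mul_left hq, hz.2 _ (h.mem i)]
    rwa [← hz.2 p hp.mem, hw.mul_right] at this
  obtain ⟨y, hy, hyp, hequiv⟩ := hfam.exists_centralProj_mvnEquiv_of_mul_eq (hz.mul_isProjIn hp)
    hw.isProjIn_mul_star_self (by rw [mul_assoc, ← mul_assoc p, hw.mul_left, ← mul_assoc, hzw]) hzp
  have hequiv' : MvNEquiv M (y * (w * star w)) (y * (star w * w)) := by
    refine ⟨y * star w, mul_mem hy.1.mem (star_mem hw.mem), ?_, ?_⟩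
    · rw [← star_eq_adjoint, hy.star_mul_mul_self (star_mem hw.mem), star_star]
    · rw [← star_eq_adjoint, hy.mul_star_mul_self (star_mem hw.mem), star_star]
  rw [hwz] at hequiv'
  refine ⟨y * z, hy.mul hz, by rwa [mul_assoc], ?_⟩
  rw [mul_assoc, mul_assoc]
  exact hequiv.trans hequiv' (hy.mul_isProjIn (hz.mul_isProjIn hp)).mul_self
    (hy.mul_isProjIn (hz.mul_isProjIn hq)).mul_self

theorem exists_centralProj_mvnEquiv (h : IsKPFamily M p q x) (hp : IsProjIn M p)
    (hq : IsProjIn M q) (hp0 : p ≠ 0) :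
    ∃ z, IsCentralProj M z ∧ z * p ≠ 0 ∧ MvNEquiv M (z * p) (z * q) := by
  obtain ⟨z, hz, ⟨v, hv, hvz⟩, w, hw, hwz⟩ := exists_centralProj_comparison hp hq
  by_cases hzp : (1 - z) * p = 0
  · rw [sub_mul, one_mul, sub_eq_zero] at hzp
    obtain ⟨i, hi⟩ := h.ne_zero hp (d := z) (by rwa [← hz.2 p hp.mem, ← hzp])
    have hzq : z * q ≠ 0 := fun hzq => hi (by
      rw [← hz.2 _ (h.mem i), ← h.mul_left hq, ← mul_assoc, hzq, zero_mul])
    obtain ⟨y, hy, hyq, hequiv⟩ :=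
      h.symm.exists_centralProj_mvnEquiv_of_isPartialIsometryIn hq hp hz hv hvz hzq
    exact ⟨y, hy, fun hyp => hyq (MvNEquiv.eq_zero (by rwa [hyp] at hequiv)), hequiv.symm⟩
  · exact h.exists_centralProj_mvnEquiv_of_isPartialIsometryIn hp hq hz.one_sub hw hwz hzp

end IsKPFamily

end CentralEquivalence

/-! ### Arbitrary families -/

section MainArgument

theorem exists_countable_superset_forall_subset {α : Type*} {f : α → Set α}
    (hf : ∀ a, (f a).Countable) (a : α) : ∃ B, a ∈ B ∧ B.Countable ∧ ∀ b ∈ B, f b ⊆ B := by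
  have hcount : ∀ n, ((fun B => ⋃ b ∈ B, f b)^[n] {a}).Countable := fun n => by
    induction n with
    | zero => exact Set.countable_singleton a
    | succ n ih =>
      rw [Function.iterate_succ_apply']
      exact ih.biUnion fun b _ => hf b
  refine ⟨⋃ n, (fun B => ⋃ b ∈ B, f b)^[n] {a}, Set.mem_iUnion.2 ⟨0, rfl⟩,
    Set.countable_iUnion hcount, fun b hb c hc => ?_⟩
  obtain ⟨n, hn⟩ := Set.mem_iUnion.1 hb
  refine Set.mem_iUnion.2 ⟨n + 1, ?_⟩
  rw [Function.iterate_succ_apply']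
  exact Set.mem_biUnion hn hc

variable {M : VonNeumannAlgebra H} {e f p q w : H →L[ℂ] H} {ι : Type*} {x : ι → H →L[ℂ] H}

theorem IsPartialIsometryIn.of_star_mul_self {v : H →L[ℂ] H} (hv : v ∈ M)
    (hp : IsProjIn M (star v * v)) : IsPartialIsometryIn M (star v * v) (v * star v) v :=
  have hpi : IsPartialIsometry v := .of_star_mul_self hp.isStarProjection
  ⟨hv, hpi, hpi.mul_star_mul_self, hpi⟩

omit [CompleteSpace H] in
theorem HasStrongSum.restrict {u : ι → H →L[ℂ] H} {a : H →L[ℂ] H} (h : HasStrongSum u a)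
    {J : Set ι} (hJ : ∀ i ∉ J, u i = 0) : HasStrongSum (fun i : J => u i) a := fun ξ => by
  refine (hasSum_subtype_iff_of_support_subset (f := fun i => u i ξ) fun i hi => ?_).2 (h ξ)
  by_contra hiJ
  exact hi (by simp only [hJ i hiJ, zero_apply])

namespace IsKPFamily

theorem mul_comm_of_intertwine (h : IsKPFamily M p q x) (he : IsSelfAdjoint e)
    (hf : IsSelfAdjoint f) (hx : ∀ i, f * x i = x i * e) : p * e = e * p := by
  refine (h.sum_star_mul.intertwine h.sum_star_mul fun i => ?_).symm
  have hstar := congrArg star (hx i)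
  rw [star_mul, star_mul, he.star_eq, hf.star_eq] at hstar
  rw [← mul_assoc, ← hstar, mul_assoc, hx, mul_assoc]

theorem restrict (h : IsKPFamily M p q x) {J : Set ι} (hJ : ∀ i ∉ J, x i = 0) :
    IsKPFamily M p q fun i : J => x i where
  mem i := h.mem i
  sum_star_mul := HasStrongSum.restrict h.sum_star_mul fun i hi => by rw [hJ i hi, mul_zero]
  sum_mul_star := HasStrongSum.restrict h.sum_mul_star fun i hi => by rw [hJ i hi, zero_mul]

theorem countable_apply_ne_zero (h : IsKPFamily M p q x) (hp : IsProjIn M p) (ξ : H) :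
    {i | x i ξ ≠ 0}.Countable := by
  have hne : ∑' i, ‖x i ξ‖ₑ ^ 2 ≠ ⊤ := by
    rw [h.hasSqSum hp ξ]
    exact ENNReal.pow_ne_top enorm_ne_top
  exact (Summable.countable_support_ennreal hne).mono fun i hi => by simpa using hi

theorem countable_range_apply (h : IsKPFamily M p q x) (hp : IsProjIn M p) (ξ : H) :
    (Set.range fun i => x i ξ).Countable := by
  refine (((h.countable_apply_ne_zero hp ξ).image fun i => x i ξ).insert 0).mono ?_
  rintro _ ⟨i, rfl⟩
  exact or_iff_not_imp_left.2 fun hi => ⟨i, hi, rfl⟩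

theorem exists_isProjIn_comm_countable (h : IsKPFamily M p q x) (hp : IsProjIn M p)
    (hq : IsProjIn M q) (hp0 : p ≠ 0) :
    ∃ e, IsProjIn M e ∧ (∀ i, e * x i = x i * e) ∧ p * e ≠ 0 ∧ {i | x i * e ≠ 0}.Countable := by
  obtain ⟨ξ, hξ⟩ : ∃ ξ, p ξ ≠ 0 := by
    by_contra! hzero
    exact hp0 (ContinuousLinearMap.ext hzero)
  obtain ⟨B, hξB, hB, hxB⟩ := exists_countable_superset_forall_subset
    (fun η => (h.countable_range_apply hp η).union (h.symm.countable_range_apply hq η)) ξ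
  let A : Set H := {ζ | ∃ y ∈ M.commutant, ∃ η ∈ B, y η = ζ}
  have hA : ∀ c ∈ M, (∀ η ∈ B, c η ∈ B) → ∀ ζ ∈ A, c ζ ∈ A := by
    rintro c hc hcB _ ⟨y, hy, η, hη, rfl⟩
    exact ⟨y, hy, c η, hcB η hη, DFunLike.congr_fun (mem_iff_forall_commutant.1 hc y hy) η⟩
  refine ⟨closedSpanProj A, isProjIn_closedSpanProj ?_, fun i => ?_, fun hpe => hξ ?_, ?_⟩
  · rintro y hy _ ⟨y', hy', η, hη, rfl⟩
    exact ⟨y * y', mul_mem hy hy', η, hη, rfl⟩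
  · exact (mul_closedSpanProj_comm (hA _ (h.mem i) fun η hη => hxB η hη (.inl ⟨i, rfl⟩))
      (hA _ (star_mem (h.mem i)) fun η hη => hxB η hη (.inr ⟨i, rfl⟩))).symm
  · have := DFunLike.congr_fun hpe ξ
    have hξA : ξ ∈ A := ⟨1, one_mem _, ξ, hξB, rfl⟩
    rwa [mul_apply_eq_comp, closedSpanProj_apply_of_mem hξA] at this
  · refine (hB.biUnion fun η _ => h.countable_apply_ne_zero hp η).mono fun i hi => ?_
    by_contra hiB
    refine hi (mul_closedSpanProj_eq_zero ?_)
    rintro _ ⟨y, hy, η, hη, rfl⟩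
    have hxη : x i η = 0 := by_contra fun hne => hiB (Set.mem_biUnion hη hne)
    have := DFunLike.congr_fun (mem_iff_forall_commutant.1 (h.mem i) y hy) η
    rw [mul_apply_eq_comp, mul_apply_eq_comp, hxη, map_zero] at this
    exact this.symm

theorem exists_isPartialIsometryIn_intertwine (h : IsKPFamily M p q x) (hp : IsProjIn M p)
    (hq : IsProjIn M q) (hp0 : p ≠ 0) :
    ∃ v, IsPartialIsometryIn M p q v ∧ (∀ i, v * star v * x i = x i * (star v * v)) ∧ v ≠ 0 := by
  obtain ⟨e, he, hx, hpe0, hcount⟩ := h.exists_isProjIn_comm_countable hp hq hp0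
  have hpe := h.mul_comm_of_intertwine he.2.1 he.2.1 hx
  have hqe := h.symm.mul_comm_of_intertwine he.2.1 he.2.1 fun i => by
    simpa [he.star_eq] using (congrArg star (hx i)).symm
  have hfam : IsKPFamily M (p * e) (q * e) fun i => e * x i := by
    have := h.comp_left he.mem fun i => by rw [he.star_eq, he.mul_self, hx]
    rwa [he.star_eq, ← hqe, mul_assoc, he.mul_self] at this
  have : Countable {i | x i * e ≠ 0} := hcount.to_subtype
  have hrestrict := hfam.restrict (J := {i | x i * e ≠ 0}) fun i hi => by
    rw [hx]
    exact not_not.1 hi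
  obtain ⟨z, hz, hz0, v, hvM, hvp, hvq⟩ := hrestrict.exists_centralProj_mvnEquiv
    (hp.mul he hpe) (hq.mul he hqe) hpe0
  rw [← star_eq_adjoint] at hvp hvq
  have hv := IsPartialIsometryIn.of_star_mul_self hvM
    (by rw [hvp]; exact hz.mul_isProjIn (hp.mul he hpe))
  refine ⟨v, hv.mono ?_ ?_, fun i => ?_, ?_⟩
  · rw [hvp, hpe, mul_assoc, mul_assoc, hp.mul_self]
  · rw [hvq, ← mul_assoc, ← hz.2 q hq.mem, mul_assoc, ← mul_assoc q, hq.mul_self]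
  · rw [hvp, hvq, hpe, hqe]
    calc z * (e * q) * x i = z * x i * e := by
          rw [mul_assoc, mul_assoc, h.mul_left hq, hx, mul_assoc]
      _ = x i * z * (e * p) := by
          rw [← hpe, ← mul_assoc, ← hz.2 _ (h.mem i), mul_assoc z (x i) p, h.mul_right hp]
      _ = x i * (z * (e * p)) := mul_assoc _ _ _
  · rintro rfl
    exact hz0 (by rw [← hvp, mul_zero])

theorem residual_mul_eq (h : IsKPFamily M p q x) (hp : IsProjIn M p) (hq : IsProjIn M q)
    (hx : ∀ i, w * star w * x i = x i * (star w * w)) (i : ι) :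
    (q - w * star w) * x i = x i * (p - star w * w) := by
  rw [sub_mul, mul_sub, hx, h.mul_left hq, h.mul_right hp]

theorem residual (h : IsKPFamily M p q x) (hp : IsProjIn M p) (hq : IsProjIn M q)
    (hw : IsPartialIsometryIn M p q w) (hx : ∀ i, w * star w * x i = x i * (star w * w)) :
    IsKPFamily M (p - star w * w) (q - w * star w) fun i => (q - w * star w) * x i := by
  have hpe : p * (p - star w * w) = p - star w * w := by
    rw [mul_sub, hp.mul_self, ← mul_assoc, mul_star_eq_star_of_mul_eq hp.2.1 hw.mul_right]
  have hqf : q * (q - w * star w) = q - w * star w := by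
    rw [mul_sub, hq.mul_self, ← mul_assoc, hw.mul_left]
  have hf := hw.isProjIn_sub_mul_star_self hq
  have := h.comp_left hf.mem (e := p - star w * w) fun i => by
    rw [hf.star_eq, hf.mul_self, h.residual_mul_eq hp hq hx]
  rwa [hpe, hf.star_eq, mul_assoc, hqf, hf.mul_self] at this

theorem mvnEquiv (h : IsKPFamily M p q x) (hp : IsProjIn M p) (hq : IsProjIn M q) :
    MvNEquiv M p q := by
  obtain ⟨S, w, hS, hw, -, hpsum, hqsum, hmax⟩ := exists_maximal_isPartialIsometryIn hp hq
    fun v => ∀ i, v * star v * x i = x i * (star v * v)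
  have hwx : ∀ i, w * star w * x i = x i * (star w * w) := fun i =>
    (hpsum.intertwine hqsum fun u => ((hS u u.2).2 i).symm).symm
  have he := hw.isProjIn_sub_star_mul_self hp
  have hf := hw.isProjIn_sub_mul_star_self hq
  have hfe := h.residual_mul_eq hp hq hwx
  have hfam := h.residual hp hq hw hwx
  have he0 : p - star w * w = 0 := by
    by_contra hne
    obtain ⟨v, hv, hvx, hv0⟩ := hfam.exists_isPartialIsometryIn_intertwine he hf hne
    refine hv0 (hmax v hv fun i => ?_)
    have hfv := star_mul_eq_star_of_mul_eq hf.2.1 hv.mul_left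
    have hev := mul_star_eq_star_of_mul_eq he.2.1 hv.mul_right
    calc v * star v * x i = v * star v * ((q - w * star w) * x i) := by
          rw [mul_assoc v, ← hfv, mul_assoc (star v), ← mul_assoc v, hfv]
      _ = x i * (p - star w * w) * (star v * v) := by rw [hvx, hfe i]
      _ = x i * (star v * v) := by rw [mul_assoc, ← mul_assoc _ (star v), hev]
  have hf0 : q - w * star w = 0 := by
    by_contra hne
    obtain ⟨i, hi⟩ := hfam.symm.ne_zero hf (d := 1) (by rwa [mul_one])
    exact hi (by rw [hfe, he0, mul_zero, star_zero, zero_mul])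
  exact ⟨w, hw.mem, (sub_eq_zero.1 he0).symm, (sub_eq_zero.1 hf0).symm⟩

end IsKPFamily

end MainArgument

/-- For projections `p, q` in a von Neumann algebra `M`, the
Kadison–Pedersen equivalence `p ≈ q` holds iff `p` and `q` are Murray–von Neumann
equivalent. -/
theorem kpEquiv_iff_mvnEquiv (M : VonNeumannAlgebra H) (p q : H →L[ℂ] H)
    (hp : IsProjIn M p) (hq : IsProjIn M q) :
    KPEquiv M p q ↔ MvNEquiv M p q := by
  constructor
  · rintro ⟨ι, x, hx, hsum, hsum'⟩
    exact IsKPFamily.mvnEquiv ⟨hx, hsum, hsum'⟩ hp hq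
  · rintro ⟨v, hv, rfl, rfl⟩
    exact ⟨PUnit, fun _ => v, fun _ => hv, fun ξ => hasSum_unique fun _ : PUnit => _,
      fun ξ => hasSum_unique fun _ : PUnit => _⟩
end
end

section
/- The partially ordered set P(M)/∼ of Murray–von Neumann equivalence classes of projections in any von Neumann algebra M is a complete lattice: every subset has a supremum and an infimum with respect to the order induced by subequivalence. -/
open ContinuousLinearMap Filter Topology

universe u

noncomputable section

variable {H : Type u} [NormedAddCommGroup H] [InnerProductSpace ℂ H] [CompleteSpace H]

/-!
The infimum of a family `p i` of projections is the class of a maximal family of mutually equivalent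
subprojections `r i` (Zorn), so that the remainders `p i - r i` have no nonzero common part.
Suppose `b ≼ p i` for all `i`, and split all these projections by a central projection into a part
where the `r i` are finite and a part where they are properly infinite. On the finite part, one may
assume `r i ≼ b` by the comparison theorem; removing from `b` a copy of `r i` and cancelling gives a
common part of the remainders, which is zero, hence `b ≼ r i`. On the properly infinite part,
`r i` absorbs `p i - r i` wherever `p i - r i ≼ r i`; elsewhere `r i` would be a common part
of the remainders, so it vanishes there, and so does `b`. Suprema are infima of upper bounds.

Comparison theory uses only suprema of projections, absolute values and operators between families
with equal Gram matrices. Working in an abstract ring with these properties gives access to the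
product rings `I → R`, in which a family of projections is a single projection.
-/

namespace MurrayVonNeumann

section Ring

variable {R : Type*} [Ring R] {p x : R}

theorem one_sub_mul_eq_zero_iff : (1 - p) * x = 0 ↔ p * x = x := by
  rw [sub_mul, one_mul, sub_eq_zero, eq_comm]

theorem mul_add_one_sub_mul (z x : R) : z * x + (1 - z) * x = x := by
  rw [← add_mul, add_sub_cancel, one_mul]

end Ring

section Projections

variable {R : Type*} [Ring R] [StarRing R] {a b c d p q w z : R}

theorem mul_eq_zero_symm (hp : IsSelfAdjoint p) (hq : IsSelfAdjoint q) (h : p * q = 0) :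
    q * p = 0 := by
  simpa [hp.star_eq, hq.star_eq] using congrArg star h

theorem mul_eq_left_of_mul_eq_right (hp : IsSelfAdjoint p) (hq : IsSelfAdjoint q)
    (h : q * p = p) : p * q = p := by
  simpa [hp.star_eq, hq.star_eq] using congrArg star h

/-- A projection commuting with every element of the ring. -/
structure IsCentralProjection (z : R) : Prop extends IsStarProjection z where
  commute : ∀ x, Commute z x

namespace IsCentralProjection

theorem one_sub (hz : IsCentralProjection z) : IsCentralProjection (1 - z) :=
  ⟨hz.toIsStarProjection.one_sub, fun x ↦ (Commute.one_left x).sub_left (hz.commute x)⟩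

theorem mul (hz : IsCentralProjection z) (hw : IsCentralProjection w) :
    IsCentralProjection (z * w) :=
  ⟨hz.toIsStarProjection.mul hw.toIsStarProjection (hz.commute w),
    fun x ↦ (hz.commute x).mul_left (hw.commute x)⟩

theorem mul_isStarProjection (hz : IsCentralProjection z) (hp : IsStarProjection p) :
    IsStarProjection (z * p) :=
  hz.toIsStarProjection.mul hp (hz.commute p)

theorem left_comm (hz : IsCentralProjection z) (x y : R) : x * (z * y) = z * (x * y) :=
  ((hz.commute x).symm.left_comm y)

theorem mul_mul_mul (hz : IsCentralProjection z) (x y : R) :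
    z * x * (z * y) = z * (x * y) := by
  rw [mul_assoc, hz.left_comm, ← mul_assoc, hz.isIdempotentElem.eq]

theorem mul_mul_one_sub_mul (hz : IsCentralProjection z) (x y : R) :
    z * x * ((1 - z) * y) = 0 := by
  rw [mul_assoc, hz.one_sub.left_comm, ← mul_assoc, hz.mul_one_sub_self, zero_mul]

end IsCentralProjection

theorem isCentralProjection_of_forall (hw : IsStarProjection w)
    (h : ∀ x, (1 - w) * x * w = 0) : IsCentralProjection w := by
  have mul_right (x : R) : w * (x * w) = x * w := by
    rw [← one_sub_mul_eq_zero_iff, ← mul_assoc, h]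
  have mul_left (x : R) : w * (x * w) = w * x := by
    simpa [hw.isSelfAdjoint.star_eq, mul_assoc] using congrArg star (mul_right (star x))
  exact ⟨hw, fun x ↦ (mul_left x).symm.trans (mul_right x)⟩

/-- The type of projections of a *-ring. -/
abbrev Projection (R : Type*) [Ring R] [StarRing R] := {p : R // IsStarProjection p}

/-- Murray–von Neumann equivalence of projections. -/
structure Equivalent (p q : R) : Prop where
  left : IsStarProjection p
  right : IsStarProjection q
  exists_partialIsometry : ∃ v, star v * v = p ∧ v * star v = q

/-- Murray–von Neumann subequivalence of projections. The subprojection of `q` equivalent to `p`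
is `v * star v`; it is contained in `q` because `q * v = v`. -/
structure Subequivalent (p q : R) : Prop where
  left : IsStarProjection p
  right : IsStarProjection q
  exists_partialIsometry : ∃ v, star v * v = p ∧ q * v = v

scoped infix:50 " ∼ " => Equivalent
scoped infix:50 " ≼ " => Subequivalent

theorem Equivalent.symm : p ∼ q → q ∼ p
  | ⟨hp, hq, v, hvp, hvq⟩ => ⟨hq, hp, star v, by rwa [star_star], by rwa [star_star]⟩

namespace Subequivalent

theorem of_le (hp : IsStarProjection p) (hq : IsStarProjection q) (h : q * p = p) : p ≼ q :=
  ⟨hp, hq, p, by rw [hp.isSelfAdjoint.star_eq, hp.isIdempotentElem.eq], h⟩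

theorem refl (hp : IsStarProjection p) : p ≼ p := of_le hp hp hp.isIdempotentElem.eq

theorem zero_left (hq : IsStarProjection q) : 0 ≼ q := of_le (.zero R) hq (mul_zero q)

theorem trans : a ≼ b → b ≼ c → a ≼ c
  | ⟨ha, _, v, hv, hbv⟩, ⟨_, hc, w, hw, hcw⟩ =>
    ⟨ha, hc, w * v, by rw [star_mul, mul_assoc, ← mul_assoc _ w, hw, hbv, hv],
      by rw [← mul_assoc, hcw]⟩

theorem eq_zero : a ≼ 0 → a = 0
  | ⟨_, _, v, hv, h⟩ => by rw [← hv, ← h, zero_mul, mul_zero]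

theorem add (hac : a ≼ c) (hbd : b ≼ d) (hab : a * b = 0) (hcd : c * d = 0) :
    a + b ≼ c + d := by
  obtain ⟨ha, hc, v, hv, hcv⟩ := hac
  obtain ⟨hb, hd, w, hw, hdw⟩ := hbd
  have hdc : d * c = 0 := mul_eq_zero_symm hc.isSelfAdjoint hd.isSelfAdjoint hcd
  have hcw : c * w = 0 := by rw [← hdw, ← mul_assoc, hcd, zero_mul]
  have hdv : d * v = 0 := by rw [← hcv, ← mul_assoc, hdc, zero_mul]
  have hvw : star v * w = 0 := by
    rw [← hcv, star_mul, hc.isSelfAdjoint.star_eq, mul_assoc, hcw, mul_zero]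
  have hwv : star w * v = 0 := by
    rw [← hdw, star_mul, hd.isSelfAdjoint.star_eq, mul_assoc, hdv, mul_zero]
  exact ⟨ha.add hb hab, hc.add hd hcd, v + w,
    by rw [star_add, add_mul, mul_add, mul_add, hv, hw, hvw, hwv, add_zero, zero_add],
    by rw [add_mul, mul_add, mul_add, hcv, hdw, hcw, hdv, add_zero, zero_add]⟩

theorem cut (hz : IsCentralProjection z) : a ≼ b → z * a ≼ z * b
  | ⟨ha, hb, v, hv, hbv⟩ =>
    ⟨hz.mul_isStarProjection ha, hz.mul_isStarProjection hb, z * v,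
      by rw [star_mul, hz.isSelfAdjoint.star_eq, ← (hz.commute (star v)).eq, hz.mul_mul_mul, hv],
      by rw [hz.mul_mul_mul, hbv]⟩

theorem cut_self (hz : IsCentralProjection z) (ha : IsStarProjection a) : z * a ≼ a :=
  of_le (hz.mul_isStarProjection ha) ha (by rw [hz.left_comm, ha.isIdempotentElem.eq])

theorem glue (hz : IsCentralProjection z) (h : z * a ≼ z * b)
    (h' : (1 - z) * a ≼ (1 - z) * b) : a ≼ b := by
  simpa only [mul_add_one_sub_mul] using
    h.add h' (hz.mul_mul_one_sub_mul a a) (hz.mul_mul_one_sub_mul b b)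

theorem cut_of_cut_sub (hz : IsCentralProjection z) (ha : IsStarProjection a) (hp : p * a = a)
    (hq : q * a = a) (h : z * (p - a) ≼ z * (q - a)) : z * p ≼ z * q := by
  rw [mul_sub, mul_sub] at h
  have orthogonal {x : R} (hx : IsStarProjection (z * x - z * a)) (hxa : x * a = a) :
      z * a * (z * x - z * a) = 0 :=
    mul_eq_zero_symm hx.isSelfAdjoint (hz.mul_isStarProjection ha).isSelfAdjoint <| by
      rw [sub_mul, hz.mul_mul_mul, hz.mul_mul_mul, hxa, ha.isIdempotentElem.eq, sub_self]
  simpa only [add_sub_cancel] using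
    (refl (hz.mul_isStarProjection ha)).add h (orthogonal h.left hp) (orthogonal h.right hq)

end Subequivalent

end Projections

section Supports

variable {R : Type*} [Ring R] [StarRing R] {S : Set R} {a e f p q s x y : R}

/-- `e` is the smallest projection with `e * s = s` for all `s ∈ S`; for a set of projections it
is their supremum. -/
structure IsLeftSupport (S : Set R) (e : R) : Prop extends IsStarProjection e where
  mul_eq_zero_iff : ∀ x, x * e = 0 ↔ ∀ s ∈ S, x * s = 0

/-- A Baer *-ring: the left annihilator of every subset is generated by a projection `1 - e`. -/
class BaerStarRing (R : Type*) [Ring R] [StarRing R] : Prop where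
  exists_isLeftSupport : ∀ S : Set R, ∃ e, IsLeftSupport S e

theorem eq_of_forall_mul_eq_zero_iff (he : IsStarProjection e) (hf : IsStarProjection f)
    (h : ∀ x, x * e = 0 ↔ x * f = 0) : e = f := by
  have hef : e * f = f := one_sub_mul_eq_zero_iff.1 ((h _).1 he.one_sub_mul_self)
  have hfe : f * e = e := one_sub_mul_eq_zero_iff.1 ((h _).2 hf.one_sub_mul_self)
  exact (mul_eq_left_of_mul_eq_right he.isSelfAdjoint hf.isSelfAdjoint hfe).symm.trans hef

namespace IsLeftSupport

theorem mul_eq_self (h : IsLeftSupport S e) (hs : s ∈ S) : e * s = s :=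
  one_sub_mul_eq_zero_iff.1 ((h.mul_eq_zero_iff _).1 h.one_sub_mul_self s hs)

theorem mul_eq_right (h : IsLeftSupport S e) (hq : ∀ s ∈ S, q * s = s) : q * e = e :=
  one_sub_mul_eq_zero_iff.1 ((h.mul_eq_zero_iff _).2 fun s hs ↦ one_sub_mul_eq_zero_iff.2 (hq s hs))

theorem mul_eq_zero_iff_star (h : IsLeftSupport S e) (hS : ∀ s ∈ S, IsSelfAdjoint s) :
    e * x = 0 ↔ ∀ s ∈ S, s * x = 0 := by
  have star_mul_eq_zero {s : R} (hs : IsSelfAdjoint s) : star x * s = 0 ↔ s * x = 0 := by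
    rw [← star_eq_zero, star_mul, star_star, hs.star_eq]
  rw [← star_mul_eq_zero h.isSelfAdjoint, h.mul_eq_zero_iff]
  exact forall₂_congr fun s hs ↦ star_mul_eq_zero (hS s hs)

theorem mul_eq_zero {T : Set R} (h : IsLeftSupport S e) (hf : IsLeftSupport T f)
    (hS : ∀ s ∈ S, IsSelfAdjoint s) (hST : ∀ s ∈ S, ∀ t ∈ T, s * t = 0) : e * f = 0 :=
  (hf.mul_eq_zero_iff _).2 fun t ht ↦ (h.mul_eq_zero_iff_star hS).2 fun s hs ↦ hST s hs t ht

theorem mul_mul_self_eq_zero (h : IsLeftSupport S e)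
    (hx : ∀ s ∈ S, ∀ t ∈ S, star s * x * t = 0) : e * x * e = 0 := by
  refine (h.mul_eq_zero_iff _).2 fun t ht ↦ ?_
  have star_mul_eq_zero : star t * star x * e = 0 := (h.mul_eq_zero_iff _).2 fun s hs ↦ by
    simpa [mul_assoc] using congrArg star (hx s hs t ht)
  simpa [h.isSelfAdjoint.star_eq, mul_assoc] using congrArg star star_mul_eq_zero

theorem isCentralProjection (h : IsLeftSupport S e) (hS : ∀ s ∈ S, IsCentralProjection s) :
    IsCentralProjection e :=
  isCentralProjection_of_forall h.toIsStarProjection fun x ↦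
    (h.mul_eq_zero_iff _).2 fun s hs ↦ by
      rw [mul_assoc, ← ((hS s hs).commute x).eq, ← mul_assoc,
        one_sub_mul_eq_zero_iff.2 (h.mul_eq_self hs), zero_mul]

theorem image_mul_right (h : IsLeftSupport S e) (hS : ∀ s ∈ S, IsCentralProjection s)
    (hp : IsStarProjection p) : IsLeftSupport ((· * p) '' S) (e * p) where
  toIsStarProjection := (h.isCentralProjection hS).mul_isStarProjection hp
  mul_eq_zero_iff x := by
    rw [((h.isCentralProjection hS).commute p).eq, ← mul_assoc, h.mul_eq_zero_iff,
      Set.forall_mem_image]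
    exact forall₂_congr fun s hs ↦ by rw [((hS s hs).commute p).eq, mul_assoc]

end IsLeftSupport

/-- `a` is the infimum of the projections `p` and `q`, expressed by De Morgan duality. -/
def IsMeet (p q a : R) : Prop := IsLeftSupport {1 - p, 1 - q} (1 - a)

namespace IsMeet

theorem isStarProjection (h : IsMeet p q a) : IsStarProjection a :=
  isStarProjection_one_sub_iff.1 h.toIsStarProjection

theorem symm (h : IsMeet p q a) : IsMeet q p a := by rwa [IsMeet, Set.pair_comm]

theorem mul_left (h : IsMeet p q a) (hp : IsStarProjection p) : p * a = a := by
  have ha : a * (1 - p) = 0 := by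
    simpa [sub_mul] using h.mul_eq_self (Set.mem_insert (1 - p) _)
  exact one_sub_mul_eq_zero_iff.1 <|
    mul_eq_zero_symm h.isStarProjection.isSelfAdjoint hp.one_sub.isSelfAdjoint ha

theorem mul_right (h : IsMeet p q a) (hq : IsStarProjection q) : q * a = a :=
  h.symm.mul_left hq

end IsMeet

section Pi

variable {I : Type*} {S : Set (I → R)} {e : I → R}

theorem isStarProjection_pi_iff : IsStarProjection e ↔ ∀ i, IsStarProjection (e i) := by
  simp only [isStarProjection_iff', funext_iff, Pi.mul_apply, Pi.star_apply, forall_and]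

theorem IsLeftSupport.apply (h : IsLeftSupport S e) (i : I) :
    IsLeftSupport (Function.eval i '' S) (e i) where
  toIsStarProjection := isStarProjection_pi_iff.1 h.toIsStarProjection i
  mul_eq_zero_iff x := by
    classical
    have single_mul_eq_zero (s : I → R) : Pi.single i x * s = 0 ↔ x * s i = 0 := by
      rw [← Pi.single_mul_left, Pi.single_eq_zero_iff]
    simp only [Set.forall_mem_image, Function.eval, ← single_mul_eq_zero, h.mul_eq_zero_iff]

instance [BaerStarRing R] : BaerStarRing (I → R) where
  exists_isLeftSupport S := by
    choose e he using fun i ↦ BaerStarRing.exists_isLeftSupport (Function.eval i '' S)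
    refine ⟨e, isStarProjection_pi_iff.2 fun i ↦ (he i).toIsStarProjection, fun x ↦ ?_⟩
    simp only [funext_iff, Pi.mul_apply, Pi.zero_apply, (he _).mul_eq_zero_iff,
      Set.forall_mem_image, Function.eval]
    exact ⟨fun h s hs i ↦ h i hs, fun h i s hs ↦ h s hs i⟩

end Pi

section Baer

variable [BaerStarRing R]

theorem exists_isMeet (p q : R) : ∃ a, IsMeet p q a := by
  obtain ⟨e, he⟩ := BaerStarRing.exists_isLeftSupport {1 - p, 1 - q}
  exact ⟨1 - e, by rwa [IsMeet, sub_sub_cancel]⟩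

theorem eq_zero_of_star_mul_self_eq_zero (h : star x * x = 0) : x = 0 := by
  obtain ⟨e, he⟩ := BaerStarRing.exists_isLeftSupport {x}
  have hxe : star x * e = 0 := (he.mul_eq_zero_iff _).2 fun s hs ↦ by
    rw [Set.mem_singleton_iff.1 hs, h]
  have hex : e * x = 0 := by simpa [he.isSelfAdjoint.star_eq] using congrArg star hxe
  rw [← he.mul_eq_self (Set.mem_singleton x), hex]

theorem mul_mul_star_self_eq_zero_iff : x * (y * star y) = 0 ↔ x * y = 0 := by
  refine ⟨fun h ↦ star_eq_zero.1 (eq_zero_of_star_mul_self_eq_zero ?_), fun h ↦ ?_⟩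
  · rw [star_star, star_mul, ← mul_assoc, mul_assoc x, h, zero_mul]
  · rw [← mul_assoc, h, zero_mul]

/-- The central support of `p`, characterised as the left support of the left ideal `R * p`. -/
theorem exists_centralSupport (p : R) :
    ∃ z, IsCentralProjection z ∧ ∀ y, y * z = 0 ↔ ∀ x, y * x * p = 0 := by
  obtain ⟨z, hz⟩ := BaerStarRing.exists_isLeftSupport (Set.range (· * p))
  have mul_eq_zero_iff (y : R) : y * z = 0 ↔ ∀ x, y * x * p = 0 := by
    simp only [hz.mul_eq_zero_iff, Set.forall_mem_range, mul_assoc]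
  refine ⟨z, isCentralProjection_of_forall hz.toIsStarProjection fun x ↦ ?_, mul_eq_zero_iff⟩
  refine (mul_eq_zero_iff _).2 fun y ↦ ?_
  rw [mul_assoc _ x]
  exact (mul_eq_zero_iff _).1 hz.one_sub_mul_self (x * y)

theorem exists_maximal_orthogonal (P : R → Prop) (hP : ∀ e, P e → IsStarProjection e) :
    ∃ S E, (∀ e ∈ S, P e) ∧ S.Pairwise (fun e f ↦ e * f = 0) ∧ IsLeftSupport S E ∧
      ∀ e, P e → E * e = 0 → e = 0 := by
  let r (e f : {e : R // P e}) : Prop := e.1 * f.1 = 0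
  have r_symm {e f} (h : r e f) : r f e :=
    mul_eq_zero_symm (hP _ e.2).isSelfAdjoint (hP _ f.2).isSelfAdjoint h
  have hmax : IsMaxChain r (maxChain r) := maxChain_spec
  obtain ⟨E, hE⟩ := BaerStarRing.exists_isLeftSupport (Subtype.val '' maxChain r)
  refine ⟨_, E, Set.forall_mem_image.2 fun e _ ↦ e.2, ?_, hE, fun e he hEe ↦ ?_⟩
  · rintro _ ⟨e, he, rfl⟩ _ ⟨f, hf, rfl⟩ hne
    exact (hmax.1 he hf (ne_of_apply_ne _ hne)).elim id r_symm
  · have orthogonal : ∀ f ∈ maxChain r, r f ⟨e, he⟩ := fun f hf ↦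
      (hE.mul_eq_zero_iff_star (Set.forall_mem_image.2 fun f _ ↦ (hP _ f.2).isSelfAdjoint)).1
        hEe f ⟨f, hf, rfl⟩
    have chain_insert : IsChain r (insert ⟨e, he⟩ (maxChain r)) :=
      hmax.1.insert fun f hf _ ↦ .inr (orthogonal f hf)
    have mem : ⟨e, he⟩ ∈ maxChain r := by
      rw [hmax.2 chain_insert (Set.subset_insert _ _)]
      exact Set.mem_insert _ _
    exact (hE.mul_eq_self ⟨_, mem, rfl⟩).symm.trans hEe

end Baer

end Supports

/-- The algebraic properties of a von Neumann algebra on which the comparison theory of its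
projections rests: suprema of projections, absolute values, and the fact that two families with
the same Gram matrix are related by left multiplication. Families are encoded as sets of pairs. -/
class ComparisonRing (R : Type*) [Ring R] [StarRing R] : Prop extends BaerStarRing R where
  exists_isSelfAdjoint_mul_self_eq : ∀ x : R, ∃ t, IsSelfAdjoint t ∧ t * t = star x * x
  exists_mul_fst_eq_snd : ∀ S : Set (R × R),
    (∀ p ∈ S, ∀ q ∈ S, star p.2 * q.2 = star p.1 * q.1) → ∃ v, ∀ p ∈ S, v * p.1 = p.2

section Equivalence

variable {R : Type*} [Ring R] [StarRing R] {ι : Type*} {S : Set ι} {A B J a e f p q v x : R}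

section Baer

variable [BaerStarRing R]

theorem mul_eq_self_of_star_mul_self_eq (hp : IsStarProjection p) (hv : star v * v = p) :
    v * p = v := by
  have h : (1 - p) * star v = 0 := mul_mul_star_self_eq_zero_iff.1 (by
    rw [star_star, hv, hp.one_sub_mul_self])
  simpa [hp.isSelfAdjoint.star_eq] using congrArg star (one_sub_mul_eq_zero_iff.1 h)

theorem isStarProjection_mul_star (hp : IsStarProjection p) (hv : star v * v = p) :
    IsStarProjection (v * star v) where
  isIdempotentElem := by
    rw [IsIdempotentElem, mul_assoc, ← mul_assoc (star v), hv, ← mul_assoc,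
      mul_eq_self_of_star_mul_self_eq hp hv]
  isSelfAdjoint := .mul_star_self v

theorem Equivalent.subequivalent : p ∼ q → p ≼ q
  | ⟨hp, hq, v, hvp, hvq⟩ => ⟨hp, hq, v, hvp, by
      rw [← hvq, mul_assoc, hvp, mul_eq_self_of_star_mul_self_eq hp hvp]⟩

theorem Subequivalent.exists_equivalent : p ≼ q → ∃ r, p ∼ r ∧ q * r = r
  | ⟨hp, _, v, hv, hqv⟩ =>
    ⟨v * star v, ⟨hp, isStarProjection_mul_star hp hv, v, hv, rfl⟩, by rw [← mul_assoc, hqv]⟩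

end Baer

variable [ComparisonRing R]

theorem equivalent_of_star_mul_eq {a b : ι → R}
    (h : ∀ i ∈ S, ∀ j ∈ S, star (b i) * b j = star (a i) * a j)
    (hA : IsLeftSupport (a '' S) A) (hB : IsLeftSupport (b '' S) B) : A ∼ B := by
  obtain ⟨v, hv⟩ := ComparisonRing.exists_mul_fst_eq_snd ((fun i ↦ (a i, b i)) '' S)
    (by simpa only [Set.forall_mem_image] using h)
  simp only [Set.forall_mem_image] at hv
  have compression_eq_zero : A * (star v * v - 1) * A = 0 :=
    hA.mul_mul_self_eq_zero (Set.forall_mem_image.2 fun i hi ↦ Set.forall_mem_image.2 fun j hj ↦ by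
      rw [mul_sub, mul_one, sub_mul, sub_eq_zero, ← h i hi j hj, ← hv hi, ← hv hj, star_mul]
      simp only [mul_assoc])
  have initial : star (v * A) * (v * A) = A := by
    rw [mul_sub, mul_one, sub_mul, hA.isIdempotentElem.eq, sub_eq_zero] at compression_eq_zero
    rw [star_mul, hA.isSelfAdjoint.star_eq, mul_assoc, ← mul_assoc _ v, ← mul_assoc,
      compression_eq_zero]
  refine ⟨hA.toIsStarProjection, hB.toIsStarProjection, v * A, initial,
    eq_of_forall_mul_eq_zero_iff (isStarProjection_mul_star hA.toIsStarProjection initial)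
      hB.toIsStarProjection fun y ↦ ?_⟩
  rw [mul_mul_star_self_eq_zero_iff, ← mul_assoc, hA.mul_eq_zero_iff, hB.mul_eq_zero_iff,
    Set.forall_mem_image, Set.forall_mem_image]
  exact forall₂_congr fun i hi ↦ by rw [mul_assoc, hv hi]

theorem subequivalent_of_pairwise_orthogonal {a b : ι → R} (h : ∀ i ∈ S, a i ≼ b i)
    (ha : S.Pairwise fun i j ↦ a i * a j = 0) (hb : S.Pairwise fun i j ↦ b i * b j = 0)
    (hA : IsLeftSupport (a '' S) A) (hB : IsLeftSupport (b '' S) B) : A ≼ B := by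
  classical
  choose! v hv hbv using fun i hi ↦ (h i hi).exists_partialIsometry
  obtain ⟨C, hC⟩ := BaerStarRing.exists_isLeftSupport (v '' S)
  have hAC : A ∼ C := by
    refine equivalent_of_star_mul_eq (fun i hi j hj ↦ ?_) hA hC
    rw [(h i hi).left.isSelfAdjoint.star_eq]
    obtain rfl | hij := eq_or_ne i j
    · rw [hv i hi, (h i hi).left.isIdempotentElem.eq]
    · rw [ha hi hj hij, ← hbv i hi, ← hbv j hj, star_mul, (h i hi).right.isSelfAdjoint.star_eq,
        mul_assoc, ← mul_assoc (b i), hb hi hj hij, zero_mul, mul_zero]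
  have hBC : B * C = C := hC.mul_eq_right (Set.forall_mem_image.2 fun i hi ↦ by
    rw [← hbv i hi, ← mul_assoc, hB.mul_eq_self ⟨i, hi, rfl⟩])
  exact hAC.subequivalent.trans (.of_le hC.toIsStarProjection hB.toIsStarProjection hBC)

theorem equivalent_leftSupport_star (he : IsLeftSupport {star x} e) (hf : IsLeftSupport {x} f) :
    e ∼ f := by
  obtain ⟨t, ht, htx⟩ := ComparisonRing.exists_isSelfAdjoint_mul_self_eq x
  have mul_eq_zero_iff (y : R) : y * star x = 0 ↔ y * t = 0 := by
    rw [← mul_mul_star_self_eq_zero_iff, star_star, ← htx, ← mul_mul_star_self_eq_zero_iff (y := t),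
      ht.star_eq]
  refine equivalent_of_star_mul_eq (S := {(t, x)}) (a := Prod.fst) (b := Prod.snd) ?_
    ⟨he.toIsStarProjection, fun y ↦ ?_⟩ (by rwa [Set.image_singleton])
  · rintro _ rfl _ rfl
    rw [ht.star_eq, htx]
  · simp [he.mul_eq_zero_iff, mul_eq_zero_iff]

/-- The parallelogram law: both sides are supports of `(1 - q) * p`. -/
theorem IsMeet.sub_equivalent_sub (h : IsMeet p q a) (hJ : IsLeftSupport {p, q} J)
    (hp : IsStarProjection p) (hq : IsStarProjection q) : p - a ∼ J - q := by
  have haS := h.isStarProjection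
  have hqJ : J * q = q := hJ.mul_eq_self (Set.mem_insert_of_mem _ rfl)
  refine equivalent_leftSupport_star (x := (1 - q) * p)
    ⟨haS.sub_of_mul_eq_right hp (h.mul_left hp), fun y ↦ ?_⟩
    ⟨hq.sub_of_mul_eq_right hJ.toIsStarProjection hqJ, fun y ↦ ?_⟩
  · have factor : p - a = p * (1 - a) := by rw [mul_sub, mul_one, h.mul_left hp]
    rw [factor, ← mul_assoc, h.mul_eq_zero_iff, Set.forall_mem_insert, mul_assoc,
      hp.mul_one_sub_self]
    simp [hp.isSelfAdjoint.star_eq, hq.isSelfAdjoint.star_eq, mul_assoc]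
  · have factor : J - q = (1 - q) * J := by
      rw [sub_mul, one_mul, mul_eq_left_of_mul_eq_right hq.isSelfAdjoint hJ.isSelfAdjoint hqJ]
    rw [factor, ← mul_assoc, hJ.mul_eq_zero_iff, Set.forall_mem_insert]
    simp [mul_assoc, hq.one_sub_mul_self]

end Equivalence

section Comparison

section CommonPart

variable {R : Type*} [Ring R] [StarRing R] {I : Type*} {p r : I → R} {z : R}

/-- Mutually equivalent subprojections `r i` of the members of a family `p` that are maximal: the
remainders `p i - r i` have no nonzero common part. -/
structure IsMaximalCommonPart (p r : I → R) : Prop where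
  mul_eq : ∀ i, p i * r i = r i
  subequivalent : ∀ i j, r i ≼ r j
  eq_zero : ∀ e, (∀ i, e ≼ p i - r i) → e = 0

namespace IsMaximalCommonPart

theorem isStarProjection_sub (h : IsMaximalCommonPart p r) (hp : ∀ i, IsStarProjection (p i))
    (i : I) : IsStarProjection (p i - r i) :=
  (h.subequivalent i i).left.sub_of_mul_eq_right (hp i) (h.mul_eq i)

theorem mul_sub_eq_zero (h : IsMaximalCommonPart p r) (hp : ∀ i, IsStarProjection (p i))
    (i : I) : r i * (p i - r i) = 0 := by
  have hr := (h.subequivalent i i).left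
  rw [mul_sub, hr.isIdempotentElem.eq,
    mul_eq_left_of_mul_eq_right hr.isSelfAdjoint (hp i).isSelfAdjoint (h.mul_eq i), sub_self]

theorem cut (h : IsMaximalCommonPart p r) (hp : ∀ i, IsStarProjection (p i))
    (hz : IsCentralProjection z) : IsMaximalCommonPart (z * p ·) (z * r ·) where
  mul_eq i := by rw [hz.mul_mul_mul, h.mul_eq]
  subequivalent i j := (h.subequivalent i j).cut hz
  eq_zero e he := h.eq_zero e fun i ↦ (he i).trans <| by
    rw [← mul_sub]
    exact .cut_self hz (h.isStarProjection_sub hp i)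

end IsMaximalCommonPart

end CommonPart

variable {R : Type*} [Ring R] [StarRing R] [ComparisonRing R] {p q : R}

theorem mul_mul_eq_zero_of_forall_subequivalent (hp : IsStarProjection p)
    (hq : IsStarProjection q) (h : ∀ e, e ≼ p → e ≼ q → e = 0) (x : R) : q * x * p = 0 := by
  obtain ⟨e, he⟩ := BaerStarRing.exists_isLeftSupport {star (q * x * p)}
  obtain ⟨f, hf⟩ := BaerStarRing.exists_isLeftSupport {q * x * p}
  have hef : e ∼ f := equivalent_leftSupport_star he hf
  have hpe : p * e = e := he.mul_eq_right fun s hs ↦ by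
    rw [Set.mem_singleton_iff.1 hs, star_mul, hp.isSelfAdjoint.star_eq, ← mul_assoc,
      hp.isIdempotentElem.eq]
  have hqf : q * f = f := hf.mul_eq_right fun s hs ↦ by
    rw [Set.mem_singleton_iff.1 hs, ← mul_assoc, ← mul_assoc, hq.isIdempotentElem.eq]
  have e_eq_zero : e = 0 := h e (.of_le hef.left hp hpe)
    (hef.subequivalent.trans (.of_le hef.right hq hqf))
  rw [← star_eq_zero, ← he.mul_eq_self (Set.mem_singleton _), e_eq_zero, zero_mul]

theorem exists_isMaximalCommonPart {I : Type*} [Nonempty I] {p : I → R}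
    (hp : ∀ i, IsStarProjection (p i)) :
    ∃ r, IsMaximalCommonPart p r := by
  obtain ⟨S, r, hS, orthogonal, hr, maximal⟩ := exists_maximal_orthogonal
    (fun e : I → R ↦ (∀ i, p i * e i = e i) ∧ ∀ i j, e i ≼ e j)
    fun e he ↦ isStarProjection_pi_iff.2 fun i ↦ (he.2 i i).left
  have le (i) : p i * r i = r i :=
    (hr.apply i).mul_eq_right (Set.forall_mem_image.2 fun e he ↦ (hS e he).1 i)
  have pairwise (i) : S.Pairwise fun e f ↦ e i * f i = 0 :=
    orthogonal.imp fun _ _ h ↦ congr_fun h i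
  refine ⟨r, le, fun i j ↦ subequivalent_of_pairwise_orthogonal (fun e he ↦ (hS e he).2 i j)
    (pairwise i) (pairwise j) (hr.apply i) (hr.apply j), fun e he ↦ ?_⟩
  choose f hef hf using fun i ↦ (he i).exists_equivalent
  have hpf (i) : p i * f i = f i := by
    rw [← hf, ← mul_assoc, mul_sub, (hp i).isIdempotentElem.eq, le]
  have hrf : r * f = 0 := funext fun i ↦ by
    have hr := (hr.apply i).toIsStarProjection
    have hrp := mul_eq_left_of_mul_eq_right hr.isSelfAdjoint (hp i).isSelfAdjoint (le i)
    rw [Pi.mul_apply, ← hf, ← mul_assoc, mul_sub, hrp, hr.isIdempotentElem.eq, sub_self,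
      zero_mul, Pi.zero_apply]
  have f_eq_zero : f = 0 :=
    maximal f ⟨hpf, fun i j ↦ (hef i).symm.subequivalent.trans (hef j).subequivalent⟩ hrf
  inhabit I
  exact (congr_fun f_eq_zero default ▸ (hef default).subequivalent).eq_zero

theorem exists_central_comparison (hp : IsStarProjection p) (hq : IsStarProjection q) :
    ∃ z, IsCentralProjection z ∧ z * p ≼ z * q ∧ (1 - z) * q ≼ (1 - z) * p := by
  obtain ⟨r, hr⟩ := exists_isMaximalCommonPart (p := fun i : Bool ↦ cond i p q)
    (Bool.forall_bool.2 ⟨hq, hp⟩)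
  obtain ⟨hrq, hrp⟩ := Bool.forall_bool.1 hr.mul_eq
  have hrp' := (hr.subequivalent true true).left
  have hrq' := (hr.subequivalent false false).left
  have disjoint (x : R) : (p - r true) * x * (q - r false) = 0 :=
    mul_mul_eq_zero_of_forall_subequivalent (hrq'.sub_of_mul_eq_right hq hrq)
      (hrp'.sub_of_mul_eq_right hp hrp)
      (fun e heq hep ↦ hr.eq_zero e (Bool.forall_bool.2 ⟨heq, hep⟩)) x
  obtain ⟨z, hz, mul_eq_zero_iff⟩ := exists_centralSupport (q - r false)
  have hzp : z * p = z * r true := by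
    rw [← sub_eq_zero, ← mul_sub, (hz.commute _).eq, mul_eq_zero_iff]
    exact disjoint
  have hzq : (1 - z) * q = (1 - z) * r false := by
    rw [← sub_eq_zero, ← mul_sub]
    simpa using (mul_eq_zero_iff _).1 hz.one_sub_mul_self 1
  refine ⟨z, hz, ?_, ?_⟩
  · rw [hzp]
    exact ((hr.subequivalent true false).trans (.of_le hrq' hq hrq)).cut hz
  · rw [hzq]
    exact ((hr.subequivalent false true).trans (.of_le hrp' hp hrp)).cut hz.one_sub

theorem exists_greatest_central_subequivalent (hp : IsStarProjection p)
    (hq : IsStarProjection q) : ∃ v, IsCentralProjection v ∧ v * p ≼ v * q ∧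
      ∀ y, IsCentralProjection y → y * p ≼ y * q → v * y = y := by
  obtain ⟨S, v, hS, orthogonal, hv, maximal⟩ := exists_maximal_orthogonal
    (fun y : R ↦ IsCentralProjection y ∧ y * p ≼ y * q) fun y hy ↦ hy.1.toIsStarProjection
  have hS_central := fun y hy ↦ (hS y hy).1
  have hv_central := hv.isCentralProjection hS_central
  have pairwise_mul (x : R) : S.Pairwise fun y y' ↦ y * x * (y' * x) = 0 :=
    fun y hy y' hy' hne ↦ by
      change y * x * (y' * x) = 0
      rw [mul_assoc, (hS_central y' hy').left_comm, ← mul_assoc, orthogonal hy hy' hne, zero_mul]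
  refine ⟨v, hv_central, subequivalent_of_pairwise_orthogonal (fun y hy ↦ (hS y hy).2)
    (pairwise_mul p) (pairwise_mul q) (hv.image_mul_right hS_central hp)
    (hv.image_mul_right hS_central hq), fun y hy hpq ↦ ?_⟩
  refine one_sub_mul_eq_zero_iff.1 (maximal _ ⟨hv_central.one_sub.mul hy, ?_⟩ ?_)
  · simpa only [mul_assoc] using hpq.cut hv_central.one_sub
  · rw [← mul_assoc, hv_central.mul_one_sub_self, zero_mul]

end Comparison

section Infinite

variable {R : Type*} [Ring R] [StarRing R] {a b f g r s t z : R}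

/-- A projection `f` that is zero or properly infinite: two orthogonal copies of `f` fit in `f`. -/
def IsProperlyInfinite (f : R) : Prop :=
  ∃ p q, p * q = 0 ∧ f ≼ p ∧ f ≼ q ∧ p + q ≼ f

/-- A finite projection, i.e. one without nonzero properly infinite subprojections. -/
def IsFinite (r : R) : Prop := ∀ f, IsProperlyInfinite f → f ≼ r → f = 0

theorem IsFinite.of_subequivalent (hr : IsFinite r) (h : s ≼ r) : IsFinite s :=
  fun f hf hfs ↦ hr f hf (hfs.trans h)

namespace IsProperlyInfinite

theorem isStarProjection : IsProperlyInfinite f → IsStarProjection f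
  | ⟨_, _, _, hfp, _⟩ => hfp.left

theorem cut (hf : IsProperlyInfinite f) (hz : IsCentralProjection z) :
    IsProperlyInfinite (z * f) := by
  obtain ⟨p, q, hpq, hfp, hfq, hadd⟩ := hf
  exact ⟨z * p, z * q, by rw [hz.mul_mul_mul, hpq, mul_zero], hfp.cut hz, hfq.cut hz,
    by simpa only [mul_add] using hadd.cut hz⟩

theorem add_subequivalent (hf : IsProperlyInfinite f) (ha : a ≼ f) (hb : b ≼ f)
    (hab : a * b = 0) : a + b ≼ f := by
  obtain ⟨p, q, hpq, hfp, hfq, hadd⟩ := hf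
  exact ((ha.trans hfp).add (hb.trans hfq) hab hpq).trans hadd

theorem congr (hf : IsProperlyInfinite f) (hfg : f ≼ g) (hgf : g ≼ f) :
    IsProperlyInfinite g := by
  obtain ⟨p, q, hpq, hfp, hfq, hadd⟩ := hf
  exact ⟨p, q, hpq, hgf.trans hfp, hgf.trans hfq, hadd.trans hfg⟩

theorem exists_halves [BaerStarRing R] (hf : IsProperlyInfinite f) :
    ∃ p q, f * p = p ∧ f * q = q ∧ p * q = 0 ∧ f ≼ p ∧ f ≼ q := by
  obtain ⟨p, q, hpq, hfp, hfq, -, -, v, hv, hfv⟩ := hf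
  have hqp : q * p = 0 := mul_eq_zero_symm hfp.right.isSelfAdjoint hfq.right.isSelfAdjoint hpq
  have copy {e : R} (he : IsStarProjection e) (hpe : (p + q) * e = e) : e ≼ v * e * star v := by
    have initial : star (v * e) * (v * e) = e := by
      rw [star_mul, he.isSelfAdjoint.star_eq, mul_assoc, ← mul_assoc (star v), hv, hpe,
        he.isIdempotentElem.eq]
    have final : v * e * star (v * e) = v * e * star v := by
      rw [star_mul, he.isSelfAdjoint.star_eq, ← mul_assoc, mul_assoc v, he.isIdempotentElem.eq]
    exact Equivalent.subequivalent
      ⟨he, final ▸ isStarProjection_mul_star he initial, v * e, initial, final⟩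
  refine ⟨v * p * star v, v * q * star v, ?_, ?_, ?_, hfp.trans (copy hfp.right ?_),
    hfq.trans (copy hfq.right ?_)⟩
  · rw [← mul_assoc, ← mul_assoc, hfv]
  · rw [← mul_assoc, ← mul_assoc, hfv]
  · calc v * p * star v * (v * q * star v) = v * p * (star v * v) * q * star v := by
          simp only [mul_assoc]
      _ = 0 := by simp [hv, mul_add, mul_assoc, hpq]
  · rw [add_mul, hfp.right.isIdempotentElem.eq, hqp, add_zero]
  · rw [add_mul, hfq.right.isIdempotentElem.eq, hpq, zero_add]

theorem add_subequivalent_left [BaerStarRing R] (hf : IsProperlyInfinite f) (hfs : f ≼ s)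
    (htf : t ≼ f) (hst : s * t = 0) : s + t ≼ s := by
  obtain ⟨g, hfg, hsg⟩ := hfs.exists_equivalent
  have hg := hf.congr hfg.subequivalent hfg.symm.subequivalent
  have hs := hfs.right
  have hgs : g * s = g :=
    mul_eq_left_of_mul_eq_right hfg.right.isSelfAdjoint hs.isSelfAdjoint hsg
  have hgt : g * t = 0 := by rw [← hgs, mul_assoc, hst, mul_zero]
  have hsub : (s - g) * g = 0 := by
    rw [sub_mul, hsg, hfg.right.isIdempotentElem.eq, sub_self]
  have orthogonal : (s - g) * (g + t) = 0 := by
    rw [mul_add, hsub, sub_mul, hst, hgt, sub_self, add_zero]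
  have absorb : g + t ≼ g :=
    hg.add_subequivalent (.refl hfg.right) (htf.trans hfg.subequivalent) hgt
  simpa only [← add_assoc, sub_add_cancel] using
    (Subequivalent.refl (hfg.right.sub_of_mul_eq_right hs hsg)).add absorb orthogonal hsub

end IsProperlyInfinite

variable [ComparisonRing R]

theorem isProperlyInfinite_of_leftSupport {S : Set R} (hS : ∀ g ∈ S, IsProperlyInfinite g)
    (orthogonal : S.Pairwise fun g g' ↦ g * g' = 0) (hf : IsLeftSupport S f) :
    IsProperlyInfinite f := by
  choose! p q hp hq hpq hgp hgq using fun g hg ↦ (hS g hg).exists_halves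
  have mul_eq_zero {x y : R → R} (hx : ∀ g ∈ S, x g * g = x g) (hy : ∀ g ∈ S, g * y g = y g) :
      S.Pairwise fun g g' ↦ x g * y g' = 0 := fun g hg g' hg' hne ↦ by
    change x g * y g' = 0
    rw [← hx g hg, ← hy g' hg', mul_assoc, ← mul_assoc g, orthogonal hg hg' hne, zero_mul, mul_zero]
  have hp' : ∀ g ∈ S, p g * g = p g := fun g hg ↦ mul_eq_left_of_mul_eq_right
    (hgp g hg).right.isSelfAdjoint (hgp g hg).left.isSelfAdjoint (hp g hg)
  have hq' : ∀ g ∈ S, q g * g = q g := fun g hg ↦ mul_eq_left_of_mul_eq_right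
    (hgq g hg).right.isSelfAdjoint (hgq g hg).left.isSelfAdjoint (hq g hg)
  obtain ⟨P, hP⟩ := BaerStarRing.exists_isLeftSupport (p '' S)
  obtain ⟨Q, hQ⟩ := BaerStarRing.exists_isLeftSupport (q '' S)
  have hPQ : P * Q = 0 := by
    refine hP.mul_eq_zero hQ (Set.forall_mem_image.2 fun g hg ↦ (hgp g hg).right.isSelfAdjoint)
      (Set.forall_mem_image.2 fun g hg ↦ Set.forall_mem_image.2 fun g' hg' ↦ ?_)
    obtain rfl | hne := eq_or_ne g g'
    · exact hpq g hg
    · exact mul_eq_zero hp' hq hg hg' hne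
  have hf' : IsLeftSupport (id '' S) f := by rwa [Set.image_id]
  have le {x : R → R} {X : R} (hX : IsLeftSupport (x '' S) X) (hx : ∀ g ∈ S, g * x g = x g) :
      f * X = X := hX.mul_eq_right (Set.forall_mem_image.2 fun g hg ↦ by
    rw [← hx g hg, ← mul_assoc, hf.mul_eq_self hg])
  refine ⟨P, Q, hPQ, ?_, ?_, .of_le (hP.add hQ.toIsStarProjection hPQ) hf.toIsStarProjection ?_⟩
  · exact subequivalent_of_pairwise_orthogonal hgp orthogonal (mul_eq_zero hp' hp) hf' hP
  · exact subequivalent_of_pairwise_orthogonal hgq orthogonal (mul_eq_zero hq' hq) hf' hQ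
  · rw [mul_add, le hP hp, le hQ hq]

theorem exists_central_finite_decomposition (hr : IsStarProjection r) :
    ∃ z, IsCentralProjection z ∧ IsProperlyInfinite (z * r) ∧ IsFinite ((1 - z) * r) := by
  obtain ⟨S, f, hS, orthogonal, hfS, maximal⟩ := exists_maximal_orthogonal
    (fun f ↦ IsProperlyInfinite f ∧ r * f = f) fun f hf ↦ hf.1.isStarProjection
  have hf : IsProperlyInfinite f :=
    isProperlyInfinite_of_leftSupport (fun g hg ↦ (hS g hg).1) orthogonal hfS
  have hrf : r * f = f := hfS.mul_eq_right fun g hg ↦ (hS g hg).2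
  have hfr : f * r = f := mul_eq_left_of_mul_eq_right hfS.isSelfAdjoint hr.isSelfAdjoint hrf
  have hrest : IsStarProjection (r - f) := hfS.sub_of_mul_eq_right hr hrf
  have finite_rest : IsFinite (r - f) := fun g hg hgr ↦ by
    obtain ⟨g', hgg', hg'⟩ := hgr.exists_equivalent
    have hrg' : r * g' = g' := by
      rw [← hg', ← mul_assoc, mul_sub, hr.isIdempotentElem.eq, hrf]
    have hfg' : f * g' = 0 := by
      rw [← hg', ← mul_assoc, mul_sub, hfr, hfS.isIdempotentElem.eq, sub_self, zero_mul]
    have g'_eq_zero : g' = 0 :=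
      maximal g' ⟨hg.congr hgg'.subequivalent hgg'.symm.subequivalent, hrg'⟩ hfg'
    exact (g'_eq_zero ▸ hgg'.subequivalent).eq_zero
  obtain ⟨z, hz, rest_le, le_rest⟩ := exists_central_comparison hrest hfS.toIsStarProjection
  refine ⟨z, hz, (hf.cut hz).congr (.cut hz (.of_le hfS.toIsStarProjection hr hrf)) ?_, ?_⟩
  · have orth : z * (r - f) * (z * f) = 0 := by
      rw [hz.mul_mul_mul, sub_mul, hrf, hfS.isIdempotentElem.eq, sub_self, mul_zero]
    simpa only [← mul_add, sub_add_cancel] using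
      (hf.cut hz).add_subequivalent rest_le (.refl rest_le.right) orth
  · have cut_f_eq_zero : (1 - z) * f = 0 :=
      finite_rest _ (hf.cut hz.one_sub) (le_rest.trans (.cut_self hz.one_sub hrest))
    have cut_r : (1 - z) * r = (1 - z) * (r - f) := by rw [mul_sub, cut_f_eq_zero, sub_zero]
    exact cut_r ▸ finite_rest.of_subequivalent (.cut_self hz.one_sub hrest)

theorem IsProperlyInfinite.exists_central_subequivalent (hf : IsProperlyInfinite f)
    (hg : IsStarProjection g) (hfg : f * g = g) :
    ∃ z, IsCentralProjection z ∧ z * f ≼ z * g ∧ (1 - z) * f ≼ (1 - z) * (f - g) := by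
  obtain ⟨p, q, hfp, hfq, hpq, hp, hq⟩ := hf.exists_halves
  obtain ⟨a, ha⟩ := exists_isMeet p g
  obtain ⟨J, hJ⟩ := BaerStarRing.exists_isLeftSupport {p, g}
  have hpa : p * a = a := ha.mul_left hp.right
  have hga : g * a = a := ha.mul_right hg
  have hfJ : f * J = J := hJ.mul_eq_right (by simp [hfp, hfg])
  have hJf : J * f = J :=
    mul_eq_left_of_mul_eq_right hJ.isSelfAdjoint hp.left.isSelfAdjoint hfJ
  have p_sub : p - a ∼ J - g := ha.sub_equivalent_sub hJ hp.right hg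
  have g_sub : g - a ∼ J - p := ha.symm.sub_equivalent_sub (by rwa [Set.pair_comm]) hg hp.right
  have q_le : q ≼ f - p := .of_le hq.right (hp.right.sub_of_mul_eq_right hp.left hfp)
    (by rw [sub_mul, hfq, hpq, sub_zero])
  have rest {x : R} (hx : IsStarProjection x) (hJx : J * x = x) :
      (f - x) * (f - J) = f - J := by
    have hxJ : x * J = x := mul_eq_left_of_mul_eq_right hx.isSelfAdjoint hJ.isSelfAdjoint hJx
    have hxf : x * f = x := by rw [← hxJ, mul_assoc, hJf]
    rw [sub_mul, mul_sub, mul_sub, hp.left.isIdempotentElem.eq, hfJ, hxf, hxJ, sub_self, sub_zero]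
  obtain ⟨z, hz, hpg, hgp⟩ := exists_central_comparison p_sub.left g_sub.left
  refine ⟨z, hz, (hp.cut hz).trans (.cut_of_cut_sub hz ha.isStarProjection hpa hga hpg), ?_⟩
  refine ((hq.trans q_le).cut hz.one_sub).trans (.cut_of_cut_sub (a := f - J) hz.one_sub
    (hJ.sub_of_mul_eq_right hp.left hfJ) (rest hp.right (hJ.mul_eq_self (by simp)))
    (rest hg (hJ.mul_eq_self (by simp))) ?_)
  rw [sub_sub_sub_cancel_left, sub_sub_sub_cancel_left]
  exact ((g_sub.symm.subequivalent.cut hz.one_sub).trans hgp).trans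
    (p_sub.subequivalent.cut hz.one_sub)

end Infinite

section Shift

variable {R : Type*} [Ring R] [StarRing R] {u x δ : R}

/-- The shift argument: the ranges of `u`, `δ * u`, `δ * δ * u`, … are pairwise orthogonal. -/
theorem star_pow_mul_mul_pow_mul (hδ : star δ * δ = x) (hxδ : x * δ = δ) (hxu : x * u = u)
    (hδu : star δ * u = 0) (m n : ℕ) :
    star (δ ^ m * u) * (δ ^ n * u) = if m = n then star u * u else 0 := by
  have mul_self (n : ℕ) : x * (δ ^ n * u) = δ ^ n * u := by
    cases n with
    | zero => rw [pow_zero, one_mul, hxu]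
    | succ n => rw [pow_succ', mul_assoc, ← mul_assoc, hxδ]
  have star_mul_succ (n : ℕ) : star δ * (δ ^ (n + 1) * u) = δ ^ n * u := by
    rw [pow_succ', mul_assoc, ← mul_assoc, hδ, mul_self]
  have succ (m : ℕ) (w : R) : star (δ ^ (m + 1) * u) * w = star (δ ^ m * u) * (star δ * w) := by
    rw [pow_succ', mul_assoc, star_mul, mul_assoc]
  have zero_succ (n : ℕ) : star (δ ^ 0 * u) * (δ ^ (n + 1) * u) = 0 := by
    rw [pow_succ', mul_assoc, ← mul_assoc, pow_zero, one_mul, ← star_star δ, ← star_mul, hδu,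
      star_zero, zero_mul]
  induction m generalizing n with
  | zero =>
    cases n with
    | zero => rw [if_pos rfl, pow_zero, one_mul]
    | succ n => rw [if_neg n.succ_ne_zero.symm, zero_succ]
  | succ m ih =>
    cases n with
    | zero => rw [if_neg m.succ_ne_zero, succ, pow_zero, one_mul, hδu, mul_zero]
    | succ n => rw [succ, star_mul_succ, ih]; simp only [Nat.add_right_cancel_iff]

end Shift

section FiniteCancellation

variable {R : Type*} [Ring R] [StarRing R] [ComparisonRing R] {f r r' s t x y : R}

theorem isProperlyInfinite_of_sequence {e : ℕ → R} (orthogonal : Pairwise fun m n ↦ e m * e n = 0)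
    (he : ∀ m n, e m ≼ e n) (hf : IsLeftSupport (Set.range e) f) : IsProperlyInfinite f := by
  rw [← Set.image_univ] at hf
  have subequivalent_support (φ : ℕ → ℕ) (hφ : φ.Injective) {p : R}
      (hp : IsLeftSupport ((e ∘ φ) '' .univ) p) : f ≼ p :=
    subequivalent_of_pairwise_orthogonal (fun n _ ↦ he n (φ n)) (fun _ _ _ _ h ↦ orthogonal h)
      (fun _ _ _ _ h ↦ orthogonal (hφ.ne h)) hf hp
  have mul_support (φ : ℕ → ℕ) {p : R} (hp : IsLeftSupport ((e ∘ φ) '' .univ) p) : f * p = p :=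
    hp.mul_eq_right (Set.forall_mem_image.2 fun n _ ↦ hf.mul_eq_self ⟨φ n, trivial, rfl⟩)
  obtain ⟨p, hp⟩ := BaerStarRing.exists_isLeftSupport ((e ∘ (2 * ·)) '' .univ)
  obtain ⟨q, hq⟩ := BaerStarRing.exists_isLeftSupport ((e ∘ (2 * · + 1)) '' .univ)
  have hpq : p * q = 0 := hp.mul_eq_zero hq
    (Set.forall_mem_image.2 fun n _ ↦ (he 0 (2 * n)).right.isSelfAdjoint)
    (Set.forall_mem_image.2 fun m _ ↦ Set.forall_mem_image.2 fun n _ ↦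
      orthogonal (show 2 * m ≠ 2 * n + 1 by omega))
  exact ⟨p, q, hpq, subequivalent_support _ (fun _ _ h ↦ by simpa using h) hp,
    subequivalent_support _ (fun _ _ h ↦ by simpa using h) hq,
    .of_le (hp.add hq.toIsStarProjection hpq) hf.toIsStarProjection
      (by rw [mul_add, mul_support _ hp, mul_support _ hq])⟩

theorem exists_isProperlyInfinite_of_isometries {w : ℕ → R} (ht : IsStarProjection t)
    (hx : IsStarProjection x)
    (hw : ∀ m n, star (w m) * w n = if m = n then t else 0) (hxw : ∀ n, x * w n = w n) :
    ∃ f, IsProperlyInfinite f ∧ f ≼ x ∧ t ≼ f := by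
  have initial (n : ℕ) : star (w n) * w n = t := by rw [hw, if_pos rfl]
  have equivalent (n : ℕ) : t ∼ w n * star (w n) :=
    ⟨ht, isStarProjection_mul_star ht (initial n), w n, initial n, rfl⟩
  obtain ⟨f, hf⟩ := BaerStarRing.exists_isLeftSupport (Set.range fun n ↦ w n * star (w n))
  refine ⟨f, isProperlyInfinite_of_sequence (fun m n hmn ↦ ?_) (fun m n ↦ ?_) hf,
    .of_le hf.toIsStarProjection hx (hf.mul_eq_right ?_), ?_⟩
  · change w m * star (w m) * (w n * star (w n)) = 0
    rw [mul_assoc, ← mul_assoc (star _), hw, if_neg hmn, zero_mul, mul_zero]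
  · exact (equivalent m).symm.subequivalent.trans (equivalent n).subequivalent
  · exact Set.forall_mem_range.2 fun n ↦ by rw [← mul_assoc, hxw]
  · exact (equivalent 0).subequivalent.trans
      (.of_le (equivalent 0).right hf.toIsStarProjection (hf.mul_eq_self ⟨0, rfl⟩))

theorem exists_isProperlyInfinite_of_add_subequivalent (ht : IsStarProjection t)
    (hyt : y * t = 0) (hxy : x ≼ y) (hyx : y + t ≼ x) :
    ∃ f, IsProperlyInfinite f ∧ f ≼ x ∧ t ≼ f := by
  obtain ⟨hx, hy, β, hβ, hyβ⟩ := hxy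
  obtain ⟨-, -, γ, hγ, hxγ⟩ := hyx
  have hty : t * y = 0 := mul_eq_zero_symm hy.isSelfAdjoint ht.isSelfAdjoint hyt
  have add_mul_β : (y + t) * β = β := by
    rw [add_mul, hyβ, ← hyβ, ← mul_assoc t, hty, zero_mul, add_zero]
  have add_mul_t : (y + t) * t = t := by rw [add_mul, hyt, ht.isIdempotentElem.eq, zero_add]
  have δ_isometry : star (γ * β) * (γ * β) = x := by
    rw [star_mul, mul_assoc, ← mul_assoc (star γ), hγ, add_mul_β, hβ]
  have u_isometry : star (γ * t) * (γ * t) = t := by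
    rw [star_mul, mul_assoc, ← mul_assoc (star γ), hγ, add_mul_t, ht.isSelfAdjoint.star_eq,
      ht.isIdempotentElem.eq]
  have orthogonal : star (γ * β) * (γ * t) = 0 := by
    rw [star_mul, mul_assoc, ← mul_assoc (star γ), hγ, add_mul_t, ← hyβ, star_mul,
      hy.isSelfAdjoint.star_eq, mul_assoc, hyt, mul_zero]
  have hxδ : x * (γ * β) = γ * β := by rw [← mul_assoc, hxγ]
  have hxu : x * (γ * t) = γ * t := by rw [← mul_assoc, hxγ]
  refine exists_isProperlyInfinite_of_isometries (w := fun n ↦ (γ * β) ^ n * (γ * t)) ht hx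
    (fun m n ↦ ?_) (fun n ↦ ?_)
  · rw [star_pow_mul_mul_pow_mul δ_isometry hxδ hxu orthogonal, u_isometry]
  · cases n with
    | zero => rw [pow_zero, one_mul, hxu]
    | succ n => rw [pow_succ', mul_assoc, ← mul_assoc, hxδ]

theorem IsProperlyInfinite.subequivalent_of_add (hf : IsProperlyInfinite f)
    (hfrs : f ≼ r + s) (hr : IsFinite r) (hr' : IsStarProjection r) (hs : IsStarProjection s)
    (hrs : r * s = 0) : f ≼ s := by
  obtain ⟨g, hfg, hg⟩ := hfrs.exists_equivalent
  have hg_inf := hf.congr hfg.subequivalent hfg.symm.subequivalent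
  obtain ⟨a, ha⟩ := exists_isMeet g s
  obtain ⟨J, hJ⟩ := BaerStarRing.exists_isLeftSupport {g, s}
  have add_mul_J : (r + s) * J = J := hJ.mul_eq_right <| by
    refine Set.forall_mem_insert.2 ⟨hg, fun x hx ↦ ?_⟩
    rw [Set.mem_singleton_iff.1 hx, add_mul, hrs, zero_add, hs.isIdempotentElem.eq]
  have hsJ : s * J = s := mul_eq_left_of_mul_eq_right hs.isSelfAdjoint hJ.isSelfAdjoint
    (hJ.mul_eq_self (by simp))
  have sub_equivalent : g - a ∼ J - s := ha.sub_equivalent_sub hJ hfg.right hs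
  have sub_le : J - s ≼ r := by
    have hrJ : r * J = J - s := by rw [eq_sub_iff_add_eq, ← hsJ, ← add_mul, add_mul_J]
    exact .of_le sub_equivalent.right hr' (by rw [mul_sub, hrs, sub_zero, hrJ])
  have g_sub_le : g - a ≼ r := sub_equivalent.subequivalent.trans sub_le
  obtain ⟨z, hz, le_meet, le_sub⟩ :=
    hg_inf.exists_central_subequivalent ha.isStarProjection (ha.mul_left hfg.right)
  have finite_part_eq_zero : (1 - z) * g = 0 := hr _ (hg_inf.cut hz.one_sub)
    (le_sub.trans ((Subequivalent.cut_self hz.one_sub g_sub_le.left).trans g_sub_le))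
  have g_eq : z * g = g := by simpa [finite_part_eq_zero] using mul_add_one_sub_mul z g
  have g_le_meet : g ≼ a := (g_eq ▸ le_meet).trans (.cut_self hz ha.isStarProjection)
  exact hfg.subequivalent.trans
    (g_le_meet.trans (.of_le ha.isStarProjection hs (ha.mul_right hs)))

theorem IsFinite.subequivalent_of_subequivalent (hr : IsFinite r) (hrr' : r ≼ r')
    (ht : IsStarProjection t) (hr't : r' * t = 0) (hrs : r * s = 0) (h : r' + t ≼ r + s)
    (hst : s ≼ t) : t ≼ s := by
  obtain ⟨s', hss', hts'⟩ := hst.exists_equivalent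
  have hs' := hss'.right
  have ht' : IsStarProjection (t - s') := hs'.sub_of_mul_eq_right ht hts'
  have hr's' : r' * s' = 0 := by rw [← hts', ← mul_assoc, hr't, zero_mul]
  have hs't' : s' * (t - s') = 0 := by
    rw [mul_sub, hs'.isIdempotentElem.eq,
      mul_eq_left_of_mul_eq_right hs'.isSelfAdjoint ht.isSelfAdjoint hts', sub_self]
  have le_shift : r + s ≼ r' + s' := hrr'.add hss'.subequivalent hrs hr's'
  obtain ⟨f, hf, hfrs, ht'f⟩ := exists_isProperlyInfinite_of_add_subequivalent ht'
    (by rw [add_mul, mul_sub, hr't, hr's', hs't', sub_zero, add_zero]) le_shift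
    (by rwa [add_assoc, add_sub_cancel])
  have hfs' : f ≼ s' :=
    (hf.subequivalent_of_add hfrs hr hrr'.left hst.left hrs).trans hss'.subequivalent
  have hts : t ≼ s' := by
    simpa only [add_sub_cancel] using hf.add_subequivalent_left hfs' ht'f hs't'
  exact hts.trans hss'.symm.subequivalent

theorem IsFinite.cancel_left (hr : IsFinite r) (hrr' : r ≼ r') (hs : IsStarProjection s)
    (ht : IsStarProjection t) (hr't : r' * t = 0) (hrs : r * s = 0) (h : r' + t ≼ r + s) :
    t ≼ s := by
  obtain ⟨z, hz, hts, hst⟩ := exists_central_comparison ht hs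
  refine .glue hz hts (IsFinite.subequivalent_of_subequivalent (r := (1 - z) * r)
    (r' := (1 - z) * r') ?_ (hrr'.cut hz.one_sub) hst.right ?_ ?_ ?_ hst)
  · exact hr.of_subequivalent (.cut_self hz.one_sub hrr'.left)
  · rw [hz.one_sub.mul_mul_mul, hr't, mul_zero]
  · rw [hz.one_sub.mul_mul_mul, hrs, mul_zero]
  · simpa only [mul_add] using h.cut hz.one_sub

end FiniteCancellation

section Infimum

variable {R : Type*} [Ring R] [StarRing R] [ComparisonRing R] {I : Type*} {p r : I → R} {b : R}

namespace IsMaximalCommonPart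

theorem subequivalent_of_isFinite_of_subequivalent (h : IsMaximalCommonPart p r)
    (hp : ∀ i, IsStarProjection (p i)) (hb : ∀ i, b ≼ p i) {i : I} (hr : IsFinite (r i))
    (hrb : r i ≼ b) : b ≼ r i := by
  obtain ⟨r', hrr', hbr'⟩ := hrb.exists_equivalent
  have hrest : IsStarProjection (b - r') := hrr'.right.sub_of_mul_eq_right hrb.right hbr'
  have orthogonal : r' * (b - r') = 0 := by
    rw [mul_sub, hrr'.right.isIdempotentElem.eq, mul_eq_left_of_mul_eq_right
      hrr'.right.isSelfAdjoint hrb.right.isSelfAdjoint hbr', sub_self]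
  have rest_eq_zero : b - r' = 0 := h.eq_zero _ fun j ↦
    (hr.of_subequivalent (h.subequivalent j i)).cancel_left
      ((h.subequivalent j i).trans hrr'.subequivalent) (h.isStarProjection_sub hp j) hrest
      orthogonal (h.mul_sub_eq_zero hp j) (by simpa only [add_sub_cancel] using hb j)
  exact sub_eq_zero.1 rest_eq_zero ▸ hrr'.symm.subequivalent

theorem subequivalent_of_isFinite (h : IsMaximalCommonPart p r)
    (hp : ∀ i, IsStarProjection (p i)) (hb : ∀ i, b ≼ p i) {i : I} (hr : IsFinite (r i)) :
    b ≼ r i := by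
  have hri := (h.subequivalent i i).left
  obtain ⟨z, hz, hbr, hrb⟩ := exists_central_comparison (hb i).left hri
  exact .glue hz hbr <| (h.cut hp hz.one_sub).subequivalent_of_isFinite_of_subequivalent
    (fun j ↦ hz.one_sub.mul_isStarProjection (hp j)) (fun j ↦ (hb j).cut hz.one_sub)
    (hr.of_subequivalent (.cut_self hz.one_sub hri)) hrb

theorem subequivalent_of_isProperlyInfinite (h : IsMaximalCommonPart p r)
    (hp : ∀ i, IsStarProjection (p i)) (hb : ∀ i, b ≼ p i)
    (hr : ∀ i, IsProperlyInfinite (r i)) (i : I) : b ≼ r i := by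
  obtain ⟨v, hv, hbr, greatest⟩ :=
    exists_greatest_central_subequivalent (hb i).left (hr i).isStarProjection
  have absorb {y : R} (hy : IsCentralProjection y) {j : I} (hsr : y * (p j - r j) ≼ y * r j) :
      v * y = y := by
    refine greatest y hy (((hb j).cut hy).trans (.trans ?_ ((h.subequivalent j i).cut hy)))
    simpa only [← mul_add, add_sub_cancel] using ((hr j).cut hy).add_subequivalent
      (.refl hsr.right) hsr (by rw [hy.mul_mul_mul, h.mul_sub_eq_zero hp, mul_zero])
  have common_part (j : I) : (1 - v) * r j ≼ p j - r j := by
    have hs := h.isStarProjection_sub hp j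
    obtain ⟨z, hz, hsr, hrs⟩ := exists_central_comparison hs (hr j).isStarProjection
    have one_sub_mul : (1 - v) * (1 - z) = 1 - v := by
      rw [mul_sub, mul_one, one_sub_mul_eq_zero_iff.2 (absorb hz hsr), sub_zero]
    have := hrs.cut hv.one_sub
    rw [← mul_assoc, ← mul_assoc, one_sub_mul] at this
    exact this.trans (.cut_self hv.one_sub hs)
  have cut_r_eq_zero (j : I) : (1 - v) * r j = 0 := h.eq_zero _ fun k ↦
    ((h.subequivalent j k).cut hv.one_sub).trans (common_part k)
  have cut_b_eq_zero : (1 - v) * b = 0 := h.eq_zero _ fun j ↦ by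
    have := (hb j).cut hv.one_sub
    rw [← sub_zero ((1 - v) * p j), ← cut_r_eq_zero j, ← mul_sub] at this
    exact this.trans (.cut_self hv.one_sub (h.isStarProjection_sub hp j))
  exact .glue hv hbr (by rw [cut_b_eq_zero, cut_r_eq_zero]; exact .zero_left (.zero R))

theorem subequivalent_of_forall (h : IsMaximalCommonPart p r)
    (hp : ∀ i, IsStarProjection (p i)) (hb : ∀ i, b ≼ p i) (i : I) : b ≼ r i := by
  obtain ⟨z, hz, infinite, finite⟩ := exists_central_finite_decomposition
    (h.subequivalent i i).left
  refine .glue hz ?_ ?_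
  · exact (h.cut hp hz).subequivalent_of_isProperlyInfinite
      (fun j ↦ hz.mul_isStarProjection (hp j)) (fun j ↦ (hb j).cut hz)
      (fun j ↦ infinite.congr ((h.subequivalent i j).cut hz) ((h.subequivalent j i).cut hz)) i
  · exact (h.cut hp hz.one_sub).subequivalent_of_isFinite
      (fun j ↦ hz.one_sub.mul_isStarProjection (hp j)) (fun j ↦ (hb j).cut hz.one_sub) finite

end IsMaximalCommonPart

theorem exists_subequivalent_infimum (S : Set (Projection R)) :
    ∃ m : Projection R,
      (∀ a ∈ S, m.1 ≼ a.1) ∧ ∀ b : Projection R, (∀ a ∈ S, b.1 ≼ a.1) → b.1 ≼ m.1 := by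
  obtain rfl | ⟨a, ha⟩ := S.eq_empty_or_nonempty
  · exact ⟨⟨1, .one R⟩, fun _ ↦ False.elim, fun b _ ↦ .of_le b.2 (.one R) (one_mul b.1)⟩
  have : Nonempty S := ⟨a, ha⟩
  have hp (i : S) : IsStarProjection i.1.1 := i.1.2
  obtain ⟨r, hr⟩ := exists_isMaximalCommonPart hp
  let i : S := ⟨a, ha⟩
  refine ⟨⟨r i, (hr.subequivalent i i).left⟩, fun c hc ↦ ?_, fun b hb ↦
    hr.subequivalent_of_forall hp (fun i ↦ hb i.1 i.2) _⟩
  exact (hr.subequivalent i ⟨c, hc⟩).trans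
    (.of_le (hr.subequivalent i _).right c.2 (hr.mul_eq ⟨c, hc⟩))

end Infimum

section Operators

section Extension

variable {E : Type*} [AddCommGroup E] [Module ℂ E] {A B : E →ₗ[ℂ] H}

theorem exists_forall_apply_eq_of_norm_le (h : ∀ x, ‖B x‖ ≤ ‖A x‖) :
    ∃ v : H →L[ℂ] H, (∀ x, v (A x) = B x) ∧ ∀ y ∈ A.rangeᗮ, v y = 0 := by
  let K := A.range.topologicalClosure
  have : CompleteSpace K := A.range.isClosed_topologicalClosure.completeSpace_coe
  let A' : E →ₗ[ℂ] K := A.codRestrict K fun x ↦ A.range.le_topologicalClosure ⟨x, rfl⟩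
  have dense : DenseRange A' := fun y ↦ by
    rw [closure_subtype, ← Set.range_comp]
    exact y.2
  refine ⟨(B.extendOfNorm A').comp K.orthogonalProjectionOnto, fun x ↦ ?_, fun y hy ↦ ?_⟩
  · calc B.extendOfNorm A' (K.orthogonalProjectionOnto (A' x)) = B.extendOfNorm A' (A' x) := by
          rw [Submodule.orthogonalProjectionOnto_mem_subspace_eq_self]
      _ = B x := LinearMap.extendOfNorm_eq dense ⟨1, fun x ↦ (h x).trans_eq (one_mul _).symm⟩ x
  · rw [← Submodule.orthogonal_closure] at hy
    rw [comp_apply, Submodule.orthogonalProjectionOnto_eq_zero_iff.2 hy, map_zero]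

theorem dense_sup_orthogonal (K : Submodule ℂ H) : Dense ((K ⊔ Kᗮ : Submodule ℂ H) : Set H) := by
  rw [Submodule.dense_iff_topologicalClosure_eq_top, Submodule.topologicalClosure_eq_top_iff,
    ← Submodule.inf_orthogonal, Submodule.inf_orthogonal_eq_bot]

theorem exists_mem_forall_apply_eq (M : VonNeumannAlgebra H) (h : ∀ x, ‖B x‖ ≤ ‖A x‖)
    (hu : ∀ u ∈ M.commutant, ∃ U : E → E, ∀ x, A (U x) = u (A x) ∧ B (U x) = u (B x)) :
    ∃ v ∈ M, ∀ x, v (A x) = B x := by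
  obtain ⟨v, hv, v_orthogonal⟩ := exists_forall_apply_eq_of_norm_le h
  refine ⟨v, ?_, hv⟩
  rw [← M.commutant_commutant, VonNeumannAlgebra.mem_commutant_iff]
  intro u hu'
  have map_orthogonal {y : H} (hy : y ∈ A.rangeᗮ) : u y ∈ A.rangeᗮ := by
    obtain ⟨U, hU⟩ := hu (star u) (star_mem hu')
    rintro _ ⟨x, rfl⟩
    rw [← adjoint_inner_left, ← star_eq_adjoint, ← (hU x).1]
    exact hy _ ⟨U x, rfl⟩
  have commute_sup : A.range ⊔ A.rangeᗮ ≤ (u * v - v * u).ker := by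
    refine sup_le ?_ fun y hy ↦ ?_
    · rintro _ ⟨x, rfl⟩
      obtain ⟨U, hU⟩ := hu u hu'
      change u (v (A x)) - v (u (A x)) = 0
      rw [hv, ← (hU x).1, hv, (hU x).2, sub_self]
    · change u (v y) - v (u y) = 0
      rw [v_orthogonal y hy, v_orthogonal _ (map_orthogonal hy), map_zero, sub_zero]
  rw [← sub_eq_zero]
  exact ContinuousLinearMap.ext fun y ↦
    (u * v - v * u).isClosed_ker.closure_subset_iff.2 commute_sup (dense_sup_orthogonal _ y)

end Extension

theorem norm_lsum_eq_of_star_mul_eq {ι : Type*} {a b : ι → H →L[ℂ] H}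
    (h : ∀ i j, star (b i) * b j = star (a i) * a j) (x : ι →₀ H) :
    ‖Finsupp.lsum ℂ (fun i ↦ (b i).toLinearMap) x‖ =
      ‖Finsupp.lsum ℂ (fun i ↦ (a i).toLinearMap) x‖ := by
  have inner_eq (i j : ι) (ξ η : H) : inner ℂ (b i ξ) (b j η) = inner ℂ (a i ξ) (a j η) := by
    rw [← adjoint_inner_right, ← adjoint_inner_right]
    exact congrArg (inner ℂ ξ) (DFunLike.congr_fun (h i j) η)
  rw [@norm_eq_sqrt_re_inner ℂ, @norm_eq_sqrt_re_inner ℂ]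
  simp only [Finsupp.coe_lsum, Finsupp.sum, sum_inner, inner_sum, coe_coe, inner_eq]

theorem exists_mem_forall_mul_eq (M : VonNeumannAlgebra H) {ι : Type*} {a b : ι → H →L[ℂ] H}
    (ha : ∀ i, a i ∈ M) (hb : ∀ i, b i ∈ M) (h : ∀ i j, star (b i) * b j = star (a i) * a j) :
    ∃ v ∈ M, ∀ i, v * a i = b i := by
  obtain ⟨v, hv, hvab⟩ := exists_mem_forall_apply_eq M
    (fun x ↦ (norm_lsum_eq_of_star_mul_eq h x).le) fun u hu ↦ by
      have commute {y : H →L[ℂ] H} (hy : y ∈ M) (ξ : H) : y (u ξ) = u (y ξ) :=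
        DFunLike.congr_fun (VonNeumannAlgebra.mem_commutant_iff.1 hu y hy) ξ
      refine ⟨Finsupp.mapRange u (map_zero u), fun x ↦ ?_⟩
      simp [Finsupp.sum_mapRange_index, map_finsuppSum, commute, ha, hb]
  refine ⟨v, hv, fun i ↦ ContinuousLinearMap.ext fun ξ ↦ ?_⟩
  simpa using hvab (Finsupp.single i ξ)

theorem exists_mem_isSelfAdjoint_mul_self_eq (M : VonNeumannAlgebra H) {x : H →L[ℂ] H}
    (hx : x ∈ M) : ∃ t ∈ M, IsSelfAdjoint t ∧ t * t = star x * x := by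
  refine ⟨CFC.abs x, ?_, (CFC.abs_nonneg x).isSelfAdjoint, CFC.abs_mul_abs x⟩
  rw [← M.commutant_commutant, VonNeumannAlgebra.mem_commutant_iff]
  exact fun u hu ↦ Commute.cfcAbs_right (VonNeumannAlgebra.mem_commutant_iff.1 hu x hx)
    (VonNeumannAlgebra.mem_commutant_iff.1 (star_mem hu) x hx)

theorem exists_mem_isLeftSupport (M : VonNeumannAlgebra H) {S : Set (H →L[ℂ] H)}
    (hS : ∀ s ∈ S, s ∈ M) : ∃ e ∈ M, IsLeftSupport S e := by
  let K := (⨆ s ∈ S, s.range).topologicalClosure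
  have : CompleteSpace K := (Submodule.isClosed_topologicalClosure _).completeSpace_coe
  have closure_le_iff {N : Submodule ℂ H} (hN : IsClosed (N : Set H)) :
      K ≤ N ↔ ∀ s ∈ S, s.range ≤ N := by
    rw [← iSup₂_le_iff]
    exact hN.closure_subset_iff
  have range_le {s : H →L[ℂ] H} (hs : s ∈ S) : s.range ≤ K :=
    (closure_le_iff (Submodule.isClosed_topologicalClosure _)).1 le_rfl s hs
  refine ⟨K.starProjection, ?_, isStarProjection_starProjection, fun x ↦ ⟨fun hx s hs ↦ ?_,
    fun hx ↦ ?_⟩⟩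
  · rw [VonNeumannAlgebra.IsStarProjection.mem_iff isStarProjection_starProjection,
      Submodule.range_starProjection]
    refine fun u hu ↦ (closure_le_iff
      ((Submodule.isClosed_topologicalClosure _).preimage u.continuous)).2 ?_
    rintro s hs _ ⟨ξ, rfl⟩
    change u (s ξ) ∈ K
    have commute : s (u ξ) = u (s ξ) :=
      DFunLike.congr_fun (VonNeumannAlgebra.mem_commutant_iff.1 hu s (hS s hs)) ξ
    exact commute ▸ range_le hs ⟨u ξ, rfl⟩
  · have starProjection_mul : K.starProjection * s = s := ContinuousLinearMap.ext fun ξ ↦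
      Submodule.starProjection_eq_self_iff.2 (range_le hs ⟨ξ, rfl⟩)
    rw [← starProjection_mul, ← mul_assoc, hx, zero_mul]
  · have le_ker : K ≤ x.ker := (closure_le_iff x.isClosed_ker).2 fun s hs ↦ by
      rintro _ ⟨ξ, rfl⟩
      exact DFunLike.congr_fun (hx s hs) ξ
    exact ContinuousLinearMap.ext fun ξ ↦ le_ker (K.starProjection_apply_mem ξ)

instance (M : VonNeumannAlgebra H) : ComparisonRing M where
  exists_isLeftSupport S := by
    obtain ⟨e, he, hSe⟩ := exists_mem_isLeftSupport M (S := (↑) '' S)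
      (Set.forall_mem_image.2 fun s _ ↦ s.2)
    refine ⟨⟨e, he⟩, ⟨Subtype.ext hSe.isIdempotentElem, Subtype.ext hSe.isSelfAdjoint⟩,
      fun x ↦ ?_⟩
    simpa [Subtype.ext_iff] using hSe.mul_eq_zero_iff x
  exists_isSelfAdjoint_mul_self_eq x := by
    obtain ⟨t, ht, ht_selfAdjoint, hmul⟩ := exists_mem_isSelfAdjoint_mul_self_eq M x.2
    exact ⟨⟨t, ht⟩, Subtype.ext ht_selfAdjoint, Subtype.ext hmul⟩
  exists_mul_fst_eq_snd S hS := by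
    obtain ⟨v, hv, hvS⟩ := exists_mem_forall_mul_eq M (a := fun p : S ↦ p.1.1.1)
      (b := fun p : S ↦ p.1.2.1) (fun p ↦ p.1.1.2) (fun p ↦ p.1.2.2)
      fun p q ↦ congrArg Subtype.val (hS p.1 p.2 q.1 q.2)
    exact ⟨⟨v, hv⟩, fun p hp ↦ Subtype.ext (hvS ⟨p, hp⟩)⟩

end Operators

section Quotient

variable {M : VonNeumannAlgebra H} {p q : Projection M}

/-- A projection of the ring `M`, regarded as a projection on `H` belonging to `M`. -/
def toProjSet (p : Projection M) : ProjSet M :=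
  ⟨p.1.1, p.1.2, congrArg Subtype.val p.2.isSelfAdjoint.star_eq,
    congrArg Subtype.val p.2.isIdempotentElem.eq⟩

theorem toProjSet_surjective : (toProjSet (M := M)).Surjective := fun ⟨p, hp, hstar, hmul⟩ ↦
  ⟨⟨⟨p, hp⟩, Subtype.ext hmul, Subtype.ext hstar⟩, rfl⟩

theorem mvNEquiv_toProjSet_iff : MvNEquiv M (toProjSet p).1 (toProjSet q).1 ↔ p.1 ∼ q.1 where
  mp := fun ⟨v, hv, hvp, hvq⟩ ↦ ⟨p.2, q.2, ⟨v, hv⟩, Subtype.ext hvp, Subtype.ext hvq⟩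
  mpr := fun ⟨_, _, v, hvp, hvq⟩ ↦
    ⟨v.1, v.2, congrArg Subtype.val hvp, congrArg Subtype.val hvq⟩

theorem subEquiv_toProjSet_iff : SubEquiv M (toProjSet p).1 (toProjSet q).1 ↔ p.1 ≼ q.1 where
  mp := fun ⟨r, hr, hpr, _, hqr⟩ ↦ by
    obtain ⟨s, hs⟩ := toProjSet_surjective ⟨r, hr⟩
    obtain rfl : s.1.1 = r := congrArg Subtype.val hs
    exact (mvNEquiv_toProjSet_iff.1 hpr).subequivalent.trans (.of_le s.2 q.2 (Subtype.ext hqr))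
  mpr h := by
    obtain ⟨r, hpr, hqr⟩ := h.exists_equivalent
    have hrq := mul_eq_left_of_mul_eq_right hpr.right.isSelfAdjoint q.2.isSelfAdjoint hqr
    exact ⟨r, (toProjSet ⟨r, hpr.right⟩).2, mvNEquiv_toProjSet_iff (q := ⟨r, hpr.right⟩) |>.2 hpr,
      congrArg Subtype.val hrq, congrArg Subtype.val hqr⟩

/-- The class in `P(M)/∼` of a projection of the ring `M`. -/
def classOf (p : Projection M) : PQuot M := pquotMk M (toProjSet p)

theorem classOf_surjective : (classOf (M := M)).Surjective :=
  Quot.mk_surjective.comp toProjSet_surjective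

theorem subequivalent_of_classOf_eq (h : classOf p = classOf q) : p.1 ≼ q.1 := by
  have lift : ∀ a b : ProjSet M, MvNEquiv M a.1 b.1 →
      SubEquiv M (toProjSet p).1 a.1 = SubEquiv M (toProjSet p).1 b.1 := by
    refine toProjSet_surjective.forall₂.2 fun a b hab ↦ propext ?_
    rw [mvNEquiv_toProjSet_iff] at hab
    rw [subEquiv_toProjSet_iff, subEquiv_toProjSet_iff]
    exact ⟨(·.trans hab.subequivalent), (·.trans hab.symm.subequivalent)⟩
  have eq : SubEquiv M (toProjSet p).1 (toProjSet p).1 =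
      SubEquiv M (toProjSet p).1 (toProjSet q).1 := congrArg (Quot.lift _ lift) h
  rw [subEquiv_toProjSet_iff, subEquiv_toProjSet_iff] at eq
  exact eq ▸ .refl p.2

theorem qle_classOf_iff : QLE M (classOf p) (classOf q) ↔ p.1 ≼ q.1 where
  mp := fun ⟨p', q', hp, hq, h⟩ ↦ by
    obtain ⟨p', rfl⟩ := toProjSet_surjective p'
    obtain ⟨q', rfl⟩ := toProjSet_surjective q'
    exact ((subequivalent_of_classOf_eq hp).trans (subEquiv_toProjSet_iff.1 h)).trans
      (subequivalent_of_classOf_eq hq.symm)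
  mpr h := ⟨_, _, rfl, rfl, subEquiv_toProjSet_iff.2 h⟩

end Quotient

end MurrayVonNeumann

open MurrayVonNeumann in
theorem pquot_completeLattice_general {R : Type*} [Ring R] [StarRing R] [ComparisonRing R]
    (S : Set (Projection R)) :
    (∃ m : Projection R,
      (∀ a ∈ S, a.1 ≼ m.1) ∧ ∀ b : Projection R, (∀ a ∈ S, a.1 ≼ b.1) → m.1 ≼ b.1) ∧
    (∃ m : Projection R,
      (∀ a ∈ S, m.1 ≼ a.1) ∧ ∀ b : Projection R, (∀ a ∈ S, b.1 ≼ a.1) → b.1 ≼ m.1) := by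
  obtain ⟨m, m_le, le_m⟩ := exists_subequivalent_infimum {b : Projection R | ∀ a ∈ S, a.1 ≼ b.1}
  exact ⟨⟨m, fun a ha ↦ le_m a fun b hb ↦ hb a ha, m_le⟩, exists_subequivalent_infimum S⟩

/-- `P(M)/∼` is a complete lattice: every subset of the set of
Murray–von Neumann equivalence classes of projections has a supremum and an infimum with
respect to the order induced by subequivalence. -/
theorem pquot_completeLattice (M : VonNeumannAlgebra H) (S : Set (PQuot M)) :
    (∃ m, (∀ a ∈ S, QLE M a m) ∧ ∀ b, (∀ a ∈ S, QLE M a b) → QLE M m b) ∧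
    (∃ m, (∀ a ∈ S, QLE M m a) ∧ ∀ b, (∀ a ∈ S, QLE M b a) → QLE M b m) := by
  simpa only [MurrayVonNeumann.classOf_surjective.exists,
    MurrayVonNeumann.classOf_surjective.forall, MurrayVonNeumann.qle_classOf_iff,
    Set.mem_preimage] using pquot_completeLattice_general (MurrayVonNeumann.classOf ⁻¹' S)
end
end
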